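/- Let Ω be an open set in ℝ^{2n} with an almost complex structure J and let D ⊆ Ω be a domain. Then the Kobayashi–Royden infinitesimal pseudometric (p,v) ↦ K_{(D,J)}(p,v) is upper semicontinuous on D × ℝ^{2n}. -/

import Mathlib

open Metric Set Filter Topology Asymptotics

noncomputable section

/-- The standard complex structure `J_st` (multiplication by `i`) on a complex
normed space, viewed as a real-linear endomorphism. -/
def Jst (E : Type*) [NormedAddCommGroup E] [NormedSpace ℂ E] : E →L[ℝ] E :=
  ContinuousLinearMap.restrictScalars ℝ (Complex.I • ContinuousLinearMap.id ℂ E)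

variable {E F : Type*} [NormedAddCommGroup E] [NormedSpace ℂ E]
  [NormedAddCommGroup F] [NormedSpace ℂ F]

/-- `J` is an almost complex structure on the set `Ω`: a smooth field of real-linear
endomorphisms with `J x ∘ J x = -id`. -/
structure IsACS (Ω : Set E) (J : E → E →L[ℝ] E) : Prop where
  smooth : ContDiffOn ℝ (⊤ : ℕ∞) J Ω
  sq : ∀ x ∈ Ω, (J x).comp (J x) = -(ContinuousLinearMap.id ℝ E)

/-- `f` is `(J', J)`-holomorphic on `s`: `Df(x) ∘ J'(x) = J(f x) ∘ Df(x)`. -/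
def IsHolomorphicMapOn (J' : E → E →L[ℝ] E) (J : F → F →L[ℝ] F) (f : E → F)
    (s : Set E) : Prop :=
  ∀ x ∈ s, DifferentiableAt ℝ f x ∧
    (fderiv ℝ f x).comp (J' x) = (J (f x)).comp (fderiv ℝ f x)

/-- The Levi form `L^J(r)(x)(X) = -d(J⋆dr)(x)(X, J x X)` where `J⋆dr` is the 1-form
`X ↦ dr(x)(J x X)` and `dω(x)(X,Y) = (Dω(x)X)(Y) - (Dω(x)Y)(X)`. -/
def leviForm (J : E → E →L[ℝ] E) (r : E → ℝ) (x : E) (X : E) : ℝ :=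
  -((fderiv ℝ (fun y => (fderiv ℝ r y).comp (J y)) x X) (J x X)
    - (fderiv ℝ (fun y => (fderiv ℝ r y).comp (J y)) x (J x X)) X)

/-- `r` is strictly `J`-plurisubharmonic on `s`. -/
def StrictPSHOn (J : E → E →L[ℝ] E) (r : E → ℝ) (s : Set E) : Prop :=
  ∀ x ∈ s, ∀ X : E, X ≠ 0 → 0 < leviForm J r x X

/-- `r` is `J`-plurisubharmonic on `s` (nonnegative Levi form). -/
def PSHOn (J : E → E →L[ℝ] E) (r : E → ℝ) (s : Set E) : Prop :=
  ∀ x ∈ s, ∀ X : E, 0 ≤ leviForm J r x X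

/-- `C⁰` norm of `g` on `K`. -/
def c0Norm {G : Type*} [NormedAddCommGroup G] (g : E → G) (K : Set E) : ℝ :=
  ⨆ x : K, ‖g (x : E)‖

/-- `C¹` norm of `g` on `K`. -/
def c1Norm {G : Type*} [NormedAddCommGroup G] [NormedSpace ℝ G] (g : E → G) (K : Set E) : ℝ :=
  ⨆ x : K, max ‖g (x : E)‖ ‖fderiv ℝ g (x : E)‖

/-- `C¹` distance between `g` and `h` on `K`. -/
def c1Dist {G : Type*} [NormedAddCommGroup G] [NormedSpace ℝ G] (g h : E → G) (K : Set E) : ℝ :=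
  ⨆ x : K, max ‖g (x : E) - h (x : E)‖ ‖fderiv ℝ g (x : E) - fderiv ℝ h (x : E)‖

/-- `C²` distance between `g` and `h` on `K`. -/
def c2Dist {G : Type*} [NormedAddCommGroup G] [NormedSpace ℝ G] (g h : E → G) (K : Set E) : ℝ :=
  ⨆ x : K, max ‖g (x : E) - h (x : E)‖
    (max ‖fderiv ℝ g (x : E) - fderiv ℝ h (x : E)‖
      ‖fderiv ℝ (fderiv ℝ g) (x : E) - fderiv ℝ (fderiv ℝ h) (x : E)‖)

/-- A `J`-holomorphic disc in `D`: a map from the unit disc `Δ ⊂ ℂ` to `D` satisfying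
`Df(ζ) ∘ J_st = J(f ζ) ∘ Df(ζ)`. -/
def IsJDisc (J : F → F →L[ℝ] F) (D : Set F) (f : ℂ → F) : Prop :=
  MapsTo f (ball (0 : ℂ) 1) D ∧
  ∀ ζ ∈ ball (0 : ℂ) 1, DifferentiableAt ℝ f ζ ∧
    (fderiv ℝ f ζ).comp (Jst ℂ) = (J (f ζ)).comp (fderiv ℝ f ζ)

/-- The Kobayashi–Royden infinitesimal pseudometric of `(D, J)`. -/
def kobayashiMetric (J : F → F →L[ℝ] F) (D : Set F) (p : F) (v : F) : ℝ :=
  sInf {α : ℝ | 0 < α ∧ ∃ f : ℂ → F, IsJDisc J D f ∧ f 0 = p ∧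
    fderiv ℝ f 0 1 = α⁻¹ • v}

/-- The integrated Kobayashi pseudodistance of `(D, J)`. -/
def kobayashiDist (J : F → F →L[ℝ] F) (D : Set F) (p q : F) : ℝ :=
  sInf {d : ℝ | ∃ γ : ℝ → F, ContDiffOn ℝ 1 γ (Icc 0 1) ∧ MapsTo γ (Icc 0 1) D ∧
    γ 0 = p ∧ γ 1 = q ∧ d = ∫ t in (0:ℝ)..1, kobayashiMetric J D (γ t) (deriv γ t)}

/-- `f` is a smooth diffeomorphism from `s` onto `t` with inverse `g`. -/
def IsDiffeoOn (f : E → F) (g : F → E) (s : Set E) (t : Set F) : Prop :=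
  ContDiffOn ℝ (⊤ : ℕ∞) f s ∧ ContDiffOn ℝ (⊤ : ℕ∞) g t ∧ MapsTo f s t ∧ MapsTo g t s ∧
  (∀ x ∈ s, g (f x) = x) ∧ (∀ y ∈ t, f (g y) = y)

/-- The Laplacian of a real function on `ℂ ≅ ℝ²`. -/
def lapR (g : ℂ → ℝ) (ζ : ℂ) : ℝ :=
  fderiv ℝ (fun w => fderiv ℝ g w 1) ζ 1
    + fderiv ℝ (fun w => fderiv ℝ g w Complex.I) ζ Complex.I

/-- The Wirtinger derivative `∂g/∂ζ`. -/
def wirtingerD (g : ℂ → ℂ) (ζ : ℂ) : ℂ :=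
  (fderiv ℝ g ζ 1 - Complex.I * fderiv ℝ g ζ Complex.I) / 2

/-- The Wirtinger derivative `∂g/∂ζ̄`. -/
def wirtingerDbar (g : ℂ → ℂ) (ζ : ℂ) : ℂ :=
  (fderiv ℝ g ζ 1 + Complex.I * fderiv ℝ g ζ Complex.I) / 2

/-- The coordinates of a point of `ℂ²`. -/
def coord2 (z : ℂ × ℂ) : Fin 2 → ℂ := ![z.1, z.2]

abbrev E2 := EuclideanSpace ℂ (Fin 2)

section

open MeasureTheory

lemma integrable_near_rpow {s a : ℝ} (hs : s < 2) (ha : 0 < a) :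
    Integrable (fun w : ℂ => (Iio a).indicator (fun r : ℝ => r ^ (-s)) ‖w‖) ∧
    ∫ w : ℂ, (Iio a).indicator (fun r : ℝ => r ^ (-s)) ‖w‖ = 2 * Real.pi / (2 - s) * a ^ (2 - s) := by
  have e : ∀ y ∈ Ioi (0:ℝ), y ^ (Module.finrank ℝ ℂ - 1) • (Iio a).indicator (fun r : ℝ => r ^ (-s)) y
      = (Iio a).indicator (fun r : ℝ => r ^ (1 - s)) y := by
    intro y hy
    simp only [Complex.finrank_real_complex, indicator]
    split_ifs
    · rw [sub_eq_add_neg 1 s, Real.rpow_add hy]; simp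
    · simp
  have hI : IntegrableOn (fun r : ℝ => r ^ (1 - s)) (Ioo 0 a) := by
    have := (intervalIntegral.intervalIntegrable_rpow' (a := 0) (b := a) (r := 1 - s) (by linarith))
    rw [intervalIntegrable_iff_integrableOn_Ioo_of_le ha.le] at this
    exact this
  have hset : Iio a ∩ Ioi 0 = Ioo 0 a := by ext; simp [and_comm]
  constructor
  · rw [integrable_fun_norm_addHaar (μ := volume) (f := (Iio a).indicator (fun r : ℝ => r ^ (-s)))]
    rw [integrableOn_congr_fun e measurableSet_Ioi, integrableOn_indicator_iff measurableSet_Iio, hset]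
    exact hI
  · rw [integral_fun_norm_addHaar volume (f := (Iio a).indicator (fun r : ℝ => r ^ (-s)))]
    rw [setIntegral_congr_fun measurableSet_Ioi e, setIntegral_indicator measurableSet_Iio, inter_comm,
      hset, ← integral_Ioc_eq_integral_Ioo, ← intervalIntegral.integral_of_le ha.le,
      integral_rpow (by left; linarith)]
    simp only [Complex.finrank_real_complex, Measure.real, Complex.volume_ball]
    rw [Real.zero_rpow (by linarith)]
    have : 1 - s + 1 = 2 - s := by ring
    rw [this]
    simp
    ring

lemma integrable_far_rpow {s a : ℝ} (hs : 2 < s) (ha : 0 < a) :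
    Integrable (fun w : ℂ => (Ioi a).indicator (fun r : ℝ => r ^ (-s)) ‖w‖) ∧
    ∫ w : ℂ, (Ioi a).indicator (fun r : ℝ => r ^ (-s)) ‖w‖ = 2 * Real.pi / (s - 2) * a ^ (2 - s) := by
  have e : ∀ y ∈ Ioi (0:ℝ), y ^ (Module.finrank ℝ ℂ - 1) • (Ioi a).indicator (fun r : ℝ => r ^ (-s)) y
      = (Ioi a).indicator (fun r : ℝ => r ^ (1 - s)) y := by
    intro y hy
    simp only [Complex.finrank_real_complex, indicator]
    split_ifs
    · rw [sub_eq_add_neg 1 s, Real.rpow_add hy]; simp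
    · simp
  have hI : IntegrableOn (fun r : ℝ => r ^ (1 - s)) (Ioi a) :=
    integrableOn_Ioi_rpow_of_lt (by linarith) ha
  have hset : Ioi a ∩ Ioi 0 = Ioi a := by ext; simp; intro h; linarith
  constructor
  · rw [integrable_fun_norm_addHaar (μ := volume) (f := (Ioi a).indicator (fun r : ℝ => r ^ (-s)))]
    rw [integrableOn_congr_fun e measurableSet_Ioi, integrableOn_indicator_iff measurableSet_Ioi, hset]
    exact hI
  · rw [integral_fun_norm_addHaar volume (f := (Ioi a).indicator (fun r : ℝ => r ^ (-s)))]
    rw [setIntegral_congr_fun measurableSet_Ioi e, setIntegral_indicator measurableSet_Ioi, inter_comm,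
      hset, integral_Ioi_rpow_of_lt (by linarith) ha]
    simp only [Complex.finrank_real_complex, Measure.real, Complex.volume_ball]
    have : 1 - s + 1 = -(s - 2) := by ring
    rw [this, neg_div_neg_eq, neg_sub]
    simp
    ring

lemma exists_kernel_majorant {s : ℝ} (hs0 : 0 ≤ s) (hs : s < 2) (R : ℝ) :
    ∃ C, 0 ≤ C ∧ ∀ z : ℂ, ∃ b : ℂ → ℝ, Integrable b ∧ ∫ ζ, b ζ ≤ C ∧ (∀ ζ, 0 ≤ b ζ) ∧
      ∀ ζ, ‖ζ‖ ≤ R → ‖z - ζ‖ ^ (-s) ≤ b ζ := by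
  obtain ⟨h1, h2⟩ := integrable_near_rpow hs one_pos
  set N : ℂ → ℝ := fun w : ℂ => (Iio 1).indicator (fun r : ℝ => r ^ (-s)) ‖w‖
  have hN : ∀ w, 0 ≤ N w := by
    intro w
    simp only [N, indicator]
    split_ifs <;> positivity
  set B : ℂ → ℝ := (closedBall (0:ℂ) R).indicator (fun _ => (1:ℝ))
  have hB : Integrable B := by
    apply (integrable_indicator_iff measurableSet_closedBall).2
    exact integrableOn_const (by exact measure_closedBall_lt_top.ne)
  have hB0 : ∀ w, 0 ≤ B w := fun w => indicator_nonneg (fun _ _ => zero_le_one) _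
  refine ⟨(∫ w, N w) + ∫ w, B w, add_nonneg (integral_nonneg hN) (integral_nonneg hB0), fun z =>
    ⟨fun ζ => N (z - ζ) + B ζ, (h1.comp_sub_left z).add hB, ?_, fun ζ => add_nonneg (hN _) (hB0 _), ?_⟩⟩
  · rw [integral_add (h1.comp_sub_left z) hB, integral_sub_left_eq_self N volume z]
  · intro ζ hζ
    have : B ζ = 1 := by simp [B, hζ]
    show ‖z - ζ‖ ^ (-s) ≤ N (z - ζ) + B ζ
    rw [this]
    by_cases h : ‖z - ζ‖ < 1
    · have : N (z - ζ) = ‖z - ζ‖ ^ (-s) := by simp [N, h]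
      linarith
    · have := Real.rpow_le_one_of_one_le_of_nonpos (not_lt.1 h) (neg_nonpos.2 hs0)
      linarith [hN (z - ζ)]

variable {W : Type*} [NormedAddCommGroup W] [NormedSpace ℂ W]

/-- The Cauchy transform of a function on the plane. -/
def cauchyT (γ : ℂ → W) (z : ℂ) : W :=
  (Real.pi : ℂ)⁻¹ • ∫ ζ, (z - ζ)⁻¹ • γ ζ

/-- Bounded measurable functions supported in a disc. -/
structure BddSupp (R A : ℝ) (γ : ℂ → W) : Prop where
  meas : AEStronglyMeasurable γ volume
  bound : ∀ ζ, ‖γ ζ‖ ≤ A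
  supp : ∀ ζ, R < ‖ζ‖ → γ ζ = 0

lemma BddSupp.nonneg {R A : ℝ} {γ : ℂ → W} (h : BddSupp R A γ) : 0 ≤ A :=
  (norm_nonneg _).trans (h.bound 0)

lemma BddSupp.integrable_smul {R A : ℝ} {γ : ℂ → W} (h : BddSupp R A γ) {k : ℂ → ℂ} {b : ℂ → ℝ}
    (hk : AEStronglyMeasurable k volume) (hb : Integrable b) (hkb : ∀ ζ, ‖ζ‖ ≤ R → ‖k ζ‖ ≤ b ζ)
    (hb0 : ∀ ζ, 0 ≤ b ζ) :
    Integrable (fun ζ => k ζ • γ ζ) := by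
  refine (hb.mul_const A).mono' (hk.smul h.meas) (Eventually.of_forall fun ζ => ?_)
  rw [norm_smul]
  by_cases hζ : ‖ζ‖ ≤ R
  · exact mul_le_mul (hkb ζ hζ) (h.bound ζ) (norm_nonneg _) (hb0 ζ)
  · rw [h.supp ζ (not_le.1 hζ)]; simpa using mul_nonneg (hb0 ζ) h.nonneg

lemma BddSupp.norm_integral_le {R A : ℝ} {γ : ℂ → W} (h : BddSupp R A γ) {k : ℂ → ℂ} {b : ℂ → ℝ}
    (hb : Integrable b) (hkb : ∀ ζ, ‖ζ‖ ≤ R → ‖k ζ‖ ≤ b ζ)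
    (hb0 : ∀ ζ, 0 ≤ b ζ) :
    ‖∫ ζ, k ζ • γ ζ‖ ≤ (∫ ζ, b ζ) * A := by
  rw [← integral_mul_const]
  refine norm_integral_le_of_norm_le (hb.mul_const A) (Eventually.of_forall fun ζ => ?_)
  rw [norm_smul]
  by_cases hζ : ‖ζ‖ ≤ R
  · exact mul_le_mul (hkb ζ hζ) (h.bound ζ) (norm_nonneg _) (hb0 ζ)
  · rw [h.supp ζ (not_le.1 hζ)]; simpa using mul_nonneg (hb0 ζ) h.nonneg

lemma measurable_cauchy_kernel (z : ℂ) : Measurable (fun ζ : ℂ => (z - ζ)⁻¹) :=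
  (measurable_const.sub measurable_id).inv

lemma BddSupp.integrable_cauchy {R A : ℝ} {γ : ℂ → W} (h : BddSupp R A γ) (z : ℂ) :
    Integrable (fun ζ => (z - ζ)⁻¹ • γ ζ) := by
  obtain ⟨C, -, hC⟩ := exists_kernel_majorant (s := 1) (by norm_num) (by norm_num) R
  obtain ⟨b, hb, -, hb0, hbb⟩ := hC z
  refine h.integrable_smul (measurable_cauchy_kernel z).aestronglyMeasurable hb (fun ζ hζ => ?_) hb0
  rw [norm_inv, ← Real.rpow_neg_one]
  exact hbb ζ hζ

lemma rpow_neg_three_halves {a : ℝ} (ha : 0 ≤ a) : a ^ (-(3/2) : ℝ) = (a * √a)⁻¹ := by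
  rw [Real.rpow_neg ha]
  congr 1
  rw [show (3/2 : ℝ) = 1 + 1/2 by norm_num]
  rcases ha.eq_or_lt with rfl | h
  · simp only [zero_mul]
    exact Real.zero_rpow (by norm_num)
  · rw [Real.rpow_add h, Real.rpow_one, Real.sqrt_eq_rpow]

lemma norm_cauchy_kernel_sub_le (p q : ℂ) :
    ‖p⁻¹ - q⁻¹‖ ≤ 2 * √‖p - q‖ * (‖p‖ ^ (-(3/2) : ℝ) + ‖q‖ ^ (-(3/2) : ℝ)) := by
  rw [rpow_neg_three_halves (norm_nonneg _), rpow_neg_three_halves (norm_nonneg _)]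
  wlog hpq : ‖p‖ ≤ ‖q‖ generalizing p q
  · have := this q p (le_of_not_ge hpq)
    rw [norm_sub_rev, norm_sub_rev p q, add_comm (_)⁻¹]; exact this
  have hs : √‖p - q‖ ≥ 0 := Real.sqrt_nonneg _
  by_cases hp : p = 0
  · subst hp
    by_cases hq : q = 0
    · subst hq; simp
    simp only [zero_sub, norm_neg, norm_inv, inv_zero, norm_zero, Real.sqrt_zero, mul_zero, zero_add]
    have h1 : 0 < ‖q‖ := norm_pos_iff.2 hq
    have h2 : 0 < √‖q‖ := Real.sqrt_pos.2 h1
    rw [mul_inv, mul_assoc, mul_comm (‖q‖⁻¹), ← mul_assoc (√‖q‖), mul_inv_cancel₀ h2.ne']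
    have := inv_nonneg.2 h1.le
    linarith
  have h1 : 0 < ‖p‖ := norm_pos_iff.2 hp
  have h2 : 0 < ‖q‖ := h1.trans_le hpq
  have hq : q ≠ 0 := norm_pos_iff.1 h2
  set a := √‖p‖ with ha
  set b := √‖q‖ with hb
  have ha0 : 0 < a := Real.sqrt_pos.2 h1
  have hb0 : 0 < b := Real.sqrt_pos.2 h2
  have haa : ‖p‖ = a * a := (Real.mul_self_sqrt h1.le).symm
  have hbb : ‖q‖ = b * b := (Real.mul_self_sqrt h2.le).symm
  have hab : a ≤ b := Real.sqrt_le_sqrt hpq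
  set d := √‖p - q‖
  have hd : ‖p - q‖ = d * d := (Real.mul_self_sqrt (norm_nonneg _)).symm
  have hdb : d ≤ 2 * b := by
    apply Real.sqrt_le_iff.2 ⟨by positivity, ?_⟩
    have := norm_sub_le p q
    nlinarith
  have e : ‖p⁻¹ - q⁻¹‖ = d * d / (a * a * (b * b)) := by
    rw [inv_sub_inv hp hq, norm_div, norm_mul, norm_sub_rev, hd, haa, hbb]
  rw [e, haa, hbb]
  have : d * d / (a * a * (b * b)) ≤ 2 * d * (a * a * a)⁻¹ := by
    rw [div_le_iff₀ (by positivity)]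
    have : 2 * d * (a * a * a)⁻¹ * (a * a * (b * b)) = 2 * d * b * (b / a) := by field_simp
    rw [this]
    have h1 : 1 ≤ b / a := (one_le_div ha0).2 hab
    calc d * d ≤ d * (2 * b) := by gcongr
      _ = 2 * d * b * 1 := by ring
      _ ≤ _ := by gcongr
  have h3 : 0 ≤ 2 * d * (b * b * b)⁻¹ := by positivity
  rw [mul_add]; linarith

theorem exists_cauchyT_holder (R : ℝ) : ∃ C, 0 ≤ C ∧ ∀ (A : ℝ) (γ : ℂ → W), BddSupp R A γ →
    ∀ z w, ‖cauchyT γ z - cauchyT γ w‖ ≤ C * A * √‖z - w‖ := by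
  obtain ⟨C, hC0, hC⟩ := exists_kernel_majorant (s := 3/2) (by norm_num) (by norm_num) R
  refine ⟨‖(Real.pi : ℂ)⁻¹‖ * (2 * (C + C)), by positivity, fun A γ h z w => ?_⟩
  obtain ⟨b1, hb1, hI1, hb10, hbb1⟩ := hC z
  obtain ⟨b2, hb2, hI2, hb20, hbb2⟩ := hC w
  rw [cauchyT, cauchyT, ← smul_sub, norm_smul, ← integral_sub (h.integrable_cauchy z) (h.integrable_cauchy w)]
  simp_rw [← sub_smul]
  have hA := h.nonneg
  have key := h.norm_integral_le (k := fun ζ => (z - ζ)⁻¹ - (w - ζ)⁻¹)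
    (b := fun ζ => 2 * √‖z - w‖ * (b1 ζ + b2 ζ)) ((hb1.add hb2).const_mul _) ?_ ?_
  · rw [integral_const_mul, integral_add hb1 hb2] at key
    calc _ ≤ ‖(Real.pi : ℂ)⁻¹‖ * (2 * √‖z - w‖ * ((∫ a, b1 a) + ∫ a, b2 a) * A) := by gcongr
      _ ≤ ‖(Real.pi : ℂ)⁻¹‖ * (2 * √‖z - w‖ * (C + C) * A) := by gcongr
      _ = _ := by ring
  · intro ζ hζ
    have := norm_cauchy_kernel_sub_le (z - ζ) (w - ζ)
    rw [sub_sub_sub_cancel_right] at this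
    refine this.trans ?_
    gcongr
    · exact hbb1 ζ hζ
    · exact hbb2 ζ hζ
  · intro ζ; have := hb10 ζ; have := hb20 ζ; positivity

end

section

open MeasureTheory

variable {W : Type*} [NormedAddCommGroup W] [NormedSpace ℂ W]

/-- The Cauchy-Riemann operator applied to a real-linear map. -/
def dbarL (ℓ : ℂ →L[ℝ] W) : W := (1 / 2 : ℂ) • (ℓ 1 + Complex.I • ℓ Complex.I)

lemma apply_eq_re_im (ℓ : ℂ →L[ℝ] W) (z : ℂ) : ℓ z = z.re • ℓ 1 + z.im • ℓ Complex.I := by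
  conv_lhs => rw [← Complex.re_add_im z]
  rw [map_add, show (z.re : ℂ) = z.re • (1:ℂ) by simp, show (z.im : ℂ) * Complex.I = z.im • Complex.I by simp,
    map_smul, map_smul]

lemma dbarL_rotate (ℓ : ℂ →L[ℝ] W) (e : ℂ) (he : ‖e‖ = 1) :
    e⁻¹ • dbarL ℓ = (1 / 2 : ℂ) • (ℓ e + Complex.I • ℓ (Complex.I * e)) := by
  rw [apply_eq_re_im ℓ e, apply_eq_re_im ℓ (Complex.I * e), dbarL]
  have h : e⁻¹ = (e.re : ℂ) - e.im * Complex.I := by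
    rw [Complex.inv_def, Complex.normSq_eq_norm_sq, he]
    apply Complex.ext <;> simp
  rw [h]
  simp only [← Complex.coe_smul]
  simp only [Complex.mul_re, Complex.mul_im, Complex.I_re, Complex.I_im]
  push_cast
  match_scalars
  · ring
  · linear_combination ((-1:ℂ)/2 * e.im) * (Complex.I_mul_I)

lemma dbarL_norm_le (ℓ : ℂ →L[ℝ] W) {M : ℝ} (h : ‖ℓ‖ ≤ M) : ‖dbarL ℓ‖ ≤ M := by
  have h1 : ‖ℓ 1‖ ≤ M := (ℓ.le_opNorm 1).trans (by simpa)
  have h2 : ‖ℓ Complex.I‖ ≤ M := (ℓ.le_opNorm _).trans (by simpa)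
  have := norm_add_le (ℓ 1) (Complex.I • ℓ Complex.I)
  rw [norm_smul, Complex.norm_I] at this
  rw [dbarL, norm_smul]
  norm_num
  linarith

lemma aestronglyMeasurable_deriv_apply [FiniteDimensional ℂ W] {V : ℂ → W} {V' : ℂ → ℂ →L[ℝ] W}
    (h : ∀ z, HasFDerivAt V (V' z) z) (y : ℂ) : StronglyMeasurable (fun z => V' z y) := by
  have : FiniteDimensional ℝ W := FiniteDimensional.complexToReal W
  have : CompleteSpace W := FiniteDimensional.complete ℂ W
  have : ProperSpace W := FiniteDimensional.proper_real W
  borelize W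
  have e : (fun z => V' z y) = fun z => fderiv ℝ V z y := by ext z; rw [(h z).fderiv]
  rw [e]
  exact (measurable_fderiv_apply_const ℝ V y).stronglyMeasurable

theorem cauchyT_dbar [FiniteDimensional ℂ W] {V : ℂ → W} {V' : ℂ → ℂ →L[ℝ] W}
    (h : ∀ z, HasFDerivAt V (V' z) z) {M R : ℝ} (hM : ∀ z, ‖V' z‖ ≤ M) 
    (hR : ∀ z, R < ‖z‖ → V z = 0) (z : ℂ) :
    cauchyT (fun ζ => dbarL (V' ζ)) z = V z := by
  have : CompleteSpace W := FiniteDimensional.complete ℂ W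
  have hR' : ∀ z, R < ‖z‖ → V' z = 0 := by
    intro z hz
    have : V =ᶠ[𝓝 z] fun _ => 0 := by
      filter_upwards [(isOpen_lt continuous_const continuous_norm).mem_nhds hz] with w hw using hR w hw
    exact (h z).unique ((hasFDerivAt_const (0:W) z).congr_of_eventuallyEq this)
  have M0 : 0 ≤ M := (norm_nonneg _).trans (hM 0)
  set e : ℝ → ℂ := fun θ => (Real.cos θ : ℂ) + Real.sin θ * Complex.I with he
  have e1 : ∀ θ, ‖e θ‖ = 1 := fun θ => by
    show ‖(Real.cos θ : ℂ) + Real.sin θ * Complex.I‖ = 1; push_cast; rw [← Complex.exp_mul_I]; exact Complex.norm_exp_ofReal_mul_I θ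
  have ede : ∀ θ, HasDerivAt e (Complex.I * e θ) θ := by
    intro θ
    have := ((Real.hasDerivAt_cos θ).ofReal_comp).add (((Real.hasDerivAt_sin θ).ofReal_comp).mul_const Complex.I)
    have h2 : Complex.I * e θ = ((-Real.sin θ : ℝ) : ℂ) + (Real.cos θ : ℝ) * Complex.I := by
      show Complex.I * ((Real.cos θ : ℂ) + Real.sin θ * Complex.I) = _
      push_cast; linear_combination (Complex.sin θ) * Complex.I_mul_I
    rw [h2]
    exact this
  have ec : Continuous e := continuous_iff_continuousAt.2 fun θ => (ede θ).continuousAt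
  set P : ℝ → ℝ → ℂ := fun r θ => z + r * e θ with hP
  have hPc : Continuous (fun p : ℝ × ℝ => P p.1 p.2) := by fun_prop
  have hbig : ∀ r θ, |R| + ‖z‖ + 1 ≤ r → R < ‖P r θ‖ := by
    intro r θ hr
    have : r ≤ ‖P r θ‖ + ‖z‖ := by
      calc r ≤ |r| := le_abs_self r
        _ = ‖P r θ - z‖ := by simp [hP, e1]
        _ ≤ _ := norm_sub_le _ _
    linarith [le_abs_self R]
  set f1 : ℝ × ℝ → W := fun p => V' (P p.1 p.2) (e p.2) with hf1
  set f2 : ℝ × ℝ → W := fun p => V' (P p.1 p.2) (Complex.I * e p.2) with hf2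
  have hmeas : ∀ c : ℝ → ℂ, Continuous c → StronglyMeasurable (fun p : ℝ × ℝ => V' (P p.1 p.2) (c p.2)) := by
    intro c hc
    simp_rw [apply_eq_re_im (V' _) (c _)]
    have A := fun y => (aestronglyMeasurable_deriv_apply h y).comp_measurable hPc.measurable
    exact ((Complex.continuous_re.comp (hc.comp continuous_snd)).stronglyMeasurable.smul (A 1)).add
      ((Complex.continuous_im.comp (hc.comp continuous_snd)).stronglyMeasurable.smul (A Complex.I))
  set S : Set (ℝ × ℝ) := Ioi 0 ×ˢ Ioo (-Real.pi) Real.pi with hS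
  set Q : ℝ := |R| + ‖z‖ + 1 with hQ
  have Q0 : 0 < Q := by positivity
  have hint : ∀ c : ℝ → ℂ, Continuous c → (∀ θ, ‖c θ‖ = 1) → 
      IntegrableOn (fun p : ℝ × ℝ => V' (P p.1 p.2) (c p.2)) S (volume.prod volume) := by
    intro c hc hc1
    have hb : IntegrableOn (fun p : ℝ × ℝ => V' (P p.1 p.2) (c p.2)) (Ioc 0 Q ×ˢ Ioo (-Real.pi) Real.pi) (volume.prod volume) := by
      refine Measure.integrableOn_of_bounded (M := M) ?_ (hmeas c hc).aestronglyMeasurable ?_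
      · rw [Measure.prod_prod]
        exact ENNReal.mul_ne_top (by simp) (by simp)
      · refine Eventually.of_forall fun p => ?_
        refine ((V' _).le_opNorm _).trans ?_
        rw [hc1, mul_one]; exact hM _
    refine hb.of_forall_sdiff_eq_zero (measurableSet_Ioi.prod measurableSet_Ioo) ?_
    rintro ⟨r, θ⟩ ⟨⟨hr, hθ⟩, h2⟩
    have : Q < r := by
      by_contra hcon
      exact h2 ⟨⟨hr, not_lt.1 hcon⟩, hθ⟩
    simp [hR' _ (hbig r θ this.le)]
  have hi1 := hint e ec e1
  have hi2 := hint (fun θ => Complex.I * e θ) (by fun_prop) (by simp [e1])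
  have hUr : ∀ r θ, HasDerivAt (fun r => V (P r θ)) (V' (P r θ) (e θ)) r := by
    intro r θ
    refine (h (P r θ)).comp_hasDerivAt r ?_
    have := ((hasDerivAt_id r).ofReal_comp.mul_const (e θ)).const_add z
    simpa [hP] using this
  have hUθ : ∀ r θ, HasDerivAt (fun θ => V (P r θ)) (r • V' (P r θ) (Complex.I * e θ)) θ := by
    intro r θ
    rw [← map_smul]
    refine (h (P r θ)).comp_hasDerivAt θ ?_
    have := ((ede θ).const_mul (r:ℂ)).const_add z
    exact this
  have I1 : ∫ p in S, f1 p = -((2 * Real.pi) • V z) := by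
    rw [Measure.volume_eq_prod, hS, ← setIntegral_prod_swap, setIntegral_prod (fun p : ℝ × ℝ => f1 p.swap) hi1.swap]
    have : ∀ θ, ∫ r in Ioi 0, f1 (r, θ) = - V z := by
      intro θ
      have hi : IntegrableOn (fun r => V' (P r θ) (e θ)) (Ioi 0) := by
        have hb : IntegrableOn (fun r => V' (P r θ) (e θ)) (Ioc 0 Q) := by
          refine Measure.integrableOn_of_bounded (M := M) (by simp)
            ((hmeas e ec).comp_measurable measurable_prodMk_right).aestronglyMeasurable ?_
          refine Eventually.of_forall fun r => ?_
          refine ((V' _).le_opNorm _).trans ?_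
          rw [e1, mul_one]; exact hM _
        refine hb.of_forall_sdiff_eq_zero measurableSet_Ioi ?_
        rintro r ⟨hr, h2⟩
        have : Q < r := by
          by_contra hcon
          exact h2 ⟨hr, not_lt.1 hcon⟩
        simp [hR' _ (hbig r θ this.le)]
      have ht : Tendsto (fun r => V (P r θ)) atTop (𝓝 0) := by
        refine tendsto_const_nhds.congr' ?_
        filter_upwards [eventually_ge_atTop Q] with r hr using (hR _ (hbig r θ hr)).symm
      have := integral_Ioi_of_hasDerivAt_of_tendsto' (fun r _ => hUr r θ) hi ht
      rw [show f1 = fun p : ℝ × ℝ => V' (P p.1 p.2) (e p.2) from rfl]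
      rw [this]
      simp [hP]
    simp only [Prod.swap, this]
    rw [setIntegral_const]
    have : max (Real.pi + Real.pi) 0 = Real.pi + Real.pi := max_eq_left (by positivity)
    simp [two_mul, this]
  have I2 : ∫ p in S, f2 p = 0 := by
    rw [Measure.volume_eq_prod, hS, setIntegral_prod _ hi2]
    refine setIntegral_eq_zero_of_forall_eq_zero fun r hr => ?_
    have hi : IntervalIntegrable (fun θ => r • V' (P r θ) (Complex.I * e θ)) volume (-Real.pi) Real.pi := by
      rw [intervalIntegrable_iff_integrableOn_Ioc_of_le (by linarith [Real.pi_pos])]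
      refine Integrable.smul r ?_
      refine Measure.integrableOn_of_bounded (M := M) (by simp)
        ((hmeas (fun θ => Complex.I * e θ) (by fun_prop)).comp_measurable measurable_prodMk_left).aestronglyMeasurable ?_
      refine Eventually.of_forall fun θ => ?_
      refine ((V' _).le_opNorm _).trans ?_
      simp only [norm_mul, Complex.norm_I, e1, mul_one]; exact hM _
    have := intervalIntegral.integral_eq_sub_of_hasDerivAt (fun θ _ => hUθ r θ) hi
    rw [intervalIntegral.integral_smul, intervalIntegral.integral_of_le (by linarith [Real.pi_pos]),
      integral_Ioc_eq_integral_Ioo] at this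
    have hz : V (P r Real.pi) - V (P r (-Real.pi)) = 0 := by simp [hP, he]
    rw [hz] at this
    exact (smul_eq_zero.1 this).resolve_left (ne_of_gt hr)
  rw [cauchyT, ← integral_add_left_eq_self _ z, ← Complex.integral_comp_polarCoord_symm, polarCoord_target]
  have key : ∀ p ∈ S, p.1 • ((z - (z + Complex.polarCoord.symm p))⁻¹ • dbarL (V' (z + Complex.polarCoord.symm p)))
      = (-1 / 2 : ℂ) • (f1 p + Complex.I • f2 p) := by
    rintro ⟨r, θ⟩ ⟨hr, hθ⟩
    have hr0 : (r:ℂ) ≠ 0 := by exact_mod_cast (ne_of_gt hr)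
    rw [Complex.polarCoord_symm_apply]
    have : (z - (z + r * e θ))⁻¹ = - (r:ℂ)⁻¹ * (e θ)⁻¹ := by
      rw [sub_add_cancel_left, inv_neg, mul_inv]; ring
    show r • ((z - (z + r * e θ))⁻¹ • dbarL (V' (P r θ))) = _
    rw [this, mul_smul, dbarL_rotate _ _ (e1 θ), ← Complex.coe_smul]
    simp only [smul_smul, hf1, hf2]
    congr 1
    field_simp
  rw [setIntegral_congr_fun (measurableSet_Ioi.prod measurableSet_Ioo) key, ← hS, integral_smul, Measure.volume_eq_prod, integral_add (f := f1) (g := fun p => Complex.I • f2 p) hi1 (hi2.smul Complex.I),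
    integral_smul, ← Measure.volume_eq_prod, I1, I2, ← Complex.coe_smul]
  have : (Real.pi : ℂ) ≠ 0 := by exact_mod_cast Real.pi_ne_zero
  simp only [smul_zero, add_zero, smul_neg, smul_smul]
  rw [← neg_smul]
  push_cast
  convert one_smul ℂ (V z) using 2
  field_simp

end

section

open MeasureTheory

variable {W : Type*} [NormedAddCommGroup W] [NormedSpace ℂ W]

lemma exists_remainder_majorant : ∃ C, 0 ≤ C ∧ ∀ z z0 : ℂ, ∃ b : ℂ → ℝ, Integrable b ∧
    ∫ ζ, b ζ ≤ C * (‖z - z0‖ * √‖z - z0‖) ∧ (∀ ζ, 0 ≤ b ζ) ∧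
      ∀ ζ, ‖z - z0‖ ^ 2 * (‖z - ζ‖⁻¹ * ‖z0 - ζ‖ ^ (-(3/2) : ℝ)) ≤ b ζ := by
  set C : ℝ := 2 * (2 * Real.pi / (2 - 3/2)) * (1/2) ^ (2 - 3/2 : ℝ) + (1/2 : ℝ) ^ (-(3/2) : ℝ) * (2 * Real.pi / (2 - 1)) * (1/2) ^ (2 - 1 : ℝ)
    + 3 * (2 * Real.pi / (5/2 - 2)) * (1/3) ^ (2 - 5/2 : ℝ) with hC
  refine ⟨C, by have := Real.pi_pos; norm_num [hC]; positivity, fun z z0 => ?_⟩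
  set H := ‖z - z0‖ with hH
  rcases (norm_nonneg (z - z0)).eq_or_lt with h0 | h0
  · refine ⟨0, integrable_zero _ _ _, by simp [hH, ← h0], fun _ => le_rfl, fun ζ => by simp [hH, ← h0]⟩
  rw [← hH] at h0
  obtain ⟨i1, e1⟩ := integrable_near_rpow (s := 3/2) (a := 1/2 * H) (by norm_num) (by positivity)
  obtain ⟨i2, e2⟩ := integrable_near_rpow (s := 1) (a := 1/2 * H) (by norm_num) (by positivity)
  obtain ⟨i3, e3⟩ := integrable_far_rpow (s := 5/2) (a := 1/3 * H) (by norm_num) (by positivity)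
  set N1 : ℂ → ℝ := fun w => (Iio (1/2 * H)).indicator (fun r : ℝ => r ^ (-(3/2) : ℝ)) ‖w‖ with hN1
  set N2 : ℂ → ℝ := fun w => (Iio (1/2 * H)).indicator (fun r : ℝ => r ^ (-1 : ℝ)) ‖w‖ with hN2
  set N3 : ℂ → ℝ := fun w => (Ioi (1/3 * H)).indicator (fun r : ℝ => r ^ (-(5/2) : ℝ)) ‖w‖ with hN3
  have p1 : ∀ w, 0 ≤ N1 w := by intro w; simp only [N1, indicator]; split_ifs <;> positivity
  have p2 : ∀ w, 0 ≤ N2 w := by intro w; simp only [N2, indicator]; split_ifs <;> positivity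
  have p3 : ∀ w, 0 ≤ N3 w := by intro w; simp only [N3, indicator]; split_ifs <;> positivity
  have j1 := (i1.comp_sub_left z0).const_mul (2 * H)
  have j2 := (i2.comp_sub_left z).const_mul (H ^ 2 * (1/2 * H) ^ (-(3/2) : ℝ))
  have j3 := (i3.comp_sub_left z0).const_mul (3 * H ^ 2)
  have hp : 0 < (1/2 * H) ^ (-(3/2) : ℝ) := by positivity
  refine ⟨fun ζ => 2 * H * N1 (z0 - ζ) + H ^ 2 * (1/2 * H) ^ (-(3/2) : ℝ) * N2 (z - ζ) + 3 * H ^ 2 * N3 (z0 - ζ),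
    (j1.add j2).add j3, ?_, fun ζ => ?_, fun ζ => ?_⟩
  · rw [integral_add (by exact j1.add j2) j3, integral_add j1 j2, integral_const_mul, integral_const_mul, integral_const_mul,
      integral_sub_left_eq_self N1 volume z0, integral_sub_left_eq_self N2 volume z,
      integral_sub_left_eq_self N3 volume z0, e1, e2, e3]
    apply le_of_eq
    rw [hC]
    simp only [Real.mul_rpow (show (0:ℝ) ≤ 1/2 by norm_num) h0.le, Real.mul_rpow (show (0:ℝ) ≤ 1/3 by norm_num) h0.le]
    have q1 : H ^ (2 - 3/2 : ℝ) = √H := by rw [Real.sqrt_eq_rpow]; norm_num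
    have q2 : H ^ (-(3/2) : ℝ) = (H * √H)⁻¹ := rpow_neg_three_halves h0.le
    have q3 : H ^ (2 - 1 : ℝ) = H := by norm_num
    have q4 : H ^ (2 - 5/2 : ℝ) = (√H)⁻¹ := by
      rw [Real.sqrt_eq_rpow, ← Real.rpow_neg h0.le]; norm_num
    rw [q1, q2, q3, q4]
    have hs : 0 < √H := Real.sqrt_pos.2 h0
    have hss : √H * √H = H := Real.mul_self_sqrt h0.le
    have r2 : H ^ 2 * (H * √H)⁻¹ * H = H * √H := by
      field_simp; rw [pow_two, hss]
    have r3 : H ^ 2 * (√H)⁻¹ = H * √H := by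
      field_simp; rw [pow_two, hss]
    linear_combination ((1/2 : ℝ) ^ (-(3/2) : ℝ) * (2 * Real.pi / (2 - 1)) * (1/2) ^ (2 - 1 : ℝ)) * r2 + (3 * (2 * Real.pi / (5/2 - 2)) * (1/3) ^ (2 - 5/2 : ℝ)) * r3
  · have := p1 (z0 - ζ); have := p2 (z - ζ); have := p3 (z0 - ζ); positivity
  · have t1 : H ≤ ‖z - ζ‖ + ‖z0 - ζ‖ := by
      rw [hH, ← sub_sub_sub_cancel_right z z0 ζ]; exact norm_sub_le _ _
    have t2 : ‖z0 - ζ‖ ≤ ‖z - ζ‖ + H := by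
      have := norm_sub_le (z - ζ) (z - z0)
      rwa [sub_sub_sub_cancel_left] at this
    have c1 := p1 (z0 - ζ); have c2 := p2 (z - ζ); have c3 := p3 (z0 - ζ)
    have d1 := mul_nonneg (mul_nonneg zero_le_two h0.le) c1
    have d2 := mul_nonneg (mul_nonneg (sq_nonneg H) hp.le) c2
    have d3 := mul_nonneg (mul_nonneg zero_le_three (sq_nonneg H)) c3
    show _ ≤ 2 * H * N1 (z0 - ζ) + H ^ 2 * (1/2 * H) ^ (-(3/2) : ℝ) * N2 (z - ζ) + 3 * H ^ 2 * N3 (z0 - ζ)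
    by_cases a1 : ‖z0 - ζ‖ < 1/2 * H
    · have : N1 (z0 - ζ) = ‖z0 - ζ‖ ^ (-(3/2) : ℝ) := by simp only [N1, indicator, mem_Iio, a1, if_true]
      have : H ^ 2 * (‖z - ζ‖⁻¹ * ‖z0 - ζ‖ ^ (-(3/2) : ℝ)) ≤ 2 * H * N1 (z0 - ζ) := by
        rw [this]
        have hb : ‖z - ζ‖⁻¹ ≤ (1/2 * H)⁻¹ := inv_anti₀ (by positivity) (by linarith)
        calc _ ≤ H ^ 2 * ((1/2 * H)⁻¹ * ‖z0 - ζ‖ ^ (-(3/2) : ℝ)) := by gcongr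
          _ = _ := by field_simp
      linarith
    by_cases a2 : ‖z - ζ‖ < 1/2 * H
    · have : N2 (z - ζ) = ‖z - ζ‖ ^ (-1 : ℝ) := by simp only [N2, indicator, mem_Iio, a2, if_true]
      have : H ^ 2 * (‖z - ζ‖⁻¹ * ‖z0 - ζ‖ ^ (-(3/2) : ℝ)) ≤ H ^ 2 * (1/2 * H) ^ (-(3/2) : ℝ) * N2 (z - ζ) := by
        rw [this, Real.rpow_neg_one, mul_assoc, mul_comm (‖z - ζ‖⁻¹)]
        have hb : ‖z0 - ζ‖ ^ (-(3/2) : ℝ) ≤ (1/2 * H) ^ (-(3/2) : ℝ) :=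
          Real.rpow_le_rpow_of_nonpos (by positivity) (by linarith) (by norm_num)
        gcongr
      linarith
    · have hq : 1/3 * H < ‖z0 - ζ‖ := by linarith
      have hq0 : 0 < ‖z0 - ζ‖ := by linarith
      have : N3 (z0 - ζ) = ‖z0 - ζ‖ ^ (-(5/2) : ℝ) := by simp only [N3, indicator, mem_Ioi, hq, if_true]
      have : H ^ 2 * (‖z - ζ‖⁻¹ * ‖z0 - ζ‖ ^ (-(3/2) : ℝ)) ≤ 3 * H ^ 2 * N3 (z0 - ζ) := by
        rw [this]
        have hb : ‖z - ζ‖⁻¹ ≤ (1/3 * ‖z0 - ζ‖)⁻¹ := inv_anti₀ (by positivity) (by linarith)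
        have he : ‖z0 - ζ‖ ^ (-(5/2) : ℝ) = ‖z0 - ζ‖⁻¹ * ‖z0 - ζ‖ ^ (-(3/2) : ℝ) := by
          rw [← Real.rpow_neg_one, ← Real.rpow_add hq0]; norm_num
        rw [he]
        calc _ ≤ H ^ 2 * ((1/3 * ‖z0 - ζ‖)⁻¹ * ‖z0 - ζ‖ ^ (-(3/2) : ℝ)) := by gcongr
          _ = _ := by rw [mul_inv]; ring
      linarith

/-- A smooth compactly supported primitive: it equals `conj` near the unit disc. -/
lemma exists_cutoff_conj : ∃ (v : ℂ → ℂ) (M : ℝ), ContDiff ℝ (⊤ : ℕ∞) v ∧ (∀ z, ‖v z‖ ≤ M) ∧ (∀ z, ‖fderiv ℝ v z‖ ≤ M) ∧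
    (∀ z, 2 < ‖z‖ → v z = 0) ∧ (∀ z, 2 < ‖z‖ → fderiv ℝ v z = 0) ∧ (∀ z, ‖z‖ ≤ 1 → v z = (starRingEnd ℂ) z) ∧
    (∀ z, ‖z‖ < 1 → dbarL (fderiv ℝ v z) = 1) := by
  let χ : ContDiffBump (0:ℂ) := ⟨1, 2, one_pos, one_lt_two⟩
  set v : ℂ → ℂ := fun z => χ z • Complex.conjCLE z with hv
  have hsm : ContDiff ℝ (⊤ : ℕ∞) v := χ.contDiff.smul Complex.conjCLE.contDiff
  have hcs : HasCompactSupport v := χ.hasCompactSupport.smul_right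
  have hc1 : ContDiff ℝ 1 v := hsm.of_le (by exact_mod_cast le_top)
  obtain ⟨M1, hM1⟩ := hcs.exists_bound_of_continuous hsm.continuous
  obtain ⟨M2, hM2⟩ := (hcs.fderiv (𝕜 := ℝ)).exists_bound_of_continuous (hc1.continuous_fderiv one_ne_zero)
  have h0 : ∀ z, 2 < ‖z‖ → v z = 0 := by
    intro z hz
    have : χ z = 0 := χ.zero_of_le_dist (by simpa using hz.le)
    simp [hv, this]
  have h1 : ∀ z, ‖z‖ ≤ 1 → v z = (starRingEnd ℂ) z := by
    intro z hz
    have : χ z = 1 := χ.one_of_mem_closedBall (by simpa using hz)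
    simp [hv, this]
  refine ⟨v, max M1 M2, hsm, fun z => (hM1 z).trans (le_max_left _ _), fun z => (hM2 z).trans (le_max_right _ _), h0, ?_, h1, ?_⟩
  · intro z hz
    have : v =ᶠ[𝓝 z] fun _ => 0 := by
      filter_upwards [(isOpen_lt continuous_const continuous_norm).mem_nhds hz] with w hw using h0 w hw
    rw [this.fderiv_eq]; simp
  · intro z hz
    have : v =ᶠ[𝓝 z] Complex.conjCLE := by
      filter_upwards [(isOpen_lt continuous_norm continuous_const).mem_nhds hz] with w hw
      rw [h1 w (le_of_lt hw)]; rfl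
    rw [this.fderiv_eq, ContinuousLinearEquiv.fderiv]
    simp [dbarL]
    norm_num

end

section

open MeasureTheory

variable {W : Type*} [NormedAddCommGroup W] [NormedSpace ℂ W]

lemma BddSupp.mono {R A R' A' : ℝ} {γ : ℂ → W} (h : BddSupp R A γ) (hR : R ≤ R') (hA : A ≤ A') : BddSupp R' A' γ :=
  ⟨h.meas, fun ζ => (h.bound ζ).trans hA, fun ζ hζ => h.supp ζ (hR.trans_lt hζ)⟩

lemma BddSupp.sub {R A R' A' : ℝ} {γ γ' : ℂ → W} (h : BddSupp R A γ) (h' : BddSupp R' A' γ') :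
    BddSupp (max R R') (A + A') (fun ζ => γ ζ - γ' ζ) :=
  ⟨h.meas.sub h'.meas, fun ζ => (norm_sub_le _ _).trans (add_le_add (h.bound ζ) (h'.bound ζ)), fun ζ hζ => by
    rw [h.supp ζ ((le_max_left _ _).trans_lt hζ), h'.supp ζ ((le_max_right _ _).trans_lt hζ), sub_zero]⟩

lemma cauchyT_sub {R A R' A' : ℝ} {γ γ' : ℂ → W} (h : BddSupp R A γ) (h' : BddSupp R' A' γ') (z : ℂ) :
    cauchyT (fun ζ => γ ζ - γ' ζ) z = cauchyT γ z - cauchyT γ' z := by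
  simp only [cauchyT]
  rw [← smul_sub, ← integral_sub (h.integrable_cauchy z) (h'.integrable_cauchy z)]
  simp only [smul_sub]

lemma inv_sq_mul_sqrt {a : ℝ} (ha : 0 ≤ a) : (a ^ 2)⁻¹ * √a = a ^ (-(3/2) : ℝ) := by
  rw [rpow_neg_three_halves ha]
  rcases ha.eq_or_lt with rfl | h
  · simp
  have hs : 0 < √a := Real.sqrt_pos.2 h
  have hss : √a * √a = a := Real.mul_self_sqrt h.le
  field_simp
  nlinarith

lemma norm_cauchyT_remainder_le {R A L C : ℝ} {g : ℂ → W} (hg : BddSupp R A g) {z0 : ℂ} (hL0 : 0 ≤ L)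
    (hL : ∀ ζ, ‖g ζ‖ ≤ L * √‖z0 - ζ‖) {z : ℂ} {b : ℂ → ℝ} (hb : Integrable b) (hbC : ∫ ζ, b ζ ≤ C)
    (hb2 : ∀ ζ, ‖z - z0‖ ^ 2 * (‖z - ζ‖⁻¹ * ‖z0 - ζ‖ ^ (-(3/2) : ℝ)) ≤ b ζ) :
    ‖cauchyT g z - cauchyT g z0 + (z - z0) • ((Real.pi : ℂ)⁻¹ • ∫ ζ, ((z0 - ζ) ^ 2)⁻¹ • g ζ)‖ ≤ C * L := by
  have hk : ∀ ζ, ‖((z0 - ζ) ^ 2)⁻¹ • g ζ‖ ≤ L * ‖z0 - ζ‖ ^ (-(3/2) : ℝ) := by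
    intro ζ
    rw [norm_smul, norm_inv, norm_pow]
    calc _ ≤ (‖z0 - ζ‖ ^ 2)⁻¹ * (L * √‖z0 - ζ‖) := by gcongr; exact hL ζ
      _ = L * ((‖z0 - ζ‖ ^ 2)⁻¹ * √‖z0 - ζ‖) := by ring
      _ = _ := by rw [inv_sq_mul_sqrt (norm_nonneg _)]
  have hI : Integrable (fun ζ => ((z0 - ζ) ^ 2)⁻¹ • g ζ) := by
    obtain ⟨C, hC0, hC⟩ := exists_kernel_majorant (s := 3/2) (by norm_num) (by norm_num) R
    obtain ⟨b, hb, -, hb0, hbb⟩ := hC z0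
    refine (hb.const_mul L).mono' ?_ (Eventually.of_forall fun ζ => ?_)
    · exact (((measurable_const.sub measurable_id).pow_const 2).inv).aestronglyMeasurable.smul hg.meas
    · by_cases hζ : ‖ζ‖ ≤ R
      · refine (hk ζ).trans ?_
        gcongr
        exact hbb ζ hζ
      · rw [hg.supp ζ (not_le.1 hζ)]; simpa using mul_nonneg hL0 (hb0 ζ)
  have e : cauchyT g z - cauchyT g z0 + (z - z0) • ((Real.pi : ℂ)⁻¹ • ∫ ζ, ((z0 - ζ) ^ 2)⁻¹ • g ζ)
      = (Real.pi : ℂ)⁻¹ • ∫ ζ, ((z - ζ)⁻¹ • g ζ - (z0 - ζ)⁻¹ • g ζ + (z - z0) • (((z0 - ζ) ^ 2)⁻¹ • g ζ)) := by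
    have hs : Integrable (fun ζ => (z - ζ)⁻¹ • g ζ - (z0 - ζ)⁻¹ • g ζ) :=
      (hg.integrable_cauchy z).sub (hg.integrable_cauchy z0)
    have hs2 : Integrable (fun ζ => (z - z0) • (((z0 - ζ) ^ 2)⁻¹ • g ζ)) := hI.smul _
    rw [integral_add hs hs2, integral_sub (hg.integrable_cauchy z) (hg.integrable_cauchy z0), integral_smul, smul_add, smul_sub, smul_comm (z - z0)]
    rfl
  rw [e, norm_smul]
  have hpi : ‖(Real.pi : ℂ)⁻¹‖ ≤ 1 := by
    rw [norm_inv, Complex.norm_real, Real.norm_of_nonneg Real.pi_pos.le]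
    exact inv_le_one_of_one_le₀ (by linarith [Real.pi_gt_three])
  have hae : ∀ᵐ ζ : ℂ, ‖(z - ζ)⁻¹ • g ζ - (z0 - ζ)⁻¹ • g ζ + (z - z0) • (((z0 - ζ) ^ 2)⁻¹ • g ζ)‖ ≤ b ζ * L := by
    have h1 : ∀ᵐ ζ : ℂ, ζ ≠ z := by simp [ae_iff]
    have h2 : ∀ᵐ ζ : ℂ, ζ ≠ z0 := by simp [ae_iff]
    filter_upwards [h1, h2] with ζ n1 n2
    have m1 : z - ζ ≠ 0 := sub_ne_zero.2 n1.symm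
    have m2 : z0 - ζ ≠ 0 := sub_ne_zero.2 n2.symm
    have : (z - ζ)⁻¹ • g ζ - (z0 - ζ)⁻¹ • g ζ + (z - z0) • (((z0 - ζ) ^ 2)⁻¹ • g ζ)
        = ((z - z0) ^ 2 * (z - ζ)⁻¹) • (((z0 - ζ) ^ 2)⁻¹ • g ζ) := by
      rw [← sub_smul, smul_smul, smul_smul, ← add_smul]
      congr 1
      field_simp
      ring
    rw [this, norm_smul, norm_mul, norm_pow, norm_inv]
    calc _ ≤ ‖z - z0‖ ^ 2 * ‖z - ζ‖⁻¹ * (L * ‖z0 - ζ‖ ^ (-(3/2) : ℝ)) := by gcongr; exact hk ζ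
      _ = (‖z - z0‖ ^ 2 * (‖z - ζ‖⁻¹ * ‖z0 - ζ‖ ^ (-(3/2) : ℝ))) * L := by ring
      _ ≤ _ := by gcongr; exact hb2 ζ
  have := norm_integral_le_of_norm_le (hb.mul_const L) hae
  rw [integral_mul_const] at this
  calc _ ≤ 1 * ((∫ ζ, b ζ) * L) := by gcongr
    _ ≤ C * L := by rw [one_mul]; gcongr

set_option maxHeartbeats 1000000 in
theorem exists_cauchyT_fderiv [FiniteDimensional ℂ W] : ∃ C, 0 ≤ C ∧ ∀ (R A : ℝ) (γ : ℂ → W), BddSupp R A γ →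
    (∀ z w, ‖γ z - γ w‖ ≤ A * √‖z - w‖) → ∃ ℓ : ℂ → ℂ →L[ℝ] W, (∀ z, dbarL (ℓ z) = γ z) ∧
      ∀ z z0, ‖cauchyT γ z - cauchyT γ z0 - ℓ z0 (z - z0)‖ ≤ C * A * (‖z - z0‖ * √‖z - z0‖) := by
  obtain ⟨v, M, hsm, hvM, hdM, hv2, hdv2, hvc, hdb⟩ := exists_cutoff_conj
  obtain ⟨C1, hC1, hmaj⟩ := exists_remainder_majorant
  have hM0 : 0 ≤ M := (norm_nonneg _).trans (hvM 0)
  refine ⟨C1 * (2 + M) + (M + 1), by positivity, fun R A γ hγ hh => ?_⟩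
  have hA := hγ.nonneg
  set η : ℂ → ℂ := fun w => dbarL (fderiv ℝ v w) with hη
  have hηM : ∀ w, ‖η w‖ ≤ M := fun w => dbarL_norm_le _ (hdM w)
  have hη1 : ∀ w, ‖1 - η w‖ ≤ (1 + M) * √‖w‖ := by
    intro w
    by_cases hw : ‖w‖ < 1
    · rw [hη]; simp only; rw [hdb w hw]; simp; positivity
    · have : 1 ≤ √‖w‖ := Real.one_le_sqrt.2 (not_lt.1 hw)
      calc ‖1 - η w‖ ≤ ‖(1:ℂ)‖ + ‖η w‖ := norm_sub_le _ _
        _ ≤ (1 + M) * 1 := by rw [norm_one, mul_one]; gcongr; exact hηM w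
        _ ≤ _ := by gcongr
  have hηc : Continuous η := by
    have hc1 : ContDiff ℝ 1 v := hsm.of_le (by exact_mod_cast le_top)
    have : Continuous (fderiv ℝ v) := hc1.continuous_fderiv one_ne_zero
    simp only [hη, dbarL]; fun_prop
  have hη0 : ∀ w, 2 < ‖w‖ → η w = 0 := fun w hw => by simp [hη, hdv2 w hw, dbarL]
  set g : ℂ → ℂ → W := fun z0 ζ => γ ζ - η (ζ - z0) • γ z0 with hg
  have hE : ∀ z0, BddSupp (2 + ‖z0‖) (M * A) (fun ζ => η (ζ - z0) • γ z0) := by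
    refine fun z0 => ⟨(by fun_prop : Continuous (fun ζ => η (ζ - z0) • γ z0)).aestronglyMeasurable, fun ζ => ?_, fun ζ hζ => ?_⟩
    · rw [norm_smul]; exact mul_le_mul (hηM _) (hγ.bound _) (norm_nonneg _) hM0
    · have := norm_sub_norm_le ζ z0
      rw [hη0 _ (by linarith), zero_smul]
  have hTE : ∀ z0 z, cauchyT (fun ζ => η (ζ - z0) • γ z0) z = v (z - z0) • γ z0 := by
    intro z0 z
    have hd : ∀ z, HasFDerivAt (fun z => v (z - z0) • γ z0) ((fderiv ℝ v (z - z0)).smulRight (γ z0)) z := by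
      intro z
      have h1 : HasFDerivAt v (fderiv ℝ v (z - z0)) (z - z0) := (hsm.differentiable (by simp) _).hasFDerivAt
      have h2 := h1.comp z ((hasFDerivAt_id (𝕜 := ℝ) z).sub_const z0)
      exact h2.smul_const (γ z0)
    have := cauchyT_dbar hd (M := M * ‖γ z0‖) (R := 2 + ‖z0‖) (fun z => ?_) (fun ζ hζ => ?_) z
    · rw [← this]
      congr 1
      ext ζ
      simp only [dbarL, hη, ContinuousLinearMap.smulRight_apply, smul_eq_mul]
      module
    · refine ContinuousLinearMap.opNorm_le_bound _ (by positivity) fun h => ?_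
      rw [ContinuousLinearMap.smulRight_apply, norm_smul, mul_right_comm]
      gcongr
      exact (fderiv ℝ v _).le_of_opNorm_le (hdM _) h
    · have := norm_sub_norm_le ζ z0
      rw [hv2 _ (by linarith), zero_smul]
  have hgB : ∀ z0, BddSupp (max R (2 + ‖z0‖)) (A + M * A) (g z0) := fun z0 => hγ.sub (hE z0)
  have hgH : ∀ z0 ζ, ‖g z0 ζ‖ ≤ ((2 + M) * A) * √‖z0 - ζ‖ := by
    intro z0 ζ
    have : g z0 ζ = (γ ζ - γ z0) + (1 - η (ζ - z0)) • γ z0 := by simp only [hg, sub_smul, one_smul]; abel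
    rw [this, norm_sub_rev z0]
    refine (norm_add_le _ _).trans ?_
    rw [norm_smul]
    calc _ ≤ A * √‖ζ - z0‖ + (1 + M) * √‖ζ - z0‖ * A := by
          gcongr
          exacts [hh _ _, hη1 _, hγ.bound _]
      _ = _ := by ring
  refine ⟨fun z0 => (Complex.conjCLE : ℂ →L[ℝ] ℂ).smulRight (γ z0) -
    (ContinuousLinearMap.id ℝ ℂ).smulRight ((Real.pi : ℂ)⁻¹ • ∫ ζ, ((z0 - ζ) ^ 2)⁻¹ • g z0 ζ), fun z0 => ?_, fun z z0 => ?_⟩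
  · simp only [dbarL, _root_.sub_apply, ContinuousLinearMap.smulRight_apply]
    generalize (Real.pi : ℂ)⁻¹ • ∫ ζ, ((z0 - ζ) ^ 2)⁻¹ • g z0 ζ = K
    simp
    match_scalars
    · linear_combination (-(1:ℂ)/2) * Complex.I_mul_I
    · linear_combination (-(1:ℂ)/2) * Complex.I_mul_I
  · obtain ⟨b, hb, hbC, hb0, hbb⟩ := hmaj z z0
    have key := norm_cauchyT_remainder_le (hgB z0) (by positivity) (hgH z0) hb hbC hbb
    have e : cauchyT γ z - cauchyT γ z0 - ((Complex.conjCLE : ℂ →L[ℝ] ℂ).smulRight (γ z0) -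
        (ContinuousLinearMap.id ℝ ℂ).smulRight ((Real.pi : ℂ)⁻¹ • ∫ ζ, ((z0 - ζ) ^ 2)⁻¹ • g z0 ζ)) (z - z0)
        = (cauchyT (g z0) z - cauchyT (g z0) z0 + (z - z0) • ((Real.pi : ℂ)⁻¹ • ∫ ζ, ((z0 - ζ) ^ 2)⁻¹ • g z0 ζ))
          + (v (z - z0) - (starRingEnd ℂ) (z - z0)) • γ z0 := by
      rw [cauchyT_sub hγ (hE z0), cauchyT_sub hγ (hE z0), hTE, hTE]
      have : v (z0 - z0) = 0 := by rw [hvc _ (by simp)]; simp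
      rw [this]
      generalize (Real.pi : ℂ)⁻¹ • ∫ ζ, ((z0 - ζ) ^ 2)⁻¹ • g z0 ζ = K
      simp only [_root_.sub_apply, ContinuousLinearMap.smulRight_apply, ContinuousLinearMap.id_apply,
        ContinuousLinearEquiv.coe_coe, Complex.conjCLE_apply, zero_smul, sub_zero, sub_smul]
      abel
    rw [e]
    refine (norm_add_le _ _).trans ?_
    have h2 : ‖(v (z - z0) - (starRingEnd ℂ) (z - z0)) • γ z0‖ ≤ (M + 1) * A * (‖z - z0‖ * √‖z - z0‖) := by
      by_cases hw : ‖z - z0‖ ≤ 1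
      · rw [hvc _ hw, sub_self, zero_smul, norm_zero]; positivity
      · have h1 : 1 ≤ ‖z - z0‖ := (not_le.1 hw).le
        have h3 : 1 ≤ √‖z - z0‖ := Real.one_le_sqrt.2 h1
        rw [norm_smul]
        have : ‖v (z - z0) - (starRingEnd ℂ) (z - z0)‖ ≤ M * ‖z - z0‖ + ‖z - z0‖ := by
          refine (norm_sub_le _ _).trans ?_
          rw [Complex.norm_conj]
          have := hvM (z - z0)
          nlinarith
        calc _ ≤ (M * ‖z - z0‖ + ‖z - z0‖) * A := by gcongr; exact hγ.bound _
          _ = (M + 1) * A * (‖z - z0‖ * 1) := by ring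
          _ ≤ _ := by gcongr
    calc _ ≤ C1 * (‖z - z0‖ * √‖z - z0‖) * ((2 + M) * A) + (M + 1) * A * (‖z - z0‖ * √‖z - z0‖) := by
          gcongr
      _ = _ := by ring

/-- A first-order Taylor estimate of order `3/2` at all pairs of points gives a Hölder derivative. -/
lemma holder_of_taylor {V : Type*} [NormedAddCommGroup V] [NormedSpace ℝ V] {u : ℂ → V} {ℓ : ℂ → ℂ →L[ℝ] V} {C : ℝ}
    (h : ∀ z z0, ‖u z - u z0 - ℓ z0 (z - z0)‖ ≤ C * (‖z - z0‖ * √‖z - z0‖)) :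
    (∀ z, HasFDerivAt u (ℓ z) z) ∧ ∀ z w, ‖ℓ z - ℓ w‖ ≤ 6 * C * √‖z - w‖ := by
  have hC : 0 ≤ C := by simpa using (norm_nonneg _).trans (h 1 0)
  refine ⟨fun z => ?_, fun z w => ?_⟩
  · rw [hasFDerivAt_iff_isLittleO]
    have h1 : (fun x => u x - u z - ℓ z (x - z)) =O[𝓝 z] (fun x => √‖x - z‖ * ‖x - z‖) :=
      IsBigO.of_bound C (Eventually.of_forall fun x => by
        rw [Real.norm_of_nonneg (by positivity), mul_comm (√_)]; exact h x z)
    have h2 : (fun x : ℂ => √‖x - z‖) =o[𝓝 z] (fun _ => (1:ℝ)) := by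
      rw [isLittleO_one_iff]
      have : Continuous (fun x : ℂ => √‖x - z‖) := by fun_prop
      simpa using this.tendsto z
    have h3 := h2.mul_isBigO (isBigO_refl (fun x => ‖x - z‖) (𝓝 z))
    simp only [one_mul] at h3
    exact (h1.trans_isLittleO h3).of_norm_right
  · rcases eq_or_ne z w with rfl | hzw
    · simp
    have hd : 0 < ‖z - w‖ := norm_pos_iff.2 (sub_ne_zero.2 hzw)
    set d := ‖z - w‖ with hdd
    have key : ∀ x : ℂ, ‖x‖ = d → ‖(ℓ z - ℓ w) x‖ ≤ 6 * C * √d * d := by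
      intro x hx
      have h1 := h (z + x) z
      have h2 := h (z + x) w
      have h3 := h z w
      rw [add_sub_cancel_left, hx] at h1
      have h4 : ‖z + x - w‖ ≤ 2 * d := by
        rw [add_sub_right_comm]; refine (norm_add_le _ _).trans ?_; rw [hx, ← hdd]; linarith
      have h5 : ‖z + x - w‖ * √‖z + x - w‖ ≤ 4 * (d * √d) := by
        have : √‖z + x - w‖ ≤ 2 * √d := by
          rw [show 2 * √d = √(4 * d) by rw [Real.sqrt_mul (by norm_num)]; norm_num]
          exact Real.sqrt_le_sqrt (by linarith)
        calc _ ≤ (2 * d) * (2 * √d) := by gcongr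
          _ = _ := by ring
      have e : (ℓ z - ℓ w) x = (u (z + x) - u w - ℓ w (z + x - w)) - (u (z + x) - u z - ℓ z x) - (u z - u w - ℓ w (z - w)) := by
        rw [add_sub_right_comm z x w, map_add, _root_.sub_apply]; abel
      rw [e]
      refine (norm_sub_le _ _).trans ((add_le_add_left (norm_sub_le _ _) _).trans ?_)
      have := mul_le_mul_of_nonneg_left h5 hC
      nlinarith
    refine ContinuousLinearMap.opNorm_le_bound _ (by positivity) fun x => ?_
    rcases eq_or_ne x 0 with rfl | hx
    · simp
    have hx0 : 0 < ‖x‖ := norm_pos_iff.2 hx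
    have := key ((d / ‖x‖) • x) (by rw [norm_smul, Real.norm_of_nonneg (by positivity)]; field_simp)
    rw [map_smul, norm_smul, Real.norm_of_nonneg (by positivity), div_mul_eq_mul_div, div_le_iff₀ hx0] at this
    have h7 : d * ‖(ℓ z - ℓ w) x‖ ≤ d * (6 * C * √d * ‖x‖) := by linarith
    exact le_of_mul_le_mul_left h7 hd

end

section

open MeasureTheory

variable {W : Type*} [NormedAddCommGroup W] [NormedSpace ℂ W]

lemma BddSupp.integrable_continuous_smul {R A : ℝ} {γ : ℂ → W} (h : BddSupp R A γ) {k : ℂ → ℂ} (hk : Continuous k) :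
    Integrable (fun ζ => k ζ • γ ζ) := by
  obtain ⟨C, hC⟩ := (isCompact_closedBall (0:ℂ) R).exists_bound_of_continuousOn hk.continuousOn
  refine h.integrable_smul (b := (closedBall (0:ℂ) R).indicator fun _ => max C 0) hk.aestronglyMeasurable ?_ (fun ζ hζ => ?_)
    (fun ζ => indicator_nonneg (fun _ _ => le_max_right _ _) _)
  · exact (integrable_indicator_iff measurableSet_closedBall).2 (integrableOn_const measure_closedBall_lt_top.ne)
  · have hz : ζ ∈ closedBall (0:ℂ) R := by simpa using hζ
    rw [indicator_of_mem hz]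
    exact (hC ζ hz).trans (le_max_left _ _)

lemma differentiable_integral_kernel [CompleteSpace W] {R A : ℝ} {γ : ℂ → W} (h : BddSupp R A γ) {Ψ Ψ' : ℂ → ℂ → ℂ}
    (hΨ : ∀ z, Continuous (Ψ z)) (hΨ' : Continuous (fun p : ℂ × ℂ => Ψ' p.1 p.2))
    (hd : ∀ z ζ, HasDerivAt (fun z => Ψ z ζ) (Ψ' z ζ) z) :
    Differentiable ℂ (fun z => ∫ ζ, Ψ z ζ • γ ζ) := by
  intro z0
  obtain ⟨C, hC⟩ := ((isCompact_closedBall z0 1).prod (isCompact_closedBall (0:ℂ) R)).exists_bound_of_continuousOn hΨ'.continuousOn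
  have hA := h.nonneg
  refine (hasDerivAt_integral_of_dominated_loc_of_deriv_le (F := fun z ζ => Ψ z ζ • γ ζ)
    (F' := fun z ζ => Ψ' z ζ • γ ζ) (bound := (closedBall (0:ℂ) R).indicator fun _ => max C 0 * A) (closedBall_mem_nhds z0 one_pos)
    (Eventually.of_forall fun z => ((h.integrable_continuous_smul (hΨ z)).aestronglyMeasurable)) (h.integrable_continuous_smul (hΨ z0)) ?_ ?_ ?_ ?_).2.differentiableAt
  · exact (hΨ'.comp (by fun_prop : Continuous fun ζ => (z0, ζ))).aestronglyMeasurable.smul h.meas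
  · refine Eventually.of_forall fun ζ z hz => ?_
    by_cases hζ : ‖ζ‖ ≤ R
    · have hm : ζ ∈ closedBall (0:ℂ) R := by simpa using hζ
      rw [indicator_of_mem hm, norm_smul]
      have := (hC (z, ζ) ⟨hz, hm⟩).trans (le_max_left _ 0)
      exact mul_le_mul this (h.bound ζ) (norm_nonneg _) (le_max_right _ _)
    · rw [h.supp ζ (not_le.1 hζ), smul_zero, norm_zero]
      exact indicator_nonneg (fun _ _ => by positivity) _
  · exact (integrable_indicator_iff measurableSet_closedBall).2 (integrableOn_const measure_closedBall_lt_top.ne)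
  · exact Eventually.of_forall fun ζ z hz => (hd z ζ).smul_const _

/-- The Cauchy transform with an additional Gaussian-type entire factor. -/
def cauchyK (k : ℝ) (γ : ℂ → W) (z : ℂ) : W :=
  (Real.pi : ℂ)⁻¹ • ∫ ζ, (Complex.exp (2 * k * (starRingEnd ℂ) ζ * (z - ζ)) * (z - ζ)⁻¹) • γ ζ

lemma differentiable_cauchyK_aux [CompleteSpace W] {R A : ℝ} {γ : ℂ → W} (h : BddSupp R A γ) (k : ℝ) {φ : ℂ → ℂ} (hφ : Differentiable ℂ φ)
    {g : ℂ → ℂ} (hg : Continuous g) :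
    Differentiable ℂ (fun z => ∫ ζ, (g ζ * φ (2 * k * (starRingEnd ℂ) ζ * (z - ζ))) • γ ζ) := by
  have hc : Continuous (starRingEnd ℂ) := Complex.continuous_conj
  have hφ' : Continuous (deriv φ) := (hφ.contDiff (n := 1)).continuous_deriv le_rfl
  have hφc := hφ.continuous
  refine differentiable_integral_kernel h (Ψ' := fun z ζ => g ζ * (deriv φ (2 * k * (starRingEnd ℂ) ζ * (z - ζ)) * (2 * k * (starRingEnd ℂ) ζ))) ?_ ?_ ?_
  · intro z; fun_prop
  · fun_prop
  · intro z ζ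
    refine HasDerivAt.const_mul _ ?_
    refine (hφ _).hasDerivAt.comp z ?_
    simpa using ((hasDerivAt_id z).sub_const ζ).const_mul (2 * k * (starRingEnd ℂ) ζ)

lemma exists_cauchyK_eq [CompleteSpace W] {R A : ℝ} {γ : ℂ → W} (h : BddSupp R A γ) (k : ℝ) :
    ∃ H : ℂ → W, Differentiable ℂ H ∧ ∀ z, cauchyK k γ z = cauchyT γ z + H z := by
  set φ : ℂ → ℂ := dslope Complex.exp 0 with hφ
  have hφd : Differentiable ℂ φ := by
    rw [← differentiableOn_univ, hφ, Complex.differentiableOn_dslope univ_mem]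
    exact Complex.differentiable_exp.differentiableOn
  have hc : Continuous (starRingEnd ℂ) := Complex.continuous_conj
  have hd := differentiable_cauchyK_aux h k hφd (g := fun ζ => 2 * k * (starRingEnd ℂ) ζ) (by fun_prop)
  refine ⟨_, hd.const_smul (Real.pi : ℂ)⁻¹, fun z => ?_⟩
  have hφc := hφd.continuous
  have hi := h.integrable_continuous_smul (k := fun ζ => (2 * k * (starRingEnd ℂ) ζ) * φ (2 * k * (starRingEnd ℂ) ζ * (z - ζ))) (by fun_prop)
  simp only [cauchyK, cauchyT, Pi.smul_apply]
  rw [← smul_add, ← integral_add (h.integrable_cauchy z) hi]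
  congr 1
  refine integral_congr_ae ?_
  have h1 : ∀ᵐ ζ : ℂ, ζ ≠ z := by simp [ae_iff]
  filter_upwards [h1] with ζ hζ
  have m1 : z - ζ ≠ 0 := sub_ne_zero.2 hζ.symm
  rw [← add_smul]
  congr 1
  rcases eq_or_ne (2 * k * (starRingEnd ℂ) ζ) 0 with h0 | h0
  · rw [h0]; simp
  · rw [hφ, dslope_of_ne _ (mul_ne_zero h0 m1), slope_def_field, Complex.exp_zero, sub_zero]
    generalize 2 * k * (starRingEnd ℂ) ζ = a at *
    field_simp
    ring

lemma BddSupp.integrable_cauchyK [CompleteSpace W] {R A : ℝ} {γ : ℂ → W} (h : BddSupp R A γ) (k : ℝ) (z : ℂ) :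
    Integrable (fun ζ => (Complex.exp (2 * k * (starRingEnd ℂ) ζ * (z - ζ)) * (z - ζ)⁻¹) • γ ζ) := by
  have hc : Continuous (starRingEnd ℂ) := Complex.continuous_conj
  set g : ℂ → ℂ := fun ζ => Complex.exp (2 * k * (starRingEnd ℂ) ζ * (z - ζ)) with hg
  have hgc : Continuous g := by fun_prop
  obtain ⟨C, hC⟩ := (isCompact_closedBall (0:ℂ) R).exists_bound_of_continuousOn hgc.continuousOn
  have h2 : BddSupp R (max C 0 * A) (fun ζ => g ζ • γ ζ) := by
    refine ⟨hgc.aestronglyMeasurable.smul h.meas, fun ζ => ?_, fun ζ hζ => by rw [h.supp ζ hζ, smul_zero]⟩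
    by_cases hζ : ‖ζ‖ ≤ R
    · have hm : ζ ∈ closedBall (0:ℂ) R := by simpa using hζ
      rw [norm_smul]
      exact mul_le_mul ((hC ζ hm).trans (le_max_left _ 0)) (h.bound ζ) (norm_nonneg _) (le_max_right _ _)
    · rw [h.supp ζ (not_le.1 hζ), smul_zero, norm_zero]
      have := h.nonneg
      positivity
  refine (h2.integrable_cauchy z).congr (Eventually.of_forall fun ζ => ?_)
  simp only [hg, smul_smul, mul_comm]

lemma BddSupp.id_smul {R A : ℝ} {γ : ℂ → W} (h : BddSupp R A γ) : BddSupp R (max R 0 * A) (fun ζ => ζ • γ ζ) := by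
  refine ⟨continuous_id.aestronglyMeasurable.smul h.meas, fun ζ => ?_, fun ζ hζ => by rw [h.supp ζ hζ, smul_zero]⟩
  by_cases hζ : ‖ζ‖ ≤ R
  · rw [norm_smul]
    exact mul_le_mul (hζ.trans (le_max_left _ 0)) (h.bound ζ) (norm_nonneg _) (le_max_right _ _)
  · rw [h.supp ζ (not_le.1 hζ), smul_zero, norm_zero]
    have := h.nonneg
    positivity

lemma exists_smul_cauchyK_eq [CompleteSpace W] {R A : ℝ} {γ : ℂ → W} (h : BddSupp R A γ) (k : ℝ) :
    ∃ H : ℂ → W, Differentiable ℂ H ∧ ∀ z, z • cauchyK k γ z = cauchyT (fun ζ => ζ • γ ζ) z + H z := by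
  obtain ⟨H, hH, hHe⟩ := exists_cauchyK_eq h.id_smul k
  have hd := differentiable_cauchyK_aux h k Complex.differentiable_exp (g := fun ζ => 1) (by fun_prop)
  refine ⟨_, hH.add (hd.const_smul (Real.pi : ℂ)⁻¹), fun z => ?_⟩
  have hc : Continuous (starRingEnd ℂ) := Complex.continuous_conj
  have hi := h.integrable_continuous_smul (k := fun ζ => 1 * Complex.exp (2 * k * (starRingEnd ℂ) ζ * (z - ζ))) (by fun_prop)
  have hi2 : Integrable (fun ζ => (Complex.exp (2 * k * (starRingEnd ℂ) ζ * (z - ζ)) * (z - ζ)⁻¹) • (ζ • γ ζ)) := h.id_smul.integrable_cauchyK k z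
  rw [Pi.add_apply, ← add_assoc, ← hHe]
  simp only [cauchyK, Pi.smul_apply]
  rw [← smul_add, ← integral_add hi2 hi, smul_comm, ← integral_smul]
  congr 1
  refine integral_congr_ae ?_
  have h1 : ∀ᵐ ζ : ℂ, ζ ≠ z := by simp [ae_iff]
  filter_upwards [h1] with ζ hζ
  have m1 : z - ζ ≠ 0 := sub_ne_zero.2 hζ.symm
  rw [smul_smul, smul_smul, ← add_smul]
  congr 1
  field_simp
  ring

lemma gaussian_kernel {k : ℝ} (hk : 0 < k) : Integrable (fun w : ℂ => Real.exp (-k * ‖w‖ ^ 2) * ‖w‖⁻¹) ∧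
    ∫ w : ℂ, Real.exp (-k * ‖w‖ ^ 2) * ‖w‖⁻¹ = Real.pi * √(Real.pi / k) := by
  have e : ∀ y ∈ Ioi (0:ℝ), y ^ (Module.finrank ℝ ℂ - 1) • (Real.exp (-k * y ^ 2) * y⁻¹) = Real.exp (-k * y ^ 2) := by
    intro y hy
    have : y ≠ 0 := ne_of_gt hy
    simp only [Complex.finrank_real_complex, smul_eq_mul]
    field_simp
    norm_num
  constructor
  · rw [integrable_fun_norm_addHaar (μ := volume) (f := fun r : ℝ => Real.exp (-k * r ^ 2) * r⁻¹)]
    rw [integrableOn_congr_fun e measurableSet_Ioi]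
    exact integrableOn_Ioi_exp_neg_mul_sq_iff.2 hk
  · rw [integral_fun_norm_addHaar volume (f := fun r : ℝ => Real.exp (-k * r ^ 2) * r⁻¹)]
    rw [setIntegral_congr_fun measurableSet_Ioi e, integral_gaussian_Ioi]
    simp only [Complex.finrank_real_complex, Measure.real, Complex.volume_ball]
    simp
    ring

lemma weighted_cauchyK_le {γ : ℂ → W} {k Q : ℝ} (hk : 0 < k)
    (hQ : ∀ ζ, Real.exp (-k * ‖ζ‖ ^ 2) * ‖γ ζ‖ ≤ Q) (z : ℂ) :
    Real.exp (-k * ‖z‖ ^ 2) * ‖cauchyK k γ z‖ ≤ √(Real.pi / k) * Q := by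
  obtain ⟨g1, g2⟩ := gaussian_kernel hk
  have hpt : ∀ ζ, ‖(Real.exp (-k * ‖z‖ ^ 2) : ℂ) • ((Complex.exp (2 * k * (starRingEnd ℂ) ζ * (z - ζ)) * (z - ζ)⁻¹) • γ ζ)‖ ≤
      Real.exp (-k * ‖z - ζ‖ ^ 2) * ‖z - ζ‖⁻¹ * Q := by
    intro ζ
    rw [norm_smul, norm_smul, norm_mul, norm_inv, Complex.norm_exp, Complex.norm_real, Real.norm_of_nonneg (Real.exp_pos _).le]
    have : Real.exp (-k * ‖z‖ ^ 2) * Real.exp (2 * k * (starRingEnd ℂ) ζ * (z - ζ)).re = Real.exp (-k * ‖z - ζ‖ ^ 2) * Real.exp (-k * ‖ζ‖ ^ 2) := by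
      rw [← Real.exp_add, ← Real.exp_add]
      congr 1
      simp only [← Complex.normSq_eq_norm_sq, Complex.normSq_apply]
      simp
      ring
    calc _ = (Real.exp (-k * ‖z‖ ^ 2) * Real.exp (2 * k * (starRingEnd ℂ) ζ * (z - ζ)).re) * ‖z - ζ‖⁻¹ * ‖γ ζ‖ := by ring
      _ = Real.exp (-k * ‖z - ζ‖ ^ 2) * ‖z - ζ‖⁻¹ * (Real.exp (-k * ‖ζ‖ ^ 2) * ‖γ ζ‖) := by rw [this]; ring
      _ ≤ _ := by gcongr; exact hQ ζ
  have hi := (g1.comp_sub_left z).mul_const Q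
  have key := norm_integral_le_of_norm_le hi (Eventually.of_forall hpt)
  rw [integral_smul, norm_smul, Complex.norm_real, Real.norm_of_nonneg (Real.exp_pos _).le, integral_mul_const,
    integral_sub_left_eq_self (fun w : ℂ => Real.exp (-k * ‖w‖ ^ 2) * ‖w‖⁻¹) volume z, g2] at key
  rw [cauchyK, norm_smul, norm_inv, Complex.norm_real, Real.norm_of_nonneg Real.pi_pos.le, mul_left_comm]
  calc _ ≤ Real.pi⁻¹ * (Real.pi * √(Real.pi / k) * Q) := by gcongr
    _ = _ := by field_simp

end

section

open MeasureTheory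

variable {W : Type*} [NormedAddCommGroup W] [NormedSpace ℂ W]

lemma cauchyK_sub [CompleteSpace W] {R A R' A' : ℝ} {γ γ' : ℂ → W} (h : BddSupp R A γ) (h' : BddSupp R' A' γ') (k : ℝ) (z : ℂ) :
    cauchyK k (fun ζ => γ ζ - γ' ζ) z = cauchyK k γ z - cauchyK k γ' z := by
  simp only [cauchyK]
  rw [← smul_sub, ← integral_sub (h.integrable_cauchyK k z) (h'.integrable_cauchyK k z)]
  simp only [smul_sub]

lemma continuous_cauchyT {R A : ℝ} {γ : ℂ → W} (h : BddSupp R A γ) : Continuous (cauchyT γ) := by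
  obtain ⟨C, hC0, hC⟩ := exists_cauchyT_holder (W := W) R
  rw [continuous_iff_continuousAt]
  intro z
  rw [ContinuousAt, tendsto_iff_norm_sub_tendsto_zero]
  have : Tendsto (fun w => C * A * √‖w - z‖) (𝓝 z) (𝓝 0) := by
    have : Continuous (fun w => C * A * √‖w - z‖) := by fun_prop
    simpa using this.tendsto z
  exact squeeze_zero (fun _ => norm_nonneg _) (fun w => hC A γ h w z) this

lemma continuous_cauchyK [CompleteSpace W] {R A : ℝ} {γ : ℂ → W} (h : BddSupp R A γ) (k : ℝ) : Continuous (cauchyK k γ) := by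
  obtain ⟨H, hH, he⟩ := exists_cauchyK_eq h k
  have : cauchyK k γ = fun z => cauchyT γ z + H z := funext he
  rw [this]
  exact (continuous_cauchyT h).add hH.continuous

lemma exists_cauchyK_fixedPoint [CompleteSpace W] {R A A1 : ℝ} (B : ℂ → W → W)
    (hm : ∀ m : ℂ → W, Continuous m → AEStronglyMeasurable (fun ζ => B ζ (m ζ)) volume)
    (hB0 : ∀ ζ, ‖B ζ 0‖ ≤ A1) (hL : ∀ ζ x y, ‖B ζ x - B ζ y‖ ≤ A * ‖x - y‖)
    (hs : ∀ ζ x, R < ‖ζ‖ → B ζ x = 0) (c : W) :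
    ∃ (k : ℝ) (m : ℂ → W), Continuous m ∧ (∃ A', BddSupp R A' (fun ζ => B ζ (m ζ))) ∧
      ∀ z, m z = c + (cauchyK k (fun ζ => B ζ (m ζ)) z - cauchyK k (fun ζ => B ζ (m ζ)) 0) := by
  wlog hA : 0 ≤ A generalizing A
  · refine this (A := max A 0) (fun ζ x y => (hL ζ x y).trans ?_) (le_max_right _ _)
    gcongr; exact le_max_left _ _
  have hA1 : 0 ≤ A1 := (norm_nonneg _).trans (hB0 0)
  set k : ℝ := Real.pi * (4 * (A + 1)) ^ 2 with hk
  have hk0 : 0 < k := by have := Real.pi_pos; positivity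
  have hδ : √(Real.pi / k) = (4 * (A + 1))⁻¹ := by
    have : Real.pi / k = ((4 * (A + 1))⁻¹) ^ 2 := by
      have := Real.pi_pos
      rw [hk]; field_simp
    rw [this, Real.sqrt_sq (by positivity)]
  set w : ℂ → ℝ := fun z => Real.exp (-k * ‖z‖ ^ 2) with hw
  set w' : ℂ → ℝ := fun z => Real.exp (k * ‖z‖ ^ 2) with hw'
  have hww : ∀ z, w z * w' z = 1 := fun z => by simp only [hw, hw']; rw [← Real.exp_add]; simp
  have hww' : ∀ z, w' z * w z = 1 := fun z => by rw [mul_comm, hww]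
  have w1 : ∀ z, w z ≤ 1 := fun z => by
    simp only [hw]; rw [Real.exp_le_one_iff]; nlinarith [sq_nonneg ‖z‖]
  have w0 : ∀ z, 0 < w z := fun z => Real.exp_pos _
  have w0' : ∀ z, 0 < w' z := fun z => Real.exp_pos _
  have hwc : Continuous w := by fun_prop
  have hwc' : Continuous w' := by fun_prop
  set Γ : BoundedContinuousFunction ℂ W → ℂ → W := fun n ζ => B ζ (w' ζ • n ζ) with hΓ
  have hbd : ∀ ζ x, ‖B ζ x‖ ≤ A1 + A * ‖x‖ := by
    intro ζ x
    have h1 := hL ζ x 0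
    have h2 := norm_sub_norm_le (B ζ x) (B ζ 0)
    rw [sub_zero] at h1
    linarith [hB0 ζ]
  have hΓB : ∀ n, BddSupp R (A1 + A * (Real.exp (k * R ^ 2) * ‖n‖)) (Γ n) := by
    intro n
    refine ⟨hm _ (hwc'.smul n.continuous), fun ζ => ?_, fun ζ hζ => hs ζ _ hζ⟩
    by_cases hζ : ‖ζ‖ ≤ R
    · refine (hbd ζ _).trans ?_
      rw [norm_smul, Real.norm_of_nonneg (w0' ζ).le]
      have : w' ζ ≤ Real.exp (k * R ^ 2) := by
        simp only [hw']; gcongr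
      gcongr
      exact n.norm_coe_le_norm ζ
    · rw [hΓ]; simp only; rw [hs ζ _ (not_le.1 hζ), norm_zero]; positivity
  have hΓw : ∀ n ζ, w ζ * ‖Γ n ζ‖ ≤ A1 + A * ‖n‖ := by
    intro n ζ
    calc w ζ * ‖Γ n ζ‖ ≤ w ζ * (A1 + A * (w' ζ * ‖n‖)) := by
          have := hbd ζ (w' ζ • n ζ)
          rw [norm_smul, Real.norm_of_nonneg (w0' ζ).le] at this
          have h3 := n.norm_coe_le_norm ζ
          have := w0 ζ
          have := w0' ζ
          gcongr
          refine (hbd ζ (w' ζ • n ζ)).trans ?_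
          rw [norm_smul, Real.norm_of_nonneg (w0' ζ).le]
          gcongr
      _ = w ζ * A1 + A * (w ζ * w' ζ) * ‖n‖ := by ring
      _ ≤ 1 * A1 + A * 1 * ‖n‖ := by rw [hww]; gcongr; exact w1 ζ
      _ = _ := by ring
  have hΓd : ∀ n n' ζ, w ζ * ‖Γ n ζ - Γ n' ζ‖ ≤ A * ‖n - n'‖ := by
    intro n n' ζ
    calc w ζ * ‖Γ n ζ - Γ n' ζ‖ ≤ w ζ * (A * (w' ζ * ‖n - n'‖)) := by
          have := w0 ζ
          have := w0' ζ
          gcongr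
          refine (hL ζ _ _).trans ?_
          rw [← smul_sub, norm_smul, Real.norm_of_nonneg (w0' ζ).le]
          gcongr
          exact (n - n').norm_coe_le_norm ζ
      _ = A * (w ζ * w' ζ) * ‖n - n'‖ := by ring
      _ = _ := by rw [hww, mul_one]
  have hTw : ∀ n z, w z * ‖cauchyK k (Γ n) z‖ ≤ √(Real.pi / k) * (A1 + A * ‖n‖) :=
    fun n z => weighted_cauchyK_le hk0 (hΓw n) z
  have hTd : ∀ n n' z, w z * ‖cauchyK k (Γ n) z - cauchyK k (Γ n') z‖ ≤ √(Real.pi / k) * (A * ‖n - n'‖) := by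
    intro n n' z
    rw [← cauchyK_sub (hΓB n) (hΓB n')]
    exact weighted_cauchyK_le hk0 (hΓd n n') z
  have hw00 : w 0 = 1 := by simp [hw]
  have hT0 : ∀ n, ‖cauchyK k (Γ n) 0‖ ≤ √(Real.pi / k) * (A1 + A * ‖n‖) := fun n => by
    have := hTw n 0; rwa [hw00, one_mul] at this
  have hTd0 : ∀ n n', ‖cauchyK k (Γ n) 0 - cauchyK k (Γ n') 0‖ ≤ √(Real.pi / k) * (A * ‖n - n'‖) := fun n n' => by
    have := hTd n n' 0; rwa [hw00, one_mul] at this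
  set Φ : BoundedContinuousFunction ℂ W → BoundedContinuousFunction ℂ W := fun n =>
    BoundedContinuousFunction.ofNormedAddCommGroup (fun z => w z • (c + (cauchyK k (Γ n) z - cauchyK k (Γ n) 0)))
      (hwc.smul (continuous_const.add ((continuous_cauchyK (hΓB n) k).sub continuous_const)))
      (‖c‖ + (√(Real.pi / k) * (A1 + A * ‖n‖) + √(Real.pi / k) * (A1 + A * ‖n‖))) (by
        intro z
        rw [norm_smul, Real.norm_of_nonneg (w0 z).le]
        calc _ ≤ w z * (‖c‖ + (‖cauchyK k (Γ n) z‖ + ‖cauchyK k (Γ n) 0‖)) := by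
              have := w0 z
              gcongr
              exact (norm_add_le _ _).trans (add_le_add_right (norm_sub_le _ _) _)
          _ = w z * ‖c‖ + (w z * ‖cauchyK k (Γ n) z‖ + w z * ‖cauchyK k (Γ n) 0‖) := by ring
          _ ≤ 1 * ‖c‖ + (√(Real.pi / k) * (A1 + A * ‖n‖) + 1 * (√(Real.pi / k) * (A1 + A * ‖n‖))) := by
              have h1 := mul_le_mul (w1 z) (hT0 n) (norm_nonneg _) zero_le_one
              have h2 := mul_le_mul_of_nonneg_right (w1 z) (norm_nonneg c)
              have h3 := hTw n z
              linarith
          _ = _ := by ring) with hΦ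
  have hcon : ContractingWith (1/2) Φ := by
    refine ⟨by rw [← NNReal.coe_lt_coe]; norm_num, LipschitzWith.of_dist_le_mul fun n n' => ?_⟩
    rw [BoundedContinuousFunction.dist_le (by positivity)]
    intro z
    rw [dist_eq_norm, dist_eq_norm]
    have : Φ n z - Φ n' z = w z • ((cauchyK k (Γ n) z - cauchyK k (Γ n') z) - (cauchyK k (Γ n) 0 - cauchyK k (Γ n') 0)) := by
      simp only [hΦ, BoundedContinuousFunction.coe_ofNormedAddCommGroup]
      rw [← smul_sub]; congr 1; abel
    rw [this, norm_smul, Real.norm_of_nonneg (w0 z).le]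
    calc _ ≤ w z * (‖cauchyK k (Γ n) z - cauchyK k (Γ n') z‖ + ‖cauchyK k (Γ n) 0 - cauchyK k (Γ n') 0‖) := by
          have := w0 z
          gcongr
          exact norm_sub_le _ _
      _ = w z * ‖cauchyK k (Γ n) z - cauchyK k (Γ n') z‖ + w z * ‖cauchyK k (Γ n) 0 - cauchyK k (Γ n') 0‖ := by ring
      _ ≤ √(Real.pi / k) * (A * ‖n - n'‖) + 1 * (√(Real.pi / k) * (A * ‖n - n'‖)) := by
          have h1 := mul_le_mul (w1 z) (hTd0 n n') (norm_nonneg _) zero_le_one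
          have h3 := hTd n n' z
          linarith
      _ = (A / (A + 1)) * (1/2 * ‖n - n'‖) := by rw [hδ]; field_simp; ring
      _ ≤ 1 * (1/2 * ‖n - n'‖) := by
          gcongr
          rw [div_le_one (by positivity)]; linarith
      _ = _ := by simp
  set n := ContractingWith.fixedPoint Φ hcon with hn
  have hfix : Φ n = n := hcon.fixedPoint_isFixedPt
  refine ⟨k, fun z => w' z • n z, hwc'.smul n.continuous, ⟨_, hΓB n⟩, fun z => ?_⟩
  have : n z = w z • (c + (cauchyK k (Γ n) z - cauchyK k (Γ n) 0)) := by
    conv_lhs => rw [← hfix]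
    rfl
  show w' z • n z = c + (cauchyK k (Γ n) z - cauchyK k (Γ n) 0)
  rw [this, smul_smul, hww', one_smul]

end

section

open MeasureTheory

variable {W : Type*} [NormedAddCommGroup W] [NormedSpace ℂ W]

lemma exists_lipschitz_of_entire [CompleteSpace W] {H : ℂ → W} (hH : Differentiable ℂ H) (r : ℝ) :
    ∃ L, 0 ≤ L ∧ ∀ z ∈ closedBall (0 : ℂ) r, ∀ w ∈ closedBall (0 : ℂ) r, ‖H z - H w‖ ≤ L * ‖z - w‖ := by
  have hc : Continuous (deriv H) := (hH.contDiff (n := 1)).continuous_deriv le_rfl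
  obtain ⟨L, hL⟩ := (isCompact_closedBall (0 : ℂ) r).exists_bound_of_continuousOn hc.continuousOn
  refine ⟨max L 0, le_max_right _ _, fun z hz w hw => ?_⟩
  exact (convex_closedBall (0 : ℂ) r).norm_image_sub_le_of_norm_deriv_le (fun x _ => hH x)
    (fun x hx => (hL x hx).trans (le_max_left _ _)) hw hz

lemma le_mul_sqrt {a b : ℝ} (ha : 0 ≤ a) (hab : a ≤ b) : a ≤ √b * √a := by
  calc a = √a * √a := (Real.mul_self_sqrt ha).symm
    _ ≤ √b * √a := by gcongr

lemma dbarL_add (ℓ ℓ' : ℂ →L[ℝ] W) : dbarL (ℓ + ℓ') = dbarL ℓ + dbarL ℓ' := by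
  simp only [dbarL, _root_.add_apply]; module

lemma dbarL_of_complex (ℓ : ℂ →L[ℂ] W) : dbarL (ℓ.restrictScalars ℝ) = 0 := by
  simp only [dbarL, ContinuousLinearMap.coe_restrictScalars']
  have : ℓ Complex.I = Complex.I • ℓ 1 := by rw [← map_smul]; simp
  rw [this, smul_smul, Complex.I_mul_I]; simp

lemma exists_fderiv_of_cauchyT_eq [FiniteDimensional ℂ W] {R M A' : ℝ} {A : ℂ → W →L[ℝ] W} {G : ℂ → W}
    (hAb : ∀ z, ‖A z‖ ≤ M) (hAh : ∀ z w, ‖A z - A w‖ ≤ M * √‖z - w‖)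
    (hGh : ∀ z w, ‖G z - G w‖ ≤ M * √‖z - w‖)
    {V H : ℂ → W} (hΓ : BddSupp R A' (fun z => G z - A z (V z))) (hH : Differentiable ℂ H)
    (hV : ∀ z, V z = cauchyT (fun z => G z - A z (V z)) z + H z) :
    ∃ (V' : ℂ → ℂ →L[ℝ] W) (C : ℝ), (∀ z, HasFDerivAt V (V' z) z) ∧
      (∀ z ∈ closedBall (0 : ℂ) 1, ∀ w ∈ closedBall (0 : ℂ) 1, ‖V' z - V' w‖ ≤ C * √‖z - w‖) ∧
      ∀ z, dbarL (V' z) + A z (V z) = G z := by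
  have := FiniteDimensional.complete ℂ W
  set Γ := fun z => G z - A z (V z) with hΓdef
  have hM0 : 0 ≤ M := (norm_nonneg _).trans (hAb 0)
  have hA'0 := hΓ.nonneg
  obtain ⟨C0, hC0, hT⟩ := exists_cauchyT_holder (W := W) R
  obtain ⟨L, hL0, hL⟩ := exists_lipschitz_of_entire hH (R + 1)
  have hVc : Continuous V := by
    have : V = fun z => cauchyT Γ z + H z := funext hV
    rw [this]; exact (continuous_cauchyT hΓ).add hH.continuous
  obtain ⟨MV, hMV⟩ := (isCompact_closedBall (0 : ℂ) (R + 1)).exists_bound_of_continuousOn hVc.continuousOn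
  have hVh : ∀ z ∈ closedBall (0 : ℂ) (R + 1), ∀ w ∈ closedBall (0 : ℂ) (R + 1), ‖z - w‖ ≤ 1 →
      ‖V z - V w‖ ≤ (C0 * A' + L) * √‖z - w‖ := by
    intro z hz w hw hzw
    have h1 := hT A' Γ hΓ z w
    have h2 := hL z hz w hw
    have h3 := le_mul_sqrt (norm_nonneg (z - w)) hzw
    rw [Real.sqrt_one, one_mul] at h3
    calc ‖V z - V w‖ = ‖(cauchyT Γ z - cauchyT Γ w) + (H z - H w)‖ := by rw [hV z, hV w]; congr 1; abel
      _ ≤ C0 * A' * √‖z - w‖ + L * ‖z - w‖ := (norm_add_le _ _).trans (add_le_add h1 h2)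
      _ ≤ C0 * A' * √‖z - w‖ + L * √‖z - w‖ := by gcongr
      _ = _ := by ring
  have hloc : ∀ z ∈ closedBall (0 : ℂ) (R + 1), ∀ w ∈ closedBall (0 : ℂ) (R + 1), ‖z - w‖ ≤ 1 →
      ‖Γ z - Γ w‖ ≤ (M + M * MV + M * (C0 * A' + L)) * √‖z - w‖ := by
    intro z hz w hw hzw
    have h1 : ‖(A z - A w) (V z)‖ ≤ M * √‖z - w‖ * MV :=
      ContinuousLinearMap.le_of_opNorm_le_of_le _ (hAh z w) (hMV z hz)
    have h2 : ‖A w (V z - V w)‖ ≤ M * ((C0 * A' + L) * √‖z - w‖) :=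
      ContinuousLinearMap.le_of_opNorm_le_of_le _ (hAb w) (hVh z hz w hw hzw)
    have h3 : Γ z - Γ w = (G z - G w) - ((A z - A w) (V z) + A w (V z - V w)) := by
      simp only [hΓdef, _root_.sub_apply, map_sub]; abel
    rw [h3]
    have h4 := norm_sub_le (G z - G w) ((A z - A w) (V z) + A w (V z - V w))
    have h5 := norm_add_le ((A z - A w) (V z)) (A w (V z - V w))
    have h6 := hGh z w
    linarith
  set Q := M + M * max MV 0 + M * (C0 * A' + L) + 2 * A' with hQ
  have hQ0 : 0 ≤ Q := by positivity
  have hΓh : ∀ z w, ‖Γ z - Γ w‖ ≤ Q * √‖z - w‖ := by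
    intro z w
    rcases le_total 1 ‖z - w‖ with h | h
    · have h1 : 1 ≤ √‖z - w‖ := Real.one_le_sqrt.2 h
      have h2 := (norm_sub_le (Γ z) (Γ w)).trans (add_le_add (hΓ.bound z) (hΓ.bound w))
      have h3 : 2 * A' ≤ Q := by
        have : 0 ≤ M + M * max MV 0 + M * (C0 * A' + L) := by positivity
        linarith
      nlinarith
    · by_cases hz : R < ‖z‖ ∧ R < ‖w‖
      · rw [hΓ.supp z hz.1, hΓ.supp w hz.2, sub_zero, norm_zero]; positivity
      · have hzw : ‖z‖ ≤ R + 1 ∧ ‖w‖ ≤ R + 1 := by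
          have h1 := norm_sub_norm_le z w
          have h2 := norm_sub_norm_le w z
          rw [norm_sub_rev] at h2
          by_cases h3 : R < ‖z‖
          · have : ¬ R < ‖w‖ := fun h4 => hz ⟨h3, h4⟩
            constructor <;> linarith
          · constructor <;> linarith
        refine (hloc z (by simpa using hzw.1) w (by simpa using hzw.2) h).trans ?_
        gcongr
        have : M * MV ≤ M * max MV 0 := by gcongr; exact le_max_left _ _
        linarith
  obtain ⟨C1, hC1, hD⟩ := exists_cauchyT_fderiv (W := W)
  have hΓQ : BddSupp R Q Γ := hΓ.mono le_rfl (by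
    have : 0 ≤ M + M * max MV 0 + M * (C0 * A' + L) := by positivity
    linarith)
  obtain ⟨ℓ, hℓ, hℓ2⟩ := hD R Q Γ hΓQ hΓh
  obtain ⟨hd, hh⟩ := holder_of_taylor hℓ2
  have hH' : Differentiable ℂ (fderiv ℂ H) :=
    ((hH.contDiff (n := 2)).fderiv_right (m := 1) (by norm_num)).differentiable one_ne_zero
  obtain ⟨L2, hL20, hL2⟩ := exists_lipschitz_of_entire hH' 1
  refine ⟨fun z => ℓ z + (fderiv ℂ H z).restrictScalars ℝ, 6 * (C1 * Q) + L2 * √2, fun z => ?_, fun z hz w hw => ?_, fun z => ?_⟩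
  · have : V = fun z => cauchyT Γ z + H z := funext hV
    rw [this]
    exact (hd z).add ((hH z).hasFDerivAt.restrictScalars ℝ)
  · have h1 := hh z w
    have h2 := hL2 z hz w hw
    have h3 : ‖z - w‖ ≤ 2 := by
      have := norm_sub_le z w
      simp only [mem_closedBall, dist_zero_right] at hz hw
      linarith
    have h4 := le_mul_sqrt (norm_nonneg (z - w)) h3
    have h5 : ‖(fderiv ℂ H z).restrictScalars ℝ - (fderiv ℂ H w).restrictScalars ℝ‖ = ‖fderiv ℂ H z - fderiv ℂ H w‖ := rfl
    rw [add_sub_add_comm]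
    refine (norm_add_le _ _).trans ?_
    rw [h5]
    calc _ ≤ 6 * (C1 * Q) * √‖z - w‖ + L2 * (√2 * √‖z - w‖) :=
          add_le_add h1 (h2.trans (by gcongr))
      _ = _ := by ring
  · rw [dbarL_add, dbarL_of_complex, hℓ, add_zero]
    simp [hΓdef]

lemma continuous_of_sqrt_holder {V : Type*} [NormedAddCommGroup V] {u : ℂ → V} {M : ℝ}
    (h : ∀ z w, ‖u z - u w‖ ≤ M * √‖z - w‖) : Continuous u := by
  rw [continuous_iff_continuousAt]
  intro z
  rw [ContinuousAt, tendsto_iff_norm_sub_tendsto_zero]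
  refine squeeze_zero (fun _ => norm_nonneg _) (fun w => h w z) ?_
  have : Continuous (fun w : ℂ => M * √‖w - z‖) := by fun_prop
  simpa using this.tendsto z

theorem exists_dbar_solution [FiniteDimensional ℂ W] {R M : ℝ} {A : ℂ → W →L[ℝ] W} {G : ℂ → W}
    (hAb : ∀ z, ‖A z‖ ≤ M) (hAh : ∀ z w, ‖A z - A w‖ ≤ M * √‖z - w‖) (hAs : ∀ z, R < ‖z‖ → A z = 0)
    (hGb : ∀ z, ‖G z‖ ≤ M) (hGh : ∀ z w, ‖G z - G w‖ ≤ M * √‖z - w‖) (hGs : ∀ z, R < ‖z‖ → G z = 0) (a b : W) :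
    ∃ (V : ℂ → W) (V' : ℂ → ℂ →L[ℝ] W) (C : ℝ), (∀ z, HasFDerivAt V (V' z) z) ∧
      (∀ z ∈ closedBall (0 : ℂ) 1, ∀ w ∈ closedBall (0 : ℂ) 1, ‖V' z - V' w‖ ≤ C * √‖z - w‖) ∧
      (∀ z, dbarL (V' z) + A z (V z) = G z) ∧ V 0 = a ∧ V' 0 1 = b := by
  have := FiniteDimensional.complete ℂ W
  have hM0 : 0 ≤ M := (norm_nonneg _).trans (hAb 0)
  have hAc := continuous_of_sqrt_holder hAh
  have hGc := continuous_of_sqrt_holder hGh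
  obtain ⟨k, V1, hV1c, ⟨A1, hΓ1⟩, hV1⟩ := exists_cauchyK_fixedPoint (R := R) (A := M) (A1 := M) (fun ζ x => G ζ - A ζ x)
    (fun m hm => (hGc.sub (hAc.clm_apply hm)).aestronglyMeasurable)
    (fun ζ => by simpa using hGb ζ)
    (fun ζ x y => by
      have : (G ζ - A ζ x) - (G ζ - A ζ y) = A ζ (y - x) := by rw [map_sub]; abel
      simp only [this]
      rw [norm_sub_rev x y]
      exact ContinuousLinearMap.le_of_opNorm_le _ (hAb ζ) _)
    (fun ζ x hζ => by simp [hAs ζ hζ, hGs ζ hζ]) a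
  obtain ⟨H1, hH1, hK1⟩ := exists_cauchyK_eq hΓ1 k
  obtain ⟨V1', C1, hd1, hh1, he1⟩ := exists_fderiv_of_cauchyT_eq hAb hAh hGh
    (H := fun z => H1 z + (a - cauchyK k (fun ζ => G ζ - A ζ (V1 ζ)) 0)) hΓ1 (by fun_prop)
    (fun z => by
      have h1 := hV1 z
      rw [hK1 z] at h1
      rw [h1]; abel)
  have hV10 : V1 0 = a := by have := hV1 0; simpa using this
  set b' := b - V1' 0 1 with hb'
  have hinv : ∀ ζ : ℂ, ‖ζ⁻¹‖ * ‖ζ‖ ≤ 1 := fun ζ => by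
    rw [norm_inv]; exact inv_mul_le_one
  obtain ⟨k2, m, hmc, ⟨A2, hΓ2⟩, hm⟩ := exists_cauchyK_fixedPoint (R := R) (A := M) (A1 := M) (fun ζ x => -(ζ⁻¹ • A ζ (ζ • x)))
    (fun m hm => ((measurable_inv.stronglyMeasurable).aestronglyMeasurable.smul
      (hAc.clm_apply (continuous_id.smul hm)).aestronglyMeasurable).neg)
    (fun ζ => by simpa using hM0)
    (fun ζ x y => by
      have : -(ζ⁻¹ • A ζ (ζ • x)) - -(ζ⁻¹ • A ζ (ζ • y)) = ζ⁻¹ • A ζ (ζ • (y - x)) := by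
        rw [smul_sub, map_sub]; module
      simp only [this]
      rw [norm_smul, norm_sub_rev x y]
      have h1 := ContinuousLinearMap.le_of_opNorm_le _ (hAb ζ) (ζ • (y - x))
      rw [norm_smul] at h1
      calc ‖ζ⁻¹‖ * ‖A ζ (ζ • (y - x))‖ ≤ ‖ζ⁻¹‖ * (M * (‖ζ‖ * ‖y - x‖)) := by gcongr
        _ = (‖ζ⁻¹‖ * ‖ζ‖) * (M * ‖y - x‖) := by ring
        _ ≤ 1 * (M * ‖y - x‖) := by gcongr; exact hinv ζ
        _ = _ := one_mul _)
    (fun ζ x hζ => by simp [hAs ζ hζ]) b'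
  obtain ⟨H2, hH2, hK2⟩ := exists_smul_cauchyK_eq hΓ2 k2
  set V2 : ℂ → W := fun z => z • m z with hV2
  have hΓeq : (fun ζ : ℂ => ζ • (-(ζ⁻¹ • A ζ (ζ • m ζ)))) = fun ζ => (0 : ℂ → W) ζ - A ζ (V2 ζ) := by
    funext ζ
    by_cases hζ : ζ = 0
    · simp [hζ, hV2]
    · simp [hV2, smul_smul, hζ]
  have hm0 : m 0 = b' := by have := hm 0; simpa using this
  obtain ⟨V2', C2, hd2, hh2, he2⟩ := exists_fderiv_of_cauchyT_eq (G := 0) (V := V2) hAb hAh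
    (fun z w => by simp only [Pi.zero_apply, sub_zero, norm_zero]; positivity)
    (H := fun z => H2 z + z • (b' - cauchyK k2 (fun ζ => -(ζ⁻¹ • A ζ (ζ • m ζ))) 0)) (hΓeq ▸ hΓ2.id_smul) (by fun_prop)
    (fun z => by
      have h1 := hK2 z
      rw [hΓeq] at h1
      have h2 : V2 z = z • (b' + (cauchyK k2 (fun ζ => -(ζ⁻¹ • A ζ (ζ • m ζ))) z - cauchyK k2 (fun ζ => -(ζ⁻¹ • A ζ (ζ • m ζ))) 0)) := by
        simp only [hV2]; rw [← hm z]
      have h3 : ∀ x y c : W, z • (c + (x - y)) = z • x + z • (c - y) := fun x y c => by module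
      rw [h2, h3, h1, add_assoc])
  have hder : HasDerivAt V2 b' 0 := by
    rw [hasDerivAt_iff_tendsto_slope_zero]
    have h1 : Tendsto m (𝓝[≠] 0) (𝓝 b') := hm0 ▸ (hmc.tendsto 0).mono_left nhdsWithin_le_nhds
    refine h1.congr' ?_
    filter_upwards [self_mem_nhdsWithin] with t ht
    have : t ≠ 0 := ht
    simp [hV2, smul_smul, this]
  have h20 : V2' 0 1 = b' := by
    have := (hd2 0).unique (hder.hasFDerivAt.restrictScalars ℝ)
    rw [this]; simp
  refine ⟨fun z => V1 z + V2 z, fun z => V1' z + V2' z, C1 + C2, fun z => (hd1 z).add (hd2 z), fun z hz w hw => ?_, fun z => ?_, ?_, ?_⟩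
  · rw [add_sub_add_comm, add_mul]
    exact (norm_add_le _ _).trans (add_le_add (hh1 z hz w hw) (hh2 z hz w hw))
  · rw [dbarL_add, map_add, ← he1 z, add_add_add_comm, he2 z]; simp
  · simp [hV10, hV2]
  · simp [h20, hb']

end

section

open MeasureTheory

variable {W : Type*} [NormedAddCommGroup W] [NormedSpace ℂ W]
variable {V : Type*} [NormedAddCommGroup V] [NormedSpace ℝ V]

lemma exists_complexification (V : Type*) [NormedAddCommGroup V] [NormedSpace ℝ V] [FiniteDimensional ℝ V] :
    ∃ (N : ℕ) (ι : V →L[ℝ] (Fin N → ℂ)) (re : (Fin N → ℂ) →L[ℝ] V), (∀ v, re (ι v) = v) ∧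
      ∀ v, re (Complex.I • ι v) = 0 := by
  let b := Module.finBasis ℝ V
  let ι : V →ₗ[ℝ] (Fin (Module.finrank ℝ V) → ℂ) :=
    { toFun := fun v j => ((b.equivFun v j : ℝ) : ℂ)
      map_add' := fun v w => by ext j; simp
      map_smul' := fun c v => by ext j; simp }
  let re : (Fin (Module.finrank ℝ V) → ℂ) →ₗ[ℝ] V :=
    b.equivFun.symm.toLinearMap ∘ₗ
      { toFun := fun w j => (w j).re
        map_add' := fun v w => by ext j; simp
        map_smul' := fun c v => by ext j; simp }
  refine ⟨_, LinearMap.toContinuousLinearMap ι, LinearMap.toContinuousLinearMap re, fun v => ?_, fun v => ?_⟩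
  · simp only [LinearMap.coe_toContinuousLinearMap', ι, re, LinearMap.comp_apply, LinearMap.coe_mk, AddHom.coe_mk, Complex.ofReal_re]
    exact b.equivFun.symm_apply_apply v
  · simp only [LinearMap.coe_toContinuousLinearMap', ι, re, LinearMap.comp_apply, LinearMap.coe_mk, AddHom.coe_mk, Pi.smul_apply, smul_eq_mul]
    have : (fun j => (Complex.I * ((b.equivFun v j : ℝ) : ℂ)).re) = 0 := by ext j; simp
    rw [this]; simp

/-- `g` is a pseudo-holomorphic map on `s` with derivative `g'`, for a matrix field `J` that is an
almost complex structure along the image. -/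
structure JHolOn (J : V → V →L[ℝ] V) (s : Set ℂ) (g : ℂ → V) (g' : ℂ → ℂ →L[ℝ] V) : Prop where
  hasFDerivAt : ∀ z ∈ s, HasFDerivAt g (g' z) z
  eq : ∀ z ∈ s, g' z Complex.I = J (g z) (g' z 1)
  sq : ∀ z ∈ s, ∀ v, J (g z) (J (g z) v) = -v

lemma JHolOn.comp_affine {J : V → V →L[ℝ] V} {s : Set ℂ} {g : ℂ → V} {g' : ℂ → ℂ →L[ℝ] V} (h : JHolOn J s g g')
    (c : ℂ) (r : ℝ) {t : Set ℂ} (ht : ∀ z ∈ t, c + r * z ∈ s) :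
    JHolOn J t (fun z => g (c + r * z)) (fun z => r • g' (c + r * z)) := by
  refine ⟨fun z hz => ?_, fun z hz => ?_, fun z hz => h.sq _ (ht z hz)⟩
  · have h1 : HasFDerivAt (fun z : ℂ => c + r * z) (r • ContinuousLinearMap.id ℝ ℂ) z := by
      have := ((hasFDerivAt_id (𝕜 := ℝ) z).const_smul r).const_add c
      simpa using this
    have := (h.hasFDerivAt _ (ht z hz)).comp z h1
    have h2 : r • g' (c + r * z) = (g' (c + r * z)).comp (r • ContinuousLinearMap.id ℝ ℂ) := by
      ext x; simp
    simp only [h2]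
    exact this
  · have := h.eq _ (ht z hz)
    simp only [_root_.smul_apply, this, map_smul]

lemma norm_I_smul_comp (ι : V →L[ℝ] W) (v : V) : ‖Complex.I • ι v‖ ≤ ‖ι‖ * ‖v‖ := by
  rw [norm_smul, Complex.norm_I, one_mul]; exact ι.le_opNorm v

lemma dbarL_lift_eq (ι : V →L[ℝ] W) (Jy : V →L[ℝ] V) (hJ : ∀ v, Jy (Jy v) = -v) (d' : ℂ →L[ℝ] V) (Q : ℂ →L[ℝ] V) :
    dbarL (ι.comp d' - (Complex.I • ι).comp (Jy.comp d' + Q)) =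
      (1 / 2 : ℂ) • (-(Complex.I • ι (Q 1)) + ι (Q Complex.I) + Complex.I • ι (d' Complex.I - Jy (d' 1))
        + ι (Jy (d' Complex.I - Jy (d' 1)))) := by
  have e : ∀ x : W, Complex.I • Complex.I • x = -x := fun x => by rw [smul_smul, Complex.I_mul_I]; simp
  simp only [dbarL, _root_.sub_apply, ContinuousLinearMap.comp_apply, _root_.add_apply,
    _root_.smul_apply, map_add, map_sub, smul_add, smul_sub, e, hJ, map_neg]
  module

lemma dbarL_smul_add (c : ℝ) (ℓ : ℂ →L[ℝ] W) (k : ℂ →L[ℝ] ℝ) (x : W) :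
    ‖dbarL (c • ℓ + k.smulRight x)‖ ≤ |c| * ‖dbarL ℓ‖ + ‖k‖ * ‖x‖ := by
  have h1 : dbarL (c • ℓ + k.smulRight x) = c • dbarL ℓ + dbarL (k.smulRight x) := by
    rw [dbarL_add]; congr 1
    simp only [dbarL, _root_.smul_apply]
    rw [smul_comm c (1 / 2 : ℂ), smul_add c, smul_comm c Complex.I (ℓ Complex.I), smul_add]
  rw [h1]
  refine (norm_add_le _ _).trans ?_
  rw [norm_smul, Real.norm_eq_abs]
  gcongr
  exact dbarL_norm_le _ (ContinuousLinearMap.norm_smulRight_apply _ _).le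

/-- Interior Hölder estimate for the derivative of a pseudo-holomorphic disc with small derivative. -/
theorem JHolOn.exists_deriv_holder [FiniteDimensional ℝ V] {J : V → V →L[ℝ] V} {DJ : V → V →L[ℝ] V →L[ℝ] V} {L : ℝ}
    (hJ : ∀ y, HasFDerivAt J (DJ y) y) (hJb : ∀ y, ‖J y‖ ≤ L) (hDJ : ∀ y, ‖DJ y‖ ≤ L) :
    ∃ C, 0 ≤ C ∧ ∀ (g : ℂ → V) (g' : ℂ → ℂ →L[ℝ] V) (Λ : ℝ), Λ ≤ 1 → JHolOn J (ball 0 1) g g' →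
      (∀ z ∈ ball (0 : ℂ) 1, ‖g' z‖ ≤ Λ) → ∀ z ∈ closedBall (0 : ℂ) (1 / 2), ∀ w ∈ closedBall (0 : ℂ) (1 / 2),
        ‖g' z - g' w‖ ≤ C * Λ * √‖z - w‖ := by
  obtain ⟨N, ι, re, hre, hreI⟩ := exists_complexification V
  have hL0 : 0 ≤ L := (norm_nonneg _).trans (hJb 0)
  let χ : ContDiffBump (0 : ℂ) := ⟨1 / 2, 3 / 4, by norm_num, by norm_num⟩
  have hχc : ContDiff ℝ 1 χ := χ.contDiff
  obtain ⟨X, hX⟩ := (χ.hasCompactSupport.fderiv (𝕜 := ℝ)).exists_bound_of_continuous (hχc.continuous_fderiv one_ne_zero)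
  have hX0 : 0 ≤ X := (norm_nonneg _).trans (hX 0)
  have hχ0 : ∀ z, 3 / 4 ≤ ‖z‖ → χ z = 0 := fun z hz => χ.zero_of_le_dist (by simpa using hz)
  have hχ1 : ∀ z ∈ closedBall (0 : ℂ) (1 / 2), χ z = 1 := fun z hz => χ.one_of_mem_closedBall hz
  have hχabs : ∀ z, |χ z| ≤ 1 := fun z => by rw [abs_of_nonneg χ.nonneg]; exact χ.le_one
  obtain ⟨CT, hCT, hT⟩ := exists_cauchyT_holder (W := Fin N → ℂ) (4 / 5)
  set B := ‖ι‖ * (3 * L + L * L) + X * (‖ι‖ * (1 + L)) with hB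
  have hB0 : 0 ≤ B := by positivity
  refine ⟨‖re‖ * (CT * B), by positivity, fun g g' Λ hΛ1 hg hΛ => ?_⟩
  have hΛ0 : 0 ≤ Λ := (norm_nonneg _).trans (hΛ 0 (by simp))
  have hlip : ∀ z ∈ ball (0 : ℂ) 1, ∀ w ∈ ball (0 : ℂ) 1, ‖g z - g w‖ ≤ Λ * ‖z - w‖ := fun z hz w hw =>
    (convex_ball (0 : ℂ) 1).norm_image_sub_le_of_norm_hasFDerivWithin_le
      (fun x hx => (hg.hasFDerivAt x hx).hasFDerivWithinAt) hΛ hw hz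
  have hJlip : ∀ x y, ‖J x - J y‖ ≤ L * ‖x - y‖ := fun x y =>
    convex_univ.norm_image_sub_le_of_norm_hasFDerivWithin_le
      (fun x _ => (hJ x).hasFDerivWithinAt) (fun x _ => hDJ x) (mem_univ y) (mem_univ x)
  -- estimate for difference quotients
  have key : ∀ e : ℂ, ‖e‖ = 1 → ∀ t : ℝ, 0 < t → t < 1 / 5 → ∀ z ∈ closedBall (0 : ℂ) (1 / 2),
      ∀ w ∈ closedBall (0 : ℂ) (1 / 2),
      ‖t⁻¹ • (g (z + t * e) - g z) - t⁻¹ • (g (w + t * e) - g w)‖ ≤ ‖re‖ * (CT * (B * Λ) * √‖z - w‖) := by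
    intro e he t ht0 ht1
    have hte : ‖(t : ℂ) * e‖ = t := by rw [norm_mul, he, mul_one, Complex.norm_real, Real.norm_of_nonneg ht0.le]
    have hin : ∀ z : ℂ, ‖z‖ < 4 / 5 → z ∈ ball (0 : ℂ) 1 ∧ z + t * e ∈ ball (0 : ℂ) 1 := by
      intro z hz
      have := norm_add_le z (t * e)
      simp only [mem_ball, dist_zero_right]
      constructor <;> linarith
    set d : ℂ → V := fun z => t⁻¹ • (g (z + t * e) - g z) with hd
    set d' : ℂ → ℂ →L[ℝ] V := fun z => t⁻¹ • (g' (z + t * e) - g' z) with hd'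
    have hdd : ∀ z, ‖z‖ < 4 / 5 → HasFDerivAt d (d' z) z := fun z hz => by
      have h1 := (hg.hasFDerivAt _ (hin z hz).2).comp z ((hasFDerivAt_id (𝕜 := ℝ) z).add_const (t * e))
      exact (h1.sub (hg.hasFDerivAt z (hin z hz).1)).const_smul t⁻¹
    have hdb : ∀ z, ‖z‖ < 4 / 5 → ‖d z‖ ≤ Λ := fun z hz => by
      have h1 := hlip _ (hin z hz).2 _ (hin z hz).1
      rw [add_sub_cancel_left, hte] at h1
      simp only [hd, norm_smul, norm_inv, Real.norm_of_nonneg ht0.le]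
      rw [inv_mul_le_iff₀ ht0]; linarith
    set Q : ℂ → ℂ →L[ℝ] V := fun z => ((DJ (g z)).comp (g' z)).flip (d z) with hQ
    have hQb : ∀ z, ‖z‖ < 4 / 5 → ∀ x : ℂ, ‖x‖ = 1 → ‖Q z x‖ ≤ L * Λ := fun z hz x hx => by
      simp only [hQ, ContinuousLinearMap.flip_apply, ContinuousLinearMap.comp_apply]
      have h1 : ‖g' z x‖ ≤ Λ * 1 := ContinuousLinearMap.le_of_opNorm_le_of_le _ (hΛ z (hin z hz).1) hx.le
      have h2 : ‖DJ (g z) (g' z x)‖ ≤ L * (Λ * 1) := ContinuousLinearMap.le_of_opNorm_le_of_le _ (hDJ _) h1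
      have h3 := ContinuousLinearMap.le_of_opNorm_le_of_le _ h2 (hdb z hz)
      calc _ ≤ L * (Λ * 1) * Λ := h3
        _ ≤ L * (Λ * 1) * 1 := by gcongr
        _ = _ := by ring
    set p : ℂ → (Fin N → ℂ) := fun z => ι (d z) - (Complex.I • ι) (J (g z) (d z)) with hp
    set p' : ℂ → ℂ →L[ℝ] (Fin N → ℂ) := fun z =>
      ι.comp (d' z) - (Complex.I • ι).comp ((J (g z)).comp (d' z) + Q z) with hp'
    have hpd : ∀ z, ‖z‖ < 4 / 5 → HasFDerivAt p (p' z) z := fun z hz => by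
      have h1 : HasFDerivAt (fun z => J (g z)) ((DJ (g z)).comp (g' z)) z :=
        (hJ (g z)).comp z (hg.hasFDerivAt z (hin z hz).1)
      exact (ι.hasFDerivAt.comp z (hdd z hz)).sub ((Complex.I • ι).hasFDerivAt.comp z (h1.clm_apply (hdd z hz)))
    have hpb : ∀ z, ‖z‖ < 4 / 5 → ‖p z‖ ≤ ‖ι‖ * (1 + L) * Λ := fun z hz => by
      have h1 : ‖ι (d z)‖ ≤ ‖ι‖ * Λ := ContinuousLinearMap.le_opNorm_of_le _ (hdb z hz)
      have h2 : ‖J (g z) (d z)‖ ≤ L * Λ := ContinuousLinearMap.le_of_opNorm_le_of_le _ (hJb _) (hdb z hz)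
      have h3 := norm_I_smul_comp ι (J (g z) (d z))
      have h4 : ‖ι‖ * ‖J (g z) (d z)‖ ≤ ‖ι‖ * (L * Λ) := by gcongr
      have h5 := norm_sub_le (ι (d z)) ((Complex.I • ι) (J (g z) (d z)))
      simp only [_root_.smul_apply] at h5
      simp only [hp, _root_.smul_apply]
      linarith
    have hpdbar : ∀ z, ‖z‖ < 4 / 5 → ‖dbarL (p' z)‖ ≤ ‖ι‖ * (3 * L + L * L) * Λ := fun z hz => by
      obtain ⟨hz1, hz2⟩ := hin z hz
      have hR : d' z Complex.I - J (g z) (d' z 1) = t⁻¹ • (J (g (z + t * e)) - J (g z)) (g' (z + t * e) 1) := by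
        simp only [hd', _root_.smul_apply, _root_.sub_apply, hg.eq _ hz1, hg.eq _ hz2,
          map_smul, map_sub]
        module
      have hRb : ‖d' z Complex.I - J (g z) (d' z 1)‖ ≤ L * Λ := by
        rw [hR, norm_smul, norm_inv, Real.norm_of_nonneg ht0.le, inv_mul_le_iff₀ ht0]
        have h1 := hJlip (g (z + t * e)) (g z)
        have h2 := hlip _ hz2 _ hz1
        rw [add_sub_cancel_left, hte] at h2
        have h3 : ‖g' (z + t * e) 1‖ ≤ 1 * 1 :=
          ContinuousLinearMap.le_of_opNorm_le_of_le _ ((hΛ _ hz2).trans hΛ1) (by simp)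
        have h4 : ‖J (g (z + t * e)) - J (g z)‖ ≤ L * (Λ * t) := h1.trans (by gcongr)
        have := ContinuousLinearMap.le_of_opNorm_le_of_le _ h4 h3
        linarith
      rw [hp', dbarL_lift_eq ι _ (hg.sq z hz1)]
      set r := d' z Complex.I - J (g z) (d' z 1)
      have i1 : ‖-(Complex.I • ι (Q z 1))‖ ≤ ‖ι‖ * (L * Λ) := by
        rw [norm_neg]
        exact (norm_I_smul_comp ι _).trans (by gcongr; exact hQb z hz 1 (by simp))
      have i2 : ‖ι (Q z Complex.I)‖ ≤ ‖ι‖ * (L * Λ) :=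
        ContinuousLinearMap.le_opNorm_of_le _ (hQb z hz _ (by simp))
      have i3 : ‖Complex.I • ι r‖ ≤ ‖ι‖ * (L * Λ) :=
        (norm_I_smul_comp ι _).trans (by gcongr)
      have i4 : ‖ι (J (g z) r)‖ ≤ ‖ι‖ * (L * (L * Λ)) :=
        ContinuousLinearMap.le_opNorm_of_le _ (ContinuousLinearMap.le_of_opNorm_le_of_le _ (hJb _) hRb)
      rw [norm_smul]
      have i5 := norm_add_le (-(Complex.I • ι (Q z 1)) + ι (Q z Complex.I) + Complex.I • ι r) (ι (J (g z) r))
      have i6 := norm_add_le (-(Complex.I • ι (Q z 1)) + ι (Q z Complex.I)) (Complex.I • ι r)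
      have i7 := norm_add_le (-(Complex.I • ι (Q z 1))) (ι (Q z Complex.I))
      have i8 : ‖(1 / 2 : ℂ)‖ = 1 / 2 := by norm_num
      rw [i8]
      have i9 := norm_nonneg (-(Complex.I • ι (Q z 1)) + ι (Q z Complex.I) + Complex.I • ι r + ι (J (g z) r))
      linarith
    set U : ℂ → (Fin N → ℂ) := fun z => χ z • p z with hU
    set U' : ℂ → ℂ →L[ℝ] (Fin N → ℂ) := fun z =>
      if ‖z‖ < 4 / 5 then χ z • p' z + (fderiv ℝ χ z).smulRight (p z) else 0 with hU'
    have hUd : ∀ z, HasFDerivAt U (U' z) z := fun z => by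
      by_cases hz : ‖z‖ < 4 / 5
      · simp only [hU', if_pos hz]
        exact ((hχc.differentiable one_ne_zero) z).hasFDerivAt.smul (hpd z hz)
      · simp only [hU', if_neg hz]
        refine (hasFDerivAt_const (0 : Fin N → ℂ) z).congr_of_eventuallyEq ?_
        have : ∀ᶠ w : ℂ in 𝓝 z, 3 / 4 < ‖w‖ := continuous_norm.continuousAt.eventually_const_lt (by linarith)
        filter_upwards [this] with w hw
        simp [hU, hχ0 w hw.le]
    have hUbar : ∀ z, ‖dbarL (U' z)‖ ≤ B * Λ := fun z => by
      by_cases hz : ‖z‖ < 4 / 5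
      · simp only [hU', if_pos hz]
        refine (dbarL_smul_add _ _ _ _).trans ?_
        calc _ ≤ 1 * (‖ι‖ * (3 * L + L * L) * Λ) + X * (‖ι‖ * (1 + L) * Λ) := by
              gcongr
              exacts [hχabs z, hpdbar z hz, hX z, hpb z hz]
          _ = _ := by rw [hB]; ring
      · simp only [hU', if_neg hz]
        have : dbarL (0 : ℂ →L[ℝ] (Fin N → ℂ)) = 0 := by simp [dbarL]
        rw [this, norm_zero]; positivity
    obtain ⟨M, hM⟩ : ∃ M, ∀ z, ‖U' z‖ ≤ M := by
      refine ⟨1 * (‖ι‖ * (t⁻¹ * (Λ + Λ)) + ‖Complex.I • ι‖ * (L * (t⁻¹ * (Λ + Λ)) + L * Λ * Λ)) + X * (‖ι‖ * (1 + L) * Λ), fun z => ?_⟩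
      by_cases hz : ‖z‖ < 4 / 5
      · obtain ⟨hz1, hz2⟩ := hin z hz
        have e1 : ‖d' z‖ ≤ t⁻¹ * (Λ + Λ) := by
          simp only [hd', norm_smul, norm_inv, Real.norm_of_nonneg ht0.le]
          gcongr
          exact (norm_sub_le _ _).trans (add_le_add (hΛ _ hz2) (hΛ _ hz1))
        have e2 : ‖Q z‖ ≤ L * Λ * Λ := by
          simp only [hQ]
          refine (ContinuousLinearMap.le_opNorm _ _).trans ?_
          rw [ContinuousLinearMap.opNorm_flip]
          gcongr
          · exact (ContinuousLinearMap.opNorm_comp_le _ _).trans (by gcongr; exacts [hDJ _, hΛ _ hz1])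
          · exact hdb z hz
        have e3 : ‖p' z‖ ≤ ‖ι‖ * (t⁻¹ * (Λ + Λ)) + ‖Complex.I • ι‖ * (L * (t⁻¹ * (Λ + Λ)) + L * Λ * Λ) := by
          refine (norm_sub_le _ _).trans (add_le_add ?_ ?_)
          · exact (ContinuousLinearMap.opNorm_comp_le _ _).trans (by gcongr)
          · refine (ContinuousLinearMap.opNorm_comp_le _ _).trans ?_
            gcongr
            refine (norm_add_le _ _).trans (add_le_add ?_ e2)
            exact (ContinuousLinearMap.opNorm_comp_le _ _).trans (by gcongr; exact hJb _)
        simp only [hU', if_pos hz]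
        refine (norm_add_le _ _).trans (add_le_add ?_ ?_)
        · rw [norm_smul]
          gcongr
          exact hχabs z
        · rw [ContinuousLinearMap.norm_smulRight_apply]
          gcongr
          exacts [hX z, hpb z hz]
      · simp only [hU', if_neg hz, norm_zero]; positivity
    have hU0 : ∀ z, 4 / 5 < ‖z‖ → U z = 0 := fun z hz => by simp [hU, hχ0 z (by linarith)]
    have hTU := cauchyT_dbar hUd hM hU0
    have hBS : BddSupp (4 / 5) (B * Λ) (fun ζ => dbarL (U' ζ)) := by
      refine ⟨?_, hUbar, fun z hz => ?_⟩
      · have h1 := aestronglyMeasurable_deriv_apply hUd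
        exact (((h1 1).add ((h1 Complex.I).const_smul Complex.I)).const_smul (1 / 2 : ℂ)).aestronglyMeasurable
      · simp [hU', not_lt.2 hz.le, dbarL]
    intro z hz w hw
    have h1 := hT _ _ hBS z w
    rw [hTU, hTU] at h1
    have h2 : ∀ z ∈ closedBall (0 : ℂ) (1 / 2), re (U z) = d z := fun z hz => by
      simp only [hU, hχ1 z hz, one_smul, hp, map_sub, _root_.smul_apply, hre, hreI, sub_zero]
    change ‖d z - d w‖ ≤ _
    rw [← h2 z hz, ← h2 w hw, ← map_sub]
    exact ContinuousLinearMap.le_opNorm_of_le _ h1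
  intro z hz w hw
  refine ContinuousLinearMap.opNorm_le_of_unit_norm (by positivity) fun e he => ?_
  have lim : ∀ z ∈ closedBall (0 : ℂ) (1 / 2), Tendsto (fun t : ℝ => t⁻¹ • (g (z + t * e) - g z)) (𝓝[>] 0) (𝓝 (g' z e)) := by
    intro z hz
    have h1 := (hg.hasFDerivAt z (closedBall_subset_ball (by norm_num) hz)).hasLineDerivAt e
    have := h1.tendsto_slope_zero_right
    simpa using this
  have hl := ((lim z hz).sub (lim w hw)).norm
  have : ‖re‖ * (CT * B) * Λ * √‖z - w‖ = ‖re‖ * (CT * (B * Λ) * √‖z - w‖) := by ring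
  rw [this]
  refine le_of_tendsto hl ?_
  filter_upwards [Ioo_mem_nhdsGT (show (0 : ℝ) < 1 / 5 by norm_num)] with t ht
  exact key e he t ht.1 ht.2 z hz w hw

end

section

open MeasureTheory

variable {V : Type*} [NormedAddCommGroup V] [NormedSpace ℝ V]

/-- Pseudo-holomorphic discs of small oscillation have derivative controlled by the oscillation. -/
theorem JHolOn.exists_gradient_bound [FiniteDimensional ℝ V] {J : V → V →L[ℝ] V} {DJ : V → V →L[ℝ] V →L[ℝ] V} {L : ℝ}
    (hJ : ∀ y, HasFDerivAt J (DJ y) y) (hJb : ∀ y, ‖J y‖ ≤ L) (hDJ : ∀ y, ‖DJ y‖ ≤ L) :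
    ∃ C ε0, 0 ≤ C ∧ 0 < ε0 ∧ ∀ (g : ℂ → V) (g' : ℂ → ℂ →L[ℝ] V) (M0 : ℝ) (c : V) (ε : ℝ), JHolOn J (ball 0 1) g g' →
      (∀ z ∈ ball (0 : ℂ) 1, ‖g' z‖ ≤ M0) → (∀ z ∈ ball (0 : ℂ) 1, ‖g z - c‖ ≤ ε) → ε ≤ ε0 → ‖g' 0‖ ≤ C * ε := by
  obtain ⟨C1, hC1, hR⟩ := JHolOn.exists_deriv_holder hJ hJb hDJ
  set σ : ℝ := (5 * (C1 + 1))⁻¹ with hσ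
  have hσ0 : 0 < σ := by positivity
  have hσ1 : C1 * σ ≤ 1 / 5 := by
    rw [hσ, ← div_eq_mul_inv, div_le_iff₀ (by positivity)]; linarith
  have hσ2 : σ ≤ 1 / 5 := by
    rw [hσ, inv_eq_one_div, div_le_div_iff₀ (by positivity) (by norm_num)]; linarith
  set δ : ℝ := σ ^ 2 with hδ
  have hδ0 : 0 < δ := by positivity
  have hδ1 : δ ≤ 1 / 2 := by rw [hδ]; nlinarith
  refine ⟨8 / δ, δ / 16, by positivity, by positivity, fun g g' M0 c ε hg hM0 hc hε => ?_⟩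
  set S : Set ℝ := (fun z : ℂ => (1 - ‖z‖) * ‖g' z‖) '' ball 0 1 with hS
  have hSb : BddAbove S := by
    refine ⟨M0, ?_⟩
    rintro _ ⟨z, hz, rfl⟩
    have h1 := hM0 z hz
    have h2 : ‖z‖ < 1 := by simpa using hz
    have h3 := norm_nonneg z
    have h4 := norm_nonneg (g' z)
    show (1 - ‖z‖) * ‖g' z‖ ≤ M0
    nlinarith
  have h0S : ‖g' 0‖ ∈ S := ⟨0, by simp, by simp⟩
  set M := sSup S with hM
  have hgM : ‖g' 0‖ ≤ M := le_csSup hSb h0S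
  have hε0 : 0 ≤ ε := (norm_nonneg _).trans (hc 0 (by simp))
  rcases (norm_nonneg (g' 0)).trans hgM |>.eq_or_lt with hM0' | hMpos
  · rw [← hM0'] at hgM
    exact hgM.trans (by positivity)
  obtain ⟨_, ⟨z0, hz0, rfl⟩, hlt⟩ := exists_lt_of_lt_csSup ⟨_, h0S⟩ (show 9 / 10 * M < sSup S by rw [← hM]; linarith)
  have hz0' : ‖z0‖ < 1 := by simpa using hz0
  set d := 1 - ‖z0‖ with hd
  have hd0 : 0 < d := by linarith
  set m := min 1 M with hm
  have hm0 : 0 < m := lt_min one_pos hMpos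
  have hmM : m / M ≤ 1 := by rw [div_le_one hMpos]; exact min_le_right _ _
  set r := d / 2 * (m / M) with hr
  have hr0 : 0 < r := by positivity
  have hrd : r ≤ d / 2 := by rw [hr]; exact mul_le_of_le_one_right (by positivity) hmM
  have hin : ∀ z ∈ ball (0 : ℂ) 1, ‖z0 + r * z‖ ≤ 1 - d / 2 := fun z hz => by
    have h1 : ‖z‖ < 1 := by simpa using hz
    have h2 := norm_add_le z0 (r * z)
    rw [norm_mul, Complex.norm_real, Real.norm_of_nonneg hr0.le] at h2
    have : r * ‖z‖ ≤ r * 1 := by gcongr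
    linarith
  have hin' : ∀ z ∈ ball (0 : ℂ) 1, z0 + r * z ∈ ball (0 : ℂ) 1 := fun z hz => by
    have := hin z hz
    simp only [mem_ball, dist_zero_right]; linarith
  have hG := hg.comp_affine z0 r hin'
  have hGb : ∀ z ∈ ball (0 : ℂ) 1, ‖r • g' (z0 + r * z)‖ ≤ m := fun z hz => by
    have h1 : (1 - ‖z0 + r * z‖) * ‖g' (z0 + r * z)‖ ≤ M := le_csSup hSb ⟨_, hin' z hz, rfl⟩
    have h2 := hin z hz
    have h3 : d / 2 * ‖g' (z0 + r * z)‖ ≤ M := le_trans (by gcongr; linarith) h1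
    rw [norm_smul, Real.norm_of_nonneg hr0.le]
    calc r * ‖g' (z0 + r * z)‖ = m / M * (d / 2 * ‖g' (z0 + r * z)‖) := by rw [hr]; ring
      _ ≤ m / M * M := by gcongr
      _ = m := by field_simp
  have hG0 : 9 / 20 * m ≤ ‖r • g' (z0 + r * 0)‖ := by
    rw [norm_smul, Real.norm_of_nonneg hr0.le, mul_zero, add_zero]
    calc 9 / 20 * m = 1 / 2 * (m / M) * (9 / 10 * M) := by field_simp; ring
      _ ≤ 1 / 2 * (m / M) * (d * ‖g' z0‖) := by gcongr
      _ = _ := by rw [hr]; ring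
  have hhol := hR _ _ m (min_le_left _ _) hG hGb
  have hsub : closedBall (0 : ℂ) δ ⊆ closedBall 0 (1 / 2) := closedBall_subset_closedBall hδ1
  have hsub' : closedBall (0 : ℂ) δ ⊆ ball 0 1 := hsub.trans (closedBall_subset_ball (by norm_num))
  have hbd : ‖r • g' (z0 + r * 0)‖ ≤ 2 * ε / δ + C1 * m * σ := by
    refine ContinuousLinearMap.opNorm_le_of_unit_norm (by positivity) fun e he => ?_
    have hde : (δ : ℂ) * e ∈ closedBall (0 : ℂ) δ := by
      simp [he, abs_of_pos hδ0]
    have h1 := Convex.norm_image_sub_le_of_norm_hasFDerivWithin_le' (C := C1 * m * σ)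
      (φ := r • g' (z0 + r * 0))
      (fun x hx => (hG.hasFDerivAt x (hsub' hx)).hasFDerivWithinAt)
      (fun x hx => by
        refine (hhol x (hsub hx) 0 (by simp)).trans ?_
        have : √‖x - 0‖ ≤ σ := by
          rw [sub_zero]; exact Real.sqrt_le_iff.2 ⟨hσ0.le, by simpa using hx⟩
        gcongr) (convex_closedBall (0 : ℂ) δ) (by simp [hδ0.le] : (0 : ℂ) ∈ closedBall (0 : ℂ) δ) hde
    rw [sub_zero, norm_mul, he, Complex.norm_real, Real.norm_of_nonneg hδ0.le, mul_one] at h1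
    have h2 := hc _ (hin' _ (hsub' hde))
    have h3 := hc _ (hin' 0 (by simp))
    have h4 : (r • g' (z0 + r * 0)) (δ * e) = δ • (r • g' (z0 + r * 0)) e := by
      rw [← map_smul, Complex.real_smul]
    have h5 : δ * ‖(r • g' (z0 + r * 0)) e‖ ≤ 2 * ε + C1 * m * σ * δ := by
      have h6 : δ * ‖(r • g' (z0 + r * 0)) e‖ = ‖(r • g' (z0 + r * 0)) (δ * e)‖ := by
        rw [h4, norm_smul, Real.norm_of_nonneg hδ0.le]
      rw [h6]
      have h7 := norm_sub_le (g (z0 + r * (δ * e)) - g (z0 + r * 0))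
        (g (z0 + r * (δ * e)) - g (z0 + r * 0) - (r • g' (z0 + r * 0)) (δ * e))
      have h8 := norm_sub_le (g (z0 + r * (δ * e)) - c) (g (z0 + r * 0) - c)
      rw [sub_sub_cancel] at h7
      rw [sub_sub_sub_cancel_right] at h8
      linarith
    have h9 : 2 * ε / δ + C1 * m * σ = (2 * ε + C1 * m * σ * δ) / δ := by field_simp
    rw [h9, le_div_iff₀ hδ0]
    linarith
  have hmε : m ≤ 8 / δ * ε := by
    have h1 : C1 * m * σ ≤ 1 / 5 * m := by nlinarith
    have h2 : 8 / δ * ε = 4 * (2 * ε / δ) := by ring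
    rw [h2]; linarith
  have hm1 : m < 1 := by
    refine hmε.trans_lt ?_
    calc 8 / δ * ε ≤ 8 / δ * (δ / 16) := by gcongr
      _ < 1 := by field_simp; norm_num
  have : m = M := by
    rcases min_choice 1 M with h | h
    · exact absurd h hm1.ne
    · exact h
  exact hgM.trans (this ▸ hmε)

lemma exists_bound_of_eventually_bound {X Y : Type*} [TopologicalSpace X] [NormedAddCommGroup Y] {K : Set X} (hK : IsCompact K)
    {f : X → Y} (h : ∀ z ∈ K, ∃ M, ∀ᶠ w in 𝓝 z, ‖f w‖ ≤ M) : ∃ M, ∀ z ∈ K, ‖f z‖ ≤ M := by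
  refine hK.induction_on (p := fun s => ∃ M, ∀ z ∈ s, ‖f z‖ ≤ M) ⟨0, by simp⟩
    (fun s t hst ⟨M, hM⟩ => ⟨M, fun z hz => hM z (hst hz)⟩) (fun s t ⟨M, hM⟩ ⟨M', hM'⟩ => ⟨max M M', ?_⟩) ?_
  · rintro z (hz | hz)
    exacts [(hM z hz).trans (le_max_left _ _), (hM' z hz).trans (le_max_right _ _)]
  · intro x hx
    obtain ⟨M, hM⟩ := h x hx
    exact ⟨_, mem_nhdsWithin_of_mem_nhds hM, M, fun z hz => hz⟩

/-- The derivative of a merely differentiable pseudo-holomorphic map is locally bounded. -/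
theorem JHolOn.eventually_bound [FiniteDimensional ℝ V] {J : V → V →L[ℝ] V} {DJ : V → V →L[ℝ] V →L[ℝ] V} {L : ℝ}
    (hJ : ∀ y, HasFDerivAt J (DJ y) y) (hJb : ∀ y, ‖J y‖ ≤ L) (hDJ : ∀ y, ‖DJ y‖ ≤ L)
    {U : Set ℂ} (hU : IsOpen U) {f : ℂ → V} {f' : ℂ → ℂ →L[ℝ] V} (hf : JHolOn J U f f') :
    ∀ z ∈ U, ∃ M, ∀ᶠ w in 𝓝 z, ‖f' w‖ ≤ M := by
  obtain ⟨C, ε0, hC, hε0, hgrad⟩ := JHolOn.exists_gradient_bound hJ hJb hDJ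
  set G : Set ℂ := {z | ∃ M, ∀ᶠ w in 𝓝 z, ‖f' w‖ ≤ M} with hG
  have hGo : IsOpen G := by
    rw [isOpen_iff_mem_nhds]
    rintro z ⟨M, hM⟩
    filter_upwards [eventually_eventually_nhds.2 hM] with w hw using ⟨M, hw⟩
  by_contra! hcon
  set S : Set ℂ := U ∩ Gᶜ with hS
  have hSne : S.Nonempty := by
    obtain ⟨z, hz, h⟩ := hcon
    exact ⟨z, hz, fun ⟨M, hM⟩ => h M (hM.mono fun w hw => not_lt.2 hw)⟩
  have hfc : ContinuousOn f U := fun z hz => (hf.hasFDerivAt z hz).continuousAt.continuousWithinAt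
  have hSlc : IsLocallyClosed S := hU.isLocallyClosed.inter hGo.isClosed_compl.isLocallyClosed
  have := hSlc.locallyCompactSpace
  have : Nonempty S := hSne.to_subtype
  set Sk : ℕ → Set S := fun k => {z | ∀ w ∈ U, ‖w - z‖ < ((k : ℝ) + 1)⁻¹ → ‖f w - f z‖ ≤ (k + 1) * ‖w - z‖} with hSk
  have hSkc : ∀ k, IsClosed (Sk k) := fun k => by
    have : Sk k = ⋂ w ∈ U, ({z : S | ((k : ℝ) + 1)⁻¹ ≤ ‖w - z‖} ∪ {z : S | ‖f w - f z‖ ≤ (k + 1) * ‖w - z‖}) := by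
      ext z
      simp only [hSk, mem_ofPred_eq, mem_iInter, mem_union]
      refine forall₂_congr fun w _ => ?_
      rw [imp_iff_not_or, not_lt]
    rw [this]
    have hfS : Continuous (fun z : S => f z) := hfc.comp_continuous continuous_subtype_val fun z => z.2.1
    refine isClosed_biInter fun w _ => (isClosed_le continuous_const (by fun_prop)).union
      (isClosed_le (continuous_const.sub hfS).norm (by fun_prop))
  have hcover : ⋃ k, Sk k = univ := by
    rw [eq_univ_iff_forall]
    intro z
    obtain ⟨c, hc⟩ := (hf.hasFDerivAt z z.2.1).isBigO_sub.bound
    obtain ⟨ρ, hρ, hb⟩ := Metric.eventually_nhds_iff.1 hc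
    obtain ⟨k, hk⟩ := exists_nat_ge (max c ρ⁻¹)
    refine mem_iUnion.2 ⟨k, fun w _ hw => ?_⟩
    have h1 : ((k : ℝ) + 1)⁻¹ < ρ := by
      rw [inv_lt_comm₀ (by positivity) hρ]
      linarith [(le_max_right _ _).trans hk]
    refine (hb (by rw [dist_eq_norm]; linarith)).trans ?_
    gcongr
    linarith [(le_max_left _ _).trans hk]
  obtain ⟨k, z1, hz1⟩ := nonempty_interior_of_iUnion_of_closed hSkc hcover
  rw [mem_interior_iff_mem_nhds, Metric.mem_nhds_iff] at hz1
  obtain ⟨ρ1, hρ1, hb1⟩ := hz1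
  obtain ⟨ρ2, hρ2, hb2⟩ := Metric.isOpen_iff.1 hU z1 z1.2.1
  set κ : ℝ := k + 1 with hκ
  have hκ0 : 0 < κ := by positivity
  obtain ⟨ρ, hρ0, h1, h2, h3, h4⟩ : ∃ ρ > 0, 3 * ρ ≤ ρ1 ∧ 2 * ρ ≤ ρ2 ∧ 3 * ρ ≤ κ⁻¹ ∧ 5 / 2 * κ * ρ ≤ ε0 := by
    refine ⟨min (min (ρ1 / 3) (ρ2 / 2)) (min (κ⁻¹ / 3) (ε0 / (5 / 2 * κ))), by positivity, ?_, ?_, ?_, ?_⟩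
    · linarith [min_le_left (min (ρ1 / 3) (ρ2 / 2)) (min (κ⁻¹ / 3) (ε0 / (5 / 2 * κ))), min_le_left (ρ1 / 3) (ρ2 / 2)]
    · linarith [min_le_left (min (ρ1 / 3) (ρ2 / 2)) (min (κ⁻¹ / 3) (ε0 / (5 / 2 * κ))), min_le_right (ρ1 / 3) (ρ2 / 2)]
    · linarith [min_le_right (min (ρ1 / 3) (ρ2 / 2)) (min (κ⁻¹ / 3) (ε0 / (5 / 2 * κ))), min_le_left (κ⁻¹ / 3) (ε0 / (5 / 2 * κ))]
    · have := (min_le_right (min (ρ1 / 3) (ρ2 / 2)) (min (κ⁻¹ / 3) (ε0 / (5 / 2 * κ)))).trans (min_le_right (κ⁻¹ / 3) (ε0 / (5 / 2 * κ)))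
      rwa [le_div_iff₀ (by positivity), mul_comm] at this
  have hLip : ∀ x ∈ S, dist x z1 < 3 * ρ → ∀ w ∈ U, ‖w - x‖ < κ⁻¹ → ‖f w - f x‖ ≤ κ * ‖w - x‖ := by
    intro x hx hxz
    exact hb1 (show (⟨x, hx⟩ : S) ∈ ball z1 ρ1 from mem_ball.2 (by rw [Subtype.dist_eq]; linarith))
  refine z1.2.2 ⟨max κ (5 * C * κ), Metric.eventually_nhds_iff.2 ⟨ρ, hρ0, fun w hw => ?_⟩⟩
  have hwU : w ∈ U := hb2 (mem_ball.2 (by linarith))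
  by_cases hwS : w ∈ S
  · refine ((hf.hasFDerivAt w hwU).le_of_lip' hκ0.le ?_).trans (le_max_left _ _)
    have e1 : ∀ᶠ x in 𝓝 w, ‖x - w‖ < κ⁻¹ := by
      filter_upwards [Metric.ball_mem_nhds w (inv_pos.2 hκ0)] with x hx
      rwa [← dist_eq_norm]
    filter_upwards [hU.mem_nhds hwU, e1] with x hx hxw
    exact hLip w hwS (by linarith) x hx hxw
  · refine le_trans ?_ (le_max_right _ _)
    set d := infDist w S with hd
    have hdρ : d < ρ := (infDist_le_dist_of_mem z1.2).trans_lt hw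
    have hd0 : 0 < d := by
      have hwG : w ∈ G := by by_contra h; exact hwS ⟨hwU, h⟩
      obtain ⟨η, hη, hb⟩ := Metric.isOpen_iff.1 hGo w hwG
      refine hη.trans_le ((le_infDist hSne).2 fun y hy => ?_)
      by_contra h
      exact hy.2 (hb (mem_ball'.2 (not_le.1 h)))
    obtain ⟨e, heS, hed⟩ := (infDist_lt_iff hSne).1 (show infDist w S < 2 * d by rw [← hd]; linarith)
    have hsub : ∀ x ∈ closedBall w (d / 2), x ∈ U ∧ x ∈ G := by
      intro x hx
      have hx' := mem_closedBall.1 hx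
      have hxU : x ∈ U := hb2 (mem_ball.2 (by linarith [dist_triangle x w z1]))
      refine ⟨hxU, ?_⟩
      by_contra h
      have := infDist_le_dist_of_mem (x := w) (show x ∈ S from ⟨hxU, h⟩)
      rw [dist_comm] at this
      linarith
    obtain ⟨M, hM⟩ := exists_bound_of_eventually_bound (isCompact_closedBall w (d / 2)) fun x hx => (hsub x hx).2
    have hmem : ∀ ζ ∈ ball (0 : ℂ) 1, w + (d / 2 : ℝ) * ζ ∈ closedBall w (d / 2) := fun ζ hζ => by
      have : ‖ζ‖ < 1 := by simpa using hζ
      rw [mem_closedBall, dist_eq_norm, add_sub_cancel_left, norm_mul, Complex.norm_real, Real.norm_of_nonneg (by positivity)]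
      exact mul_le_of_le_one_right (by positivity) this.le
    have hg := hf.comp_affine w (d / 2) (t := ball 0 1) fun ζ hζ => (hsub _ (hmem ζ hζ)).1
    have h5 := hgrad _ _ (d / 2 * M) (f e) (κ * (5 / 2 * d)) hg (fun ζ hζ => by
      rw [norm_smul, Real.norm_of_nonneg (by positivity)]
      gcongr
      exact hM _ (hmem ζ hζ)) (fun ζ hζ => by
        have hx := hmem ζ hζ
        set x := w + (d / 2 : ℝ) * ζ
        have hx' := mem_closedBall.1 hx
        have hxe : ‖x - e‖ ≤ 5 / 2 * d := by
          rw [← dist_eq_norm]; linarith [dist_triangle x w e]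
        refine (hLip e heS ?_ x (hsub x hx).1 (by linarith)).trans (by gcongr)
        rw [dist_comm] at hed
        linarith [dist_triangle e w z1]) (by nlinarith)
    rw [norm_smul, Real.norm_of_nonneg (by positivity), mul_zero, add_zero] at h5
    have h6 : d / 2 * ‖f' w‖ ≤ d / 2 * (5 * C * κ) := by linarith
    exact le_of_mul_le_mul_left h6 (by positivity)

/-- Pseudo-holomorphic maps have Hölder continuous derivative. -/
theorem JHolOn.deriv_holder [FiniteDimensional ℝ V] {J : V → V →L[ℝ] V} {DJ : V → V →L[ℝ] V →L[ℝ] V} {L : ℝ}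
    (hJ : ∀ y, HasFDerivAt J (DJ y) y) (hJb : ∀ y, ‖J y‖ ≤ L) (hDJ : ∀ y, ‖DJ y‖ ≤ L)
    {R : ℝ} (hR : 1 < R) {f : ℂ → V} {f' : ℂ → ℂ →L[ℝ] V} (hf : JHolOn J (ball 0 R) f f') :
    ∃ C, ∀ z ∈ closedBall (0 : ℂ) 1, ∀ w ∈ closedBall (0 : ℂ) 1, ‖f' z - f' w‖ ≤ C * √‖z - w‖ := by
  obtain ⟨C1, hC1, hreg⟩ := JHolOn.exists_deriv_holder hJ hJb hDJ
  set ρ := (R - 1) / 2 with hρ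
  have hρ0 : 0 < ρ := by linarith
  obtain ⟨M, hM⟩ := exists_bound_of_eventually_bound (isCompact_closedBall (0 : ℂ) (1 + ρ)) fun z hz =>
    hf.eventually_bound hJ hJb hDJ isOpen_ball z (closedBall_subset_ball (by linarith) hz)
  have hM0 : 0 ≤ M := (norm_nonneg _).trans (hM 0 (by simp; linarith))
  set s := min ρ (M + 1)⁻¹ with hs
  have hs0 : 0 < s := by positivity
  have hsρ : s ≤ ρ := min_le_left _ _
  have hsM : s * M ≤ 1 := by
    have : s * (M + 1) ≤ 1 := by
      rw [← le_div_iff₀ (by positivity), one_div]; exact min_le_right _ _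
    linarith
  have hmem : ∀ z ∈ closedBall (0 : ℂ) 1, ∀ ζ ∈ ball (0 : ℂ) 1, z + s * ζ ∈ closedBall (0 : ℂ) (1 + ρ) := by
    intro z hz ζ hζ
    simp only [mem_closedBall, mem_ball, dist_zero_right] at *
    refine (norm_add_le _ _).trans (add_le_add hz ?_)
    rw [norm_mul, Complex.norm_real, Real.norm_of_nonneg hs0.le]
    exact (mul_le_of_le_one_right hs0.le hζ.le).trans hsρ
  refine ⟨C1 * s⁻¹ * √s⁻¹ + 2 * M / √(s / 2), fun z hz w hw => ?_⟩
  rw [add_mul]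
  rcases le_total ‖z - w‖ (s / 2) with h | h
  · refine le_add_of_le_of_nonneg ?_ (by positivity)
    have hg := hf.comp_affine z s (t := ball 0 1) fun ζ hζ => closedBall_subset_ball (by linarith) (hmem z hz ζ hζ)
    have h1 := hreg _ _ 1 le_rfl hg (fun ζ hζ => by
      rw [norm_smul, Real.norm_of_nonneg hs0.le]
      refine le_trans ?_ hsM
      gcongr
      exact hM _ (hmem z hz ζ hζ)) 0 (by simp) ((s⁻¹ : ℝ) * (w - z)) (by
        rw [mem_closedBall, dist_zero_right, norm_mul, Complex.norm_real, Real.norm_of_nonneg (by positivity), norm_sub_rev,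
          inv_mul_le_iff₀ hs0]
        linarith)
    have h2 : z + s * ((s⁻¹ : ℝ) * (w - z)) = w := by
      rw [← mul_assoc, ← Complex.ofReal_mul, mul_inv_cancel₀ hs0.ne']; simp
    rw [h2, mul_zero, add_zero, ← smul_sub, norm_smul, Real.norm_of_nonneg hs0.le, zero_sub, norm_neg, norm_mul,
      Complex.norm_real, Real.norm_of_nonneg (by positivity), Real.sqrt_mul (by positivity), norm_sub_rev w z, mul_one] at h1
    calc ‖f' z - f' w‖ = s⁻¹ * (s * ‖f' z - f' w‖) := by field_simp
      _ ≤ s⁻¹ * (C1 * (√s⁻¹ * √‖z - w‖)) := by gcongr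
      _ = _ := by ring
  · refine le_add_of_nonneg_of_le (by positivity) ?_
    have h1 : ∀ z ∈ closedBall (0 : ℂ) 1, ‖f' z‖ ≤ M := fun z hz => hM z (closedBall_subset_closedBall (by linarith) hz)
    calc ‖f' z - f' w‖ ≤ M + M := (norm_sub_le _ _).trans (add_le_add (h1 z hz) (h1 w hw))
      _ = 2 * M / √(s / 2) * √(s / 2) := by field_simp; ring
      _ ≤ _ := by gcongr

end

section

open MeasureTheory

variable {G G₁ G₂ G₃ : Type*} [NormedAddCommGroup G] [NormedSpace ℝ G] [NormedAddCommGroup G₁] [NormedSpace ℝ G₁]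
  [NormedAddCommGroup G₂] [NormedSpace ℝ G₂] [NormedAddCommGroup G₃] [NormedSpace ℝ G₃]

open Classical in
/-- The family of values and `1/2`-Hölder quotients on the closed unit disc of a map `ℂ → G`. -/
def holderFamily (u : ℂ → G) : ℂ ⊕ ℂ × ℂ → G
  | .inl z => if z ∈ closedBall (0 : ℂ) 1 then u z else 0
  | .inr p => if p.1 ∈ closedBall (0 : ℂ) 1 ∧ p.2 ∈ closedBall (0 : ℂ) 1 then (√‖p.1 - p.2‖)⁻¹ • (u p.1 - u p.2) else 0

lemma holderFamily_add (u v : ℂ → G) : holderFamily (fun z => u z + v z) = holderFamily u + holderFamily v := by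
  ext (z | p)
  · simp only [holderFamily, Pi.add_apply]; split_ifs <;> simp
  · simp only [holderFamily, Pi.add_apply]; split_ifs
    · module
    · simp

lemma holderFamily_smul (c : ℝ) (u : ℂ → G) : holderFamily (fun z => c • u z) = c • holderFamily u := by
  ext (z | p)
  · simp only [holderFamily, Pi.smul_apply]; split_ifs <;> simp
  · simp only [holderFamily, Pi.smul_apply]; split_ifs
    · module
    · simp

variable (G) in
/-- The `1/2`-Hölder maps from the closed unit disc to `G`, extended by zero, inside a space of bounded families. -/
def holderSubmodule : Submodule ℝ (lp (fun _ : ℂ ⊕ ℂ × ℂ => G) ⊤) where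
  carrier := {F | (F : ℂ ⊕ ℂ × ℂ → G) = holderFamily fun z => F (.inl z)}
  zero_mem' := by
    show ((0 : lp (fun _ : ℂ ⊕ ℂ × ℂ => G) ⊤) : ℂ ⊕ ℂ × ℂ → G) = _
    rw [lp.coeFn_zero]
    have := holderFamily_smul (0 : ℝ) (0 : ℂ → G)
    simp only [zero_smul] at this
    exact this.symm
  add_mem' {a b} ha hb := by
    show ((a + b : lp (fun _ : ℂ ⊕ ℂ × ℂ => G) ⊤) : ℂ ⊕ ℂ × ℂ → G) = _
    rw [lp.coeFn_add]
    simp only [Pi.add_apply]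
    rw [holderFamily_add, ← ha, ← hb]
  smul_mem' c a ha := by
    show ((c • a : lp (fun _ : ℂ ⊕ ℂ × ℂ => G) ⊤) : ℂ ⊕ ℂ × ℂ → G) = _
    rw [lp.coeFn_smul]
    simp only [Pi.smul_apply]
    rw [holderFamily_smul, ← ha]

variable (G) in
/-- The Banach space of `1/2`-Hölder maps from the closed unit disc to `G`, extended by zero. -/
def HolderSp : Type _ := holderSubmodule G

instance : NormedAddCommGroup (HolderSp G) := inferInstanceAs (NormedAddCommGroup (holderSubmodule G))

instance : NormedSpace ℝ (HolderSp G) := inferInstanceAs (NormedSpace ℝ (holderSubmodule G))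

namespace HolderSp

/-- The value of an element of `HolderSp G` at a point. -/
def ev (z : ℂ) : HolderSp G →L[ℝ] G :=
  (lp.evalCLM ℝ (fun _ : ℂ ⊕ ℂ × ℂ => G) ⊤ (.inl z)).comp (holderSubmodule G).subtypeL

lemma coe_eq (u : HolderSp G) : (u.1 : ℂ ⊕ ℂ × ℂ → G) = holderFamily fun z => ev z u := u.2

instance [CompleteSpace G] : CompleteSpace (HolderSp G) := by
  have hc : IsClosed ((holderSubmodule G : Submodule ℝ (lp (fun _ : ℂ ⊕ ℂ × ℂ => G) ⊤)) : Set (lp (fun _ : ℂ ⊕ ℂ × ℂ => G) ⊤)) := by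
    have hev : ∀ i, Continuous fun F : lp (fun _ : ℂ ⊕ ℂ × ℂ => G) ⊤ => (F : ℂ ⊕ ℂ × ℂ → G) i := fun i =>
      (lp.evalCLM ℝ (fun _ : ℂ ⊕ ℂ × ℂ => G) ⊤ i).continuous
    have : ((holderSubmodule G : Submodule ℝ (lp (fun _ : ℂ ⊕ ℂ × ℂ => G) ⊤)) : Set (lp (fun _ : ℂ ⊕ ℂ × ℂ => G) ⊤)) =
        ⋂ i, {F : lp (fun _ : ℂ ⊕ ℂ × ℂ => G) ⊤ | (F : ℂ ⊕ ℂ × ℂ → G) i = holderFamily (fun z => F (.inl z)) i} := by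
      ext F
      simp only [mem_iInter, mem_ofPred_eq]
      exact funext_iff
    rw [this]
    refine isClosed_iInter fun i => isClosed_eq (hev i) ?_
    rcases i with z | p
    · simp only [holderFamily]; split_ifs
      exacts [hev _, continuous_const]
    · simp only [holderFamily]; split_ifs
      exacts [((hev _).sub (hev _)).const_smul _, continuous_const]
  exact hc.completeSpace_coe

lemma norm_ev_le (u : HolderSp G) (z : ℂ) : ‖ev z u‖ ≤ ‖u‖ := lp.norm_apply_le_norm ENNReal.top_ne_zero u.1 (.inl z)

lemma norm_ev_sub_le (u : HolderSp G) {z w : ℂ} (hz : z ∈ closedBall (0 : ℂ) 1) (hw : w ∈ closedBall (0 : ℂ) 1) :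
    ‖ev z u - ev w u‖ ≤ ‖u‖ * √‖z - w‖ := by
  have h := lp.norm_apply_le_norm ENNReal.top_ne_zero u.1 (.inr (z, w))
  rw [coe_eq] at h
  simp only [holderFamily, if_pos (And.intro hz hw)] at h
  rcases eq_or_ne z w with rfl | hne
  · simp
  have h0 : 0 < √‖z - w‖ := Real.sqrt_pos.2 (norm_pos_iff.2 (sub_ne_zero.2 hne))
  rw [norm_smul, norm_inv, Real.norm_of_nonneg h0.le, inv_mul_le_iff₀ h0, mul_comm] at h
  exact h

lemma norm_le {u : HolderSp G} {A : ℝ} (hA : 0 ≤ A) (hb : ∀ z ∈ closedBall (0 : ℂ) 1, ‖ev z u‖ ≤ A)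
    (hh : ∀ z ∈ closedBall (0 : ℂ) 1, ∀ w ∈ closedBall (0 : ℂ) 1, ‖ev z u - ev w u‖ ≤ A * √‖z - w‖) : ‖u‖ ≤ A := by
  refine lp.norm_le_of_forall_le (f := u.1) hA fun i => ?_
  rw [coe_eq]
  rcases i with z | p
  · simp only [holderFamily]; split_ifs with h
    exacts [hb z h, by simpa using hA]
  · simp only [holderFamily]; split_ifs with h
    · rw [norm_smul, norm_inv, Real.norm_of_nonneg (Real.sqrt_nonneg _)]
      rcases eq_or_ne p.1 p.2 with he | hne
      · simp [he, hA]
      have h0 : 0 < √‖p.1 - p.2‖ := Real.sqrt_pos.2 (norm_pos_iff.2 (sub_ne_zero.2 hne))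
      rw [inv_mul_le_iff₀ h0, mul_comm]
      exact hh _ h.1 _ h.2
    · simpa using hA

/-- Build an element of `HolderSp G` from a map which is bounded and Hölder continuous on the disc. -/
lemma exists_ev_eq (u : ℂ → G) {A B : ℝ} (hb : ∀ z ∈ closedBall (0 : ℂ) 1, ‖u z‖ ≤ A)
    (hh : ∀ z ∈ closedBall (0 : ℂ) 1, ∀ w ∈ closedBall (0 : ℂ) 1, ‖u z - u w‖ ≤ B * √‖z - w‖) :
    ∃ U : HolderSp G, ∀ z ∈ closedBall (0 : ℂ) 1, ev z U = u z := by
  have hmem : Memℓp (E := fun _ => G) (holderFamily u) ⊤ := by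
    refine memℓp_infty ⟨max (max A B) 0, ?_⟩
    rintro _ ⟨i, rfl⟩
    rcases i with z | p
    · simp only [holderFamily]; split_ifs with h
      · exact (hb z h).trans ((le_max_left _ _).trans (le_max_left _ _))
      · simp
    · simp only [holderFamily]; split_ifs with h
      · rw [norm_smul, norm_inv, Real.norm_of_nonneg (Real.sqrt_nonneg _)]
        rcases eq_or_ne p.1 p.2 with he | hne
        · simp [he]
        have h0 : 0 < √‖p.1 - p.2‖ := Real.sqrt_pos.2 (norm_pos_iff.2 (sub_ne_zero.2 hne))
        rw [inv_mul_le_iff₀ h0, mul_comm]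
        refine (hh _ h.1 _ h.2).trans ?_
        gcongr
        exact (le_max_right _ _).trans (le_max_left _ _)
      · simp
  refine ⟨⟨⟨holderFamily u, hmem⟩, ?_⟩, fun z hz => ?_⟩
  · show holderFamily u = holderFamily fun z => holderFamily u (.inl z)
    ext (z | p)
    · simp only [holderFamily]; split_ifs <;> rfl
    · by_cases h : p.1 ∈ closedBall (0 : ℂ) 1 ∧ p.2 ∈ closedBall (0 : ℂ) 1
      · simp only [holderFamily, if_pos h, if_pos h.1, if_pos h.2]
      · simp only [holderFamily, if_neg h]
  · show holderFamily u (.inl z) = u z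
    simp only [holderFamily, if_pos hz]

lemma ext_ev {u v : HolderSp G} (h : ∀ z ∈ closedBall (0 : ℂ) 1, ev z u = ev z v) : u = v := by
  rw [← sub_eq_zero, ← norm_le_zero_iff]
  refine norm_le le_rfl (fun z hz => ?_) fun z hz w hw => ?_
  · rw [map_sub, h z hz]; simp
  · simp only [map_sub, h z hz, h w hw]; simp

lemma holder_bilin (B : G₁ →L[ℝ] G₂ →L[ℝ] G₃) (u : HolderSp G₁) (v : HolderSp G₂) {z w : ℂ}
    (hz : z ∈ closedBall (0 : ℂ) 1) (hw : w ∈ closedBall (0 : ℂ) 1) :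
    ‖B (ev z u) (ev z v) - B (ev w u) (ev w v)‖ ≤ 2 * ‖B‖ * ‖u‖ * ‖v‖ * √‖z - w‖ := by
  have h1 : B (ev z u) (ev z v) - B (ev w u) (ev w v) = B (ev z u - ev w u) (ev z v) + B (ev w u) (ev z v - ev w v) := by
    simp only [map_sub, _root_.sub_apply]; abel
  rw [h1]
  have h2 : ‖B (ev z u - ev w u) (ev z v)‖ ≤ ‖B‖ * (‖u‖ * √‖z - w‖) * ‖v‖ :=
    (B.le_opNorm₂ _ _).trans (by gcongr; exacts [norm_ev_sub_le u hz hw, norm_ev_le v z])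
  have h3 : ‖B (ev w u) (ev z v - ev w v)‖ ≤ ‖B‖ * ‖u‖ * (‖v‖ * √‖z - w‖) :=
    (B.le_opNorm₂ _ _).trans (by gcongr; exacts [norm_ev_le u w, norm_ev_sub_le v hz hw])
  refine (norm_add_le _ _).trans ?_
  linarith

lemma exists_bilin (B : G₁ →L[ℝ] G₂ →L[ℝ] G₃) (u : HolderSp G₁) (v : HolderSp G₂) :
    ∃ U : HolderSp G₃, ∀ z ∈ closedBall (0 : ℂ) 1, ev z U = B (ev z u) (ev z v) :=
  exists_ev_eq _ (A := ‖B‖ * ‖u‖ * ‖v‖)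
    (fun z _ => (B.le_opNorm₂ _ _).trans (by gcongr; exacts [norm_ev_le u z, norm_ev_le v z]))
    (fun _ hz _ hw => holder_bilin B u v hz hw)

/-- Pointwise application of a continuous bilinear map, as a plain function. -/
def bilinFun (B : G₁ →L[ℝ] G₂ →L[ℝ] G₃) (u : HolderSp G₁) (v : HolderSp G₂) : HolderSp G₃ :=
  (exists_bilin B u v).choose

lemma ev_bilinFun (B : G₁ →L[ℝ] G₂ →L[ℝ] G₃) (u : HolderSp G₁) (v : HolderSp G₂) {z : ℂ} (hz : z ∈ closedBall (0 : ℂ) 1) :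
    ev z (bilinFun B u v) = B (ev z u) (ev z v) := (exists_bilin B u v).choose_spec z hz

/-- Pointwise application of a continuous bilinear map. -/
def bilin (B : G₁ →L[ℝ] G₂ →L[ℝ] G₃) : HolderSp G₁ →L[ℝ] HolderSp G₂ →L[ℝ] HolderSp G₃ :=
  LinearMap.mkContinuous₂
    (LinearMap.mk₂ ℝ (bilinFun B)
      (fun u u' v => ext_ev fun z hz => by
        rw [map_add]; simp only [ev_bilinFun B _ _ hz, map_add, _root_.add_apply])
      (fun c u v => ext_ev fun z hz => by
        rw [map_smul]; simp only [ev_bilinFun B _ _ hz, map_smul, _root_.smul_apply])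
      (fun u v v' => ext_ev fun z hz => by
        rw [map_add]; simp only [ev_bilinFun B _ _ hz, map_add])
      (fun c u v => ext_ev fun z hz => by
        rw [map_smul]; simp only [ev_bilinFun B _ _ hz, map_smul])) (2 * ‖B‖) fun u v => by
    refine norm_le (by positivity) (fun z hz => ?_) fun z hz w hw => ?_
    · rw [LinearMap.mk₂_apply, ev_bilinFun B _ _ hz]
      have h1 : ‖B (ev z u) (ev z v)‖ ≤ ‖B‖ * ‖u‖ * ‖v‖ :=
        (B.le_opNorm₂ _ _).trans (by gcongr; exacts [norm_ev_le u z, norm_ev_le v z])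
      have : 0 ≤ ‖B‖ * ‖u‖ * ‖v‖ := by positivity
      linarith
    · rw [LinearMap.mk₂_apply, ev_bilinFun B _ _ hz, ev_bilinFun B _ _ hw]
      exact holder_bilin B u v hz hw

lemma ev_bilin (B : G₁ →L[ℝ] G₂ →L[ℝ] G₃) (u : HolderSp G₁) (v : HolderSp G₂) {z : ℂ} (hz : z ∈ closedBall (0 : ℂ) 1) :
    ev z (bilin B u v) = B (ev z u) (ev z v) := ev_bilinFun B u v hz

lemma exists_const (x : G) : ∃ U : HolderSp G, ∀ z ∈ closedBall (0 : ℂ) 1, ev z U = x :=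
  exists_ev_eq (fun _ => x) (fun _ _ => le_rfl) (B := 0) (by simp)

/-- Pointwise application of a continuous linear map. -/
def map (ℓ : G₁ →L[ℝ] G₂) : HolderSp G₁ →L[ℝ] HolderSp G₂ :=
  bilin (ContinuousLinearMap.id ℝ (G₁ →L[ℝ] G₂)) (exists_const ℓ).choose

lemma ev_map (ℓ : G₁ →L[ℝ] G₂) (u : HolderSp G₁) {z : ℂ} (hz : z ∈ closedBall (0 : ℂ) 1) :
    ev z (map ℓ u) = ℓ (ev z u) := by
  rw [map, ev_bilin _ _ _ hz, (exists_const ℓ).choose_spec z hz]; rfl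

/-- Hölder maps on the disc extend to compactly supported Hölder maps on the plane. -/
lemma exists_extension (u : HolderSp G) : ∃ (U : ℂ → G) (M : ℝ), (∀ z, ‖U z‖ ≤ M) ∧ (∀ z w, ‖U z - U w‖ ≤ M * √‖z - w‖) ∧
    (∀ z, 2 < ‖z‖ → U z = 0) ∧ ∀ z ∈ closedBall (0 : ℂ) 1, U z = ev z u := by
  set a : ℂ → ℝ := fun z => max 1 ‖z‖ with ha
  have ha1 : ∀ z, 1 ≤ a z := fun z => le_max_left _ _
  have ha0 : ∀ z, 0 < a z := fun z => one_pos.trans_le (ha1 z)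
  have hal : ∀ z w, |a z - a w| ≤ ‖z - w‖ := fun z w =>
    (abs_max_sub_max_le_max 1 ‖z‖ 1 ‖w‖).trans (by simpa using abs_norm_sub_norm_le z w)
  set ρ : ℂ → ℂ := fun z => (a z)⁻¹ • z with hρ
  have hρK : ∀ z, ρ z ∈ closedBall (0 : ℂ) 1 := fun z => by
    rw [mem_closedBall_zero_iff, hρ]
    simp only
    rw [norm_smul, norm_inv, Real.norm_of_nonneg (ha0 z).le, inv_mul_le_iff₀ (ha0 z), mul_one]
    exact le_max_right _ _
  have hρl : ∀ z w, ‖ρ z - ρ w‖ ≤ 2 * ‖z - w‖ := fun z w => by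
    have e : a z • (ρ z - ρ w) = (z - w) + (a w - a z) • ρ w := by
      have h1 : a z • ρ z = z := smul_inv_smul₀ (ha0 z).ne' z
      have h2 : a w • ρ w = w := smul_inv_smul₀ (ha0 w).ne' w
      rw [smul_sub, sub_smul, h1, h2]; abel
    have h1 : ‖a z • (ρ z - ρ w)‖ ≤ ‖z - w‖ + ‖z - w‖ * 1 := by
      rw [e]
      refine (norm_add_le _ _).trans ?_
      rw [norm_smul, Real.norm_eq_abs, abs_sub_comm]
      gcongr
      exacts [hal z w, mem_closedBall_zero_iff.1 (hρK w)]
    rw [norm_smul, Real.norm_of_nonneg (ha0 z).le] at h1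
    nlinarith [ha1 z, norm_nonneg (ρ z - ρ w)]
  set χ : ℂ → ℝ := fun z => max 0 (min 1 (2 - ‖z‖)) with hχ
  have hχ0 : ∀ z, 0 ≤ χ z := fun z => le_max_left _ _
  have hχ1 : ∀ z, χ z ≤ 1 := fun z => max_le zero_le_one (min_le_left _ _)
  have hχl : ∀ z w, |χ z - χ w| ≤ √‖z - w‖ := fun z w => by
    have h1 : |χ z - χ w| ≤ ‖z - w‖ := by
      refine (abs_max_sub_max_le_max _ _ _ _).trans (max_le (by simp) ?_)
      refine (abs_min_sub_min_le_max _ _ _ _).trans (max_le (by simp) ?_)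
      rw [show 2 - ‖z‖ - (2 - ‖w‖) = -(‖z‖ - ‖w‖) by ring, abs_neg]
      exact abs_norm_sub_norm_le z w
    have h2 : |χ z - χ w| ≤ 1 := abs_le.2 ⟨by linarith [hχ0 z, hχ1 w], by linarith [hχ0 w, hχ1 z]⟩
    have h3 := le_mul_sqrt (abs_nonneg _) h2
    rw [Real.sqrt_one, one_mul] at h3
    exact h3.trans (Real.sqrt_le_sqrt h1)
  refine ⟨fun z => χ z • ev (ρ z) u, 3 * ‖u‖, fun z => ?_, fun z w => ?_, fun z hz => ?_, fun z hz => ?_⟩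
  · rw [norm_smul, Real.norm_of_nonneg (hχ0 z)]
    nlinarith [hχ0 z, hχ1 z, norm_ev_le u (ρ z), norm_nonneg (ev (ρ z) u)]
  · have e : χ z • ev (ρ z) u - χ w • ev (ρ w) u = χ z • (ev (ρ z) u - ev (ρ w) u) + (χ z - χ w) • ev (ρ w) u := by module
    simp only
    rw [e]
    have h1 : ‖χ z • (ev (ρ z) u - ev (ρ w) u)‖ ≤ 1 * (‖u‖ * (2 * √‖z - w‖)) := by
      rw [norm_smul, Real.norm_of_nonneg (hχ0 z)]
      refine mul_le_mul (hχ1 z) ((norm_ev_sub_le u (hρK z) (hρK w)).trans ?_) (norm_nonneg _) zero_le_one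
      gcongr
      rw [Real.sqrt_le_left (by positivity), mul_pow, Real.sq_sqrt (norm_nonneg _)]
      linarith [hρl z w, norm_nonneg (z - w)]
    have h2 : ‖(χ z - χ w) • ev (ρ w) u‖ ≤ √‖z - w‖ * ‖u‖ := by
      rw [norm_smul, Real.norm_eq_abs]
      gcongr
      exacts [hχl z w, norm_ev_le u _]
    linarith [norm_add_le (χ z • (ev (ρ z) u - ev (ρ w) u)) ((χ z - χ w) • ev (ρ w) u)]
  · have : χ z = 0 := max_eq_left ((min_le_right _ _).trans (by linarith))
    simp only [this, zero_smul]
  · rw [mem_closedBall_zero_iff] at hz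
    have h1 : a z = 1 := max_eq_left hz
    have h2 : χ z = 1 := by rw [hχ]; simp only; rw [min_eq_left (by linarith), max_eq_right zero_le_one]
    simp only [h2, hρ, h1, inv_one, one_smul]

end HolderSp

end

section

open MeasureTheory

variable {V G : Type*} [NormedAddCommGroup V] [NormedSpace ℝ V] [NormedAddCommGroup G] [NormedSpace ℝ G]

/-- `φ` is bounded by `L` and differentiable with derivative `φ'` bounded by `L` and `L`-Lipschitz. -/
structure LipC1 (L : ℝ) (φ : V → G) (φ' : V → V →L[ℝ] G) : Prop where
  norm_le : ∀ x, ‖φ x‖ ≤ L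
  hasFDerivAt : ∀ x, HasFDerivAt φ (φ' x) x
  norm_deriv_le : ∀ x, ‖φ' x‖ ≤ L
  norm_deriv_sub_le : ∀ x y, ‖φ' x - φ' y‖ ≤ L * ‖x - y‖

namespace LipC1

variable {L : ℝ} {φ : V → G} {φ' : V → V →L[ℝ] G} {φ'' : V → V →L[ℝ] V →L[ℝ] G}

lemma nonneg (h : LipC1 L φ φ') : 0 ≤ L := (norm_nonneg _).trans (h.norm_le 0)

lemma norm_sub_le (h : LipC1 L φ φ') (x y : V) : ‖φ x - φ y‖ ≤ L * ‖x - y‖ :=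
  convex_univ.norm_image_sub_le_of_norm_hasFDerivWithin_le (fun x _ => (h.hasFDerivAt x).hasFDerivWithinAt)
    (fun x _ => h.norm_deriv_le x) (mem_univ y) (mem_univ x)

lemma hasDerivAt_line (h : LipC1 L φ φ') (b k : V) (t : ℝ) : HasDerivAt (fun t : ℝ => φ (b + t • k)) (φ' (b + t • k) k) t := by
  have h1 : HasDerivAt (fun t : ℝ => b + t • k) k t := by
    simpa using ((hasDerivAt_id t).smul_const k).const_add b
  exact (h.hasFDerivAt _).comp_hasDerivAt t h1

/-- Estimate of a four-point difference. -/
lemma four_point (h : LipC1 L φ φ') (b k b' k' : V) :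
    ‖(φ (b + k) - φ b) - (φ (b' + k') - φ b')‖ ≤ L * ‖k - k'‖ + L * (‖b - b'‖ + ‖k - k'‖) * ‖k'‖ := by
  have := norm_image_sub_le_of_norm_deriv_le_segment_01'
    (f := fun t : ℝ => φ (b + t • k) - φ (b' + t • k'))
    (f' := fun t => φ' (b + t • k) k - φ' (b' + t • k') k') (C := L * ‖k - k'‖ + L * (‖b - b'‖ + ‖k - k'‖) * ‖k'‖)
    (fun t _ => ((h.hasDerivAt_line b k t).sub (h.hasDerivAt_line b' k' t)).hasDerivWithinAt) (fun t ht => ?_)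
  · refine le_trans (le_of_eq ?_) this
    simp only [one_smul, zero_smul, add_zero]
    congr 1; abel
  · have e : φ' (b + t • k) k - φ' (b' + t • k') k' = φ' (b + t • k) (k - k') + (φ' (b + t • k) - φ' (b' + t • k')) k' := by
      simp only [map_sub, _root_.sub_apply]; abel
    rw [e]
    refine (norm_add_le _ _).trans (add_le_add ?_ ?_)
    · exact ContinuousLinearMap.le_of_opNorm_le _ (h.norm_deriv_le _) _
    · refine ContinuousLinearMap.le_of_opNorm_le _ ((h.norm_deriv_sub_le _ _).trans ?_) _
      have hL := h.nonneg
      gcongr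
      rw [show b + t • k - (b' + t • k') = (b - b') + t • (k - k') by module]
      refine (norm_add_le _ _).trans (add_le_add le_rfl ?_)
      rw [norm_smul, Real.norm_of_nonneg ht.1]
      exact mul_le_of_le_one_left (norm_nonneg _) ht.2.le

lemma taylor (h : LipC1 L φ φ') (b k : V) : ‖φ (b + k) - φ b - φ' b k‖ ≤ L * ‖k‖ ^ 2 := by
  have := norm_image_sub_le_of_norm_deriv_le_segment_01'
    (f := fun t : ℝ => φ (b + t • k) - t • φ' b k)
    (f' := fun t => φ' (b + t • k) k - φ' b k) (C := L * ‖k‖ ^ 2)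
    (fun t _ => ((h.hasDerivAt_line b k t).sub (by simpa using (hasDerivAt_id t).smul_const (φ' b k))).hasDerivWithinAt) (fun t ht => ?_)
  · refine le_trans (le_of_eq ?_) this
    simp only [one_smul, zero_smul, add_zero]
    congr 1; abel
  · rw [← _root_.sub_apply, pow_two, ← mul_assoc]
    refine ContinuousLinearMap.le_of_opNorm_le _ ((h.norm_deriv_sub_le _ _).trans ?_) _
    have hL := h.nonneg
    gcongr
    rw [add_sub_cancel_left, norm_smul, Real.norm_of_nonneg ht.1]
    exact mul_le_of_le_one_left (norm_nonneg _) ht.2.le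

lemma taylor_sub (h : LipC1 L φ φ') (h' : LipC1 L φ' φ'') (b k b' k' : V) :
    ‖(φ (b + k) - φ b - φ' b k) - (φ (b' + k') - φ b' - φ' b' k')‖ ≤
      L * ‖k‖ * ‖k - k'‖ + (L * ‖k - k'‖ + L * (‖b - b'‖ + ‖k - k'‖) * ‖k'‖) * ‖k'‖ := by
  have hL := h.nonneg
  have := norm_image_sub_le_of_norm_deriv_le_segment_01'
    (f := fun t : ℝ => (φ (b + t • k) - t • φ' b k) - (φ (b' + t • k') - t • φ' b' k'))
    (f' := fun t => (φ' (b + t • k) k - φ' b k) - (φ' (b' + t • k') k' - φ' b' k'))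
    (C := L * ‖k‖ * ‖k - k'‖ + (L * ‖k - k'‖ + L * (‖b - b'‖ + ‖k - k'‖) * ‖k'‖) * ‖k'‖)
    (fun t _ => (((h.hasDerivAt_line b k t).sub (by simpa using (hasDerivAt_id t).smul_const (φ' b k))).sub
      ((h.hasDerivAt_line b' k' t).sub (by simpa using (hasDerivAt_id t).smul_const (φ' b' k')))).hasDerivWithinAt) (fun t ht => ?_)
  · refine le_trans (le_of_eq ?_) this
    simp only [one_smul, zero_smul, add_zero]
    congr 1; abel
  · have hk : ∀ v : V, ‖t • v‖ ≤ ‖v‖ := fun v => by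
      rw [norm_smul, Real.norm_of_nonneg ht.1]
      exact mul_le_of_le_one_left (norm_nonneg _) ht.2.le
    have e : (φ' (b + t • k) k - φ' b k) - (φ' (b' + t • k') k' - φ' b' k') = (φ' (b + t • k) - φ' b) (k - k') +
        ((φ' (b + t • k) - φ' b) - (φ' (b' + t • k') - φ' b')) k' := by
      simp only [map_sub, _root_.sub_apply]; abel
    rw [e]
    refine (norm_add_le _ _).trans (add_le_add ?_ ?_)
    · refine ContinuousLinearMap.le_of_opNorm_le _ ((h'.norm_sub_le _ _).trans ?_) _
      rw [add_sub_cancel_left]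
      gcongr
      exact hk k
    · refine ContinuousLinearMap.le_of_opNorm_le _ ((h'.four_point _ _ _ _).trans ?_) _
      rw [← smul_sub]
      gcongr
      exacts [hk _, hk _, hk _]

open HolderSp

lemma exists_superposition (h : LipC1 L φ φ') :
    ∃ N : HolderSp V → HolderSp G, ∀ u, ∀ z ∈ closedBall (0 : ℂ) 1, ev z (N u) = φ (ev z u) := by
  have hL := h.nonneg
  have : ∀ u : HolderSp V, ∃ U : HolderSp G, ∀ z ∈ closedBall (0 : ℂ) 1, ev z U = φ (ev z u) := fun u =>
    exists_ev_eq (fun z => φ (ev z u)) (fun z _ => h.norm_le _) (B := L * ‖u‖) fun z hz w hw => by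
      refine (h.norm_sub_le _ _).trans ?_
      rw [mul_assoc]
      gcongr
      exact norm_ev_sub_le u hz hw
  choose N hN using this
  exact ⟨N, hN⟩

lemma norm_superposition_sub_le (h : LipC1 L φ φ') {N : HolderSp V → HolderSp G}
    (hN : ∀ u, ∀ z ∈ closedBall (0 : ℂ) 1, ev z (N u) = φ (ev z u)) (u k : HolderSp V) :
    ‖N (u + k) - N u‖ ≤ L * (1 + ‖u‖ + ‖k‖) * ‖k‖ := by
  have hL := h.nonneg
  refine HolderSp.norm_le (by positivity) (fun z hz => ?_) fun z hz w hw => ?_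
  · rw [map_sub, hN _ z hz, hN _ z hz]
    refine (h.norm_sub_le _ _).trans ?_
    rw [← map_sub, add_sub_cancel_left]
    gcongr
    · nlinarith [norm_nonneg u, norm_nonneg k]
    · exact norm_ev_le k z
  · simp only [map_sub, hN _ z hz, hN _ w hw, map_add]
    refine (h.four_point _ _ _ _).trans ?_
    calc _ ≤ L * (‖k‖ * √‖z - w‖) + L * (‖u‖ * √‖z - w‖ + ‖k‖ * √‖z - w‖) * ‖k‖ := by
          gcongr
          exacts [norm_ev_sub_le k hz hw, norm_ev_sub_le u hz hw, norm_ev_sub_le k hz hw, norm_ev_le k w]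
      _ = _ := by ring

lemma continuous_superposition (h : LipC1 L φ φ') {N : HolderSp V → HolderSp G}
    (hN : ∀ u, ∀ z ∈ closedBall (0 : ℂ) 1, ev z (N u) = φ (ev z u)) : Continuous N := by
  refine continuous_iff_continuousAt.2 fun u => ?_
  have h2 : Tendsto (fun v : HolderSp V => L * (1 + ‖u‖ + ‖v - u‖) * ‖v - u‖) (𝓝 u) (𝓝 (L * (1 + ‖u‖ + ‖u - u‖) * ‖u - u‖)) :=
    Continuous.tendsto (by fun_prop) u
  simp only [sub_self, norm_zero, mul_zero] at h2
  refine tendsto_iff_norm_sub_tendsto_zero.2 (squeeze_zero (fun _ => norm_nonneg _) (fun v => ?_) h2)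
  simpa using h.norm_superposition_sub_le hN u (v - u)

theorem hasStrictFDerivAt_superposition (h : LipC1 L φ φ') (h' : LipC1 L φ' φ'') {N : HolderSp V → HolderSp G}
    (hN : ∀ u, ∀ z ∈ closedBall (0 : ℂ) 1, ev z (N u) = φ (ev z u)) {N' : HolderSp V → HolderSp (V →L[ℝ] G)}
    (hN' : ∀ u, ∀ z ∈ closedBall (0 : ℂ) 1, ev z (N' u) = φ' (ev z u)) (u : HolderSp V) :
    HasStrictFDerivAt N (bilin (ContinuousLinearMap.id ℝ (V →L[ℝ] G)) (N' u)) u := by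
  have hL := h.nonneg
  refine hasStrictFDerivAt_of_hasFDerivAt_of_continuousAt (f' := fun u => bilin (ContinuousLinearMap.id ℝ (V →L[ℝ] G)) (N' u))
    (Eventually.of_forall fun u => ?_) ((bilin (ContinuousLinearMap.id ℝ (V →L[ℝ] G))).continuous.comp
      (h'.continuous_superposition hN')).continuousAt
  have key : ∀ k : HolderSp V, ‖N (u + k) - N u - bilin (ContinuousLinearMap.id ℝ (V →L[ℝ] G)) (N' u) k‖ ≤
      L * (2 + ‖u‖ + ‖k‖) * ‖k‖ * ‖k‖ := fun k => by
    have e : ∀ z ∈ closedBall (0 : ℂ) 1, ev z (N (u + k) - N u - bilin (ContinuousLinearMap.id ℝ (V →L[ℝ] G)) (N' u) k) =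
        φ (ev z u + ev z k) - φ (ev z u) - φ' (ev z u) (ev z k) := fun z hz => by
      rw [map_sub, map_sub, hN _ z hz, hN _ z hz, ev_bilin _ _ _ hz, hN' _ z hz, map_add]; rfl
    refine HolderSp.norm_le (by positivity) (fun z hz => ?_) fun z hz w hw => ?_
    · rw [e z hz]
      refine (h.taylor _ _).trans ?_
      rw [pow_two, ← mul_assoc]
      gcongr
      · nlinarith [norm_nonneg u, norm_nonneg k]
      · exact norm_ev_le k z
      · exact norm_ev_le k z
    · rw [e z hz, e w hw]
      refine (h.taylor_sub h' _ _ _ _).trans ?_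
      calc _ ≤ L * ‖k‖ * (‖k‖ * √‖z - w‖) + (L * (‖k‖ * √‖z - w‖) + L * (‖u‖ * √‖z - w‖ + ‖k‖ * √‖z - w‖) * ‖k‖) * ‖k‖ := by
            gcongr
            exacts [norm_ev_le k z, norm_ev_sub_le k hz hw, norm_ev_sub_le k hz hw, norm_ev_sub_le u hz hw,
              norm_ev_sub_le k hz hw, norm_ev_le k w, norm_ev_le k w]
        _ = _ := by ring
  rw [hasFDerivAt_iff_isLittleO_nhds_zero]
  refine isLittleO_iff.2 fun c hc => ?_
  have h2 : Tendsto (fun k : HolderSp V => L * (2 + ‖u‖ + ‖k‖) * ‖k‖) (𝓝 0) (𝓝 (L * (2 + ‖u‖ + ‖(0 : HolderSp V)‖) * ‖(0 : HolderSp V)‖)) :=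
    Continuous.tendsto (by fun_prop) 0
  simp only [norm_zero, mul_zero] at h2
  filter_upwards [h2.eventually_lt_const hc] with k hk
  exact (key k).trans (by gcongr)

end LipC1

end

section

open MeasureTheory

variable {V : Type*} [NormedAddCommGroup V] [NormedSpace ℝ V]

open HolderSp

variable (V) in
/-- Pairs `(u, u')` of `1/2`-Hölder maps on the closed unit disc such that `u'` is the derivative of `u`. -/
def holderC1Submodule : Submodule ℝ (HolderSp V × HolderSp (ℂ →L[ℝ] V)) where
  carrier := {x | ∀ z ∈ closedBall (0 : ℂ) 1, HasFDerivWithinAt (fun w => ev w x.1) (ev z x.2) (closedBall (0 : ℂ) 1) z}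
  zero_mem' z hz := by
    simp only [Prod.fst_zero, Prod.snd_zero, map_zero]
    exact hasFDerivWithinAt_const _ _ _
  add_mem' {a b} ha hb z hz := by
    simp only [Prod.fst_add, Prod.snd_add, map_add]
    exact (ha z hz).add (hb z hz)
  smul_mem' c a ha z hz := by
    simp only [Prod.smul_fst, Prod.smul_snd, map_smul]
    exact (ha z hz).const_smul c

variable (V) in
/-- The Banach space of `C^{1,1/2}` maps from the closed unit disc to `V`. -/
def HolderC1 : Type _ := holderC1Submodule V

instance : NormedAddCommGroup (HolderC1 V) := inferInstanceAs (NormedAddCommGroup (holderC1Submodule V))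

instance : NormedSpace ℝ (HolderC1 V) := inferInstanceAs (NormedSpace ℝ (holderC1Submodule V))

namespace HolderC1

/-- The function underlying an element of `HolderC1 V`. -/
def fn : HolderC1 V →L[ℝ] HolderSp V :=
  (ContinuousLinearMap.fst ℝ (HolderSp V) (HolderSp (ℂ →L[ℝ] V))).comp (holderC1Submodule V).subtypeL

/-- The derivative of an element of `HolderC1 V`. -/
def dfn : HolderC1 V →L[ℝ] HolderSp (ℂ →L[ℝ] V) :=
  (ContinuousLinearMap.snd ℝ (HolderSp V) (HolderSp (ℂ →L[ℝ] V))).comp (holderC1Submodule V).subtypeL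

lemma hasFDerivWithinAt (x : HolderC1 V) {z : ℂ} (hz : z ∈ closedBall (0 : ℂ) 1) :
    HasFDerivWithinAt (fun w => ev w (fn x)) (ev z (dfn x)) (closedBall (0 : ℂ) 1) z := x.2 z hz

lemma mem_iff (x : HolderSp V × HolderSp (ℂ →L[ℝ] V)) : x ∈ holderC1Submodule V ↔ ∀ z ∈ closedBall (0 : ℂ) 1, ∀ w ∈ closedBall (0 : ℂ) 1,
    ‖ev w x.1 - ev z x.1 - ev z x.2 (w - z)‖ ≤ ‖x.2‖ * √‖w - z‖ * ‖w - z‖ := by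
  constructor
  · intro hx z hz w hw
    refine ((convex_closedBall (0 : ℂ) 1).inter (convex_closedBall z ‖w - z‖)).norm_image_sub_le_of_norm_hasFDerivWithin_le'
      (f := fun w => ev w x.1) (f' := fun z => ev z x.2)
      (fun y hy => (hx y hy.1).mono inter_subset_left) (fun y hy => ?_) ⟨hz, mem_closedBall_self (norm_nonneg _)⟩
      ⟨hw, by rw [mem_closedBall_iff_norm]⟩
    refine (norm_ev_sub_le _ hy.1 hz).trans ?_
    gcongr
    exact mem_closedBall_iff_norm.1 hy.2
  · intro hx z hz
    rw [hasFDerivWithinAt_iff_isLittleO]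
    refine isLittleO_iff.2 fun c hc => ?_
    have h2 : Tendsto (fun w : ℂ => ‖x.2‖ * √‖w - z‖) (𝓝 z) (𝓝 (‖x.2‖ * √‖z - z‖)) :=
      Continuous.tendsto (by fun_prop) z
    simp only [sub_self, norm_zero, Real.sqrt_zero, mul_zero] at h2
    filter_upwards [nhdsWithin_le_nhds (h2.eventually_lt_const hc), self_mem_nhdsWithin] with w hw hwK
    refine (hx z hz w hwK).trans ?_
    gcongr

instance [CompleteSpace V] : CompleteSpace (HolderC1 V) := by
  have : IsClosed ((holderC1Submodule V : Submodule ℝ (HolderSp V × HolderSp (ℂ →L[ℝ] V))) : Set (HolderSp V × HolderSp (ℂ →L[ℝ] V))) := by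
    have e : ((holderC1Submodule V : Submodule ℝ (HolderSp V × HolderSp (ℂ →L[ℝ] V))) : Set (HolderSp V × HolderSp (ℂ →L[ℝ] V))) =
        ⋂ z ∈ closedBall (0 : ℂ) 1, ⋂ w ∈ closedBall (0 : ℂ) 1, {x : HolderSp V × HolderSp (ℂ →L[ℝ] V) |
          ‖ev w x.1 - ev z x.1 - ev z x.2 (w - z)‖ ≤ ‖x.2‖ * √‖w - z‖ * ‖w - z‖} := by
      ext x
      simp only [mem_iInter, mem_ofPred_eq]
      exact mem_iff x
    rw [e]
    refine isClosed_biInter fun z _ => isClosed_biInter fun w _ => isClosed_le ?_ ?_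
    · fun_prop
    · fun_prop
  exact this.completeSpace_coe

lemma exists_eq {v : ℂ → V} {v' : ℂ → ℂ →L[ℝ] V} {C : ℝ} (hv : ∀ z ∈ closedBall (0 : ℂ) 1, HasFDerivAt v (v' z) z)
    (hh : ∀ z ∈ closedBall (0 : ℂ) 1, ∀ w ∈ closedBall (0 : ℂ) 1, ‖v' z - v' w‖ ≤ C * √‖z - w‖) :
    ∃ x : HolderC1 V, (∀ z ∈ closedBall (0 : ℂ) 1, ev z (fn x) = v z) ∧ ∀ z ∈ closedBall (0 : ℂ) 1, ev z (dfn x) = v' z := by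
  have h0 : (0 : ℂ) ∈ closedBall (0 : ℂ) 1 := by simp
  have hsq : ∀ z ∈ closedBall (0 : ℂ) 1, ∀ w ∈ closedBall (0 : ℂ) 1, ‖z - w‖ ≤ 2 := fun z hz w hw => by
    have := norm_sub_le z w
    linarith [mem_closedBall_zero_iff.1 hz, mem_closedBall_zero_iff.1 hw]
  have hb : ∀ z ∈ closedBall (0 : ℂ) 1, ‖v' z‖ ≤ ‖v' 0‖ + |C| * √2 := fun z hz => by
    have h1 : ‖v' z - v' 0‖ ≤ |C| * √2 := (hh z hz 0 h0).trans (by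
      gcongr
      exacts [le_abs_self C, hsq z hz 0 h0])
    linarith [norm_le_norm_add_norm_sub' (v' z) (v' 0)]
  set M := ‖v' 0‖ + |C| * √2
  have hM : 0 ≤ M := by positivity
  have hl : ∀ z ∈ closedBall (0 : ℂ) 1, ∀ w ∈ closedBall (0 : ℂ) 1, ‖v z - v w‖ ≤ M * ‖z - w‖ := fun z hz w hw =>
    (convex_closedBall (0 : ℂ) 1).norm_image_sub_le_of_norm_hasFDerivWithin_le (fun y hy => (hv y hy).hasFDerivWithinAt) hb hw hz
  obtain ⟨U', hU'⟩ := exists_ev_eq v' hb hh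
  obtain ⟨U, hU⟩ := exists_ev_eq v (A := ‖v 0‖ + M * 2) (B := M * √2) (fun z hz => by
      have := hl z hz 0 h0
      have h3 : M * ‖z - 0‖ ≤ M * 2 := by gcongr; exact hsq z hz 0 h0
      linarith [norm_le_norm_add_norm_sub' (v z) (v 0)]) (fun z hz w hw => by
      refine (hl z hz w hw).trans ?_
      rw [mul_assoc]
      gcongr
      exact le_mul_sqrt (norm_nonneg _) (hsq z hz w hw))
  refine ⟨⟨(U, U'), fun z hz => ?_⟩, hU, hU'⟩
  rw [show ev z (U, U').2 = v' z from hU' z hz]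
  exact (hv z hz).hasFDerivWithinAt.congr (fun w hw => hU w hw) (hU z hz)

end HolderC1

end

section

open MeasureTheory

variable {V W G : Type*} [NormedAddCommGroup V] [NormedSpace ℝ V] [NormedAddCommGroup W] [NormedSpace ℝ W]
  [NormedAddCommGroup G] [NormedSpace ℝ G]

open HolderSp HolderC1

lemma HolderSp.ev_add (z : ℂ) (u v : HolderSp G) : ev z (u + v) = ev z u + ev z v := ContinuousLinearMap.map_add _ _ _

lemma HolderSp.ev_sub (z : ℂ) (u v : HolderSp G) : ev z (u - v) = ev z u - ev z v := ContinuousLinearMap.map_sub _ _ _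

lemma HolderSp.exists_map (ℓ : V →L[ℝ] W) (u : HolderSp V) :
    ∃ U : HolderSp W, ∀ z ∈ closedBall (0 : ℂ) 1, ev z U = ℓ (ev z u) := ⟨HolderSp.map ℓ u, fun _ hz => ev_map ℓ u hz⟩

lemma HolderSp.exists_apply (A : HolderSp (V →L[ℝ] W)) (u : HolderSp V) :
    ∃ U : HolderSp W, ∀ z ∈ closedBall (0 : ℂ) 1, ev z U = ev z A (ev z u) := exists_bilin (ContinuousLinearMap.id ℝ _) A u

lemma HolderSp.exists_comp (A : HolderSp (W →L[ℝ] G)) (B : HolderSp (V →L[ℝ] W)) :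
    ∃ U : HolderSp (V →L[ℝ] G), ∀ z ∈ closedBall (0 : ℂ) 1, ev z U = (ev z A).comp (ev z B) :=
  exists_bilin (ContinuousLinearMap.compL ℝ V W G) A B

lemma HolderSp.exists_flip (A : HolderSp (V →L[ℝ] W →L[ℝ] G)) :
    ∃ U : HolderSp (W →L[ℝ] V →L[ℝ] G), ∀ z ∈ closedBall (0 : ℂ) 1, ev z U = (ev z A).flip :=
  exists_map (W := W →L[ℝ] V →L[ℝ] G) ((ContinuousLinearMap.flipₗᵢ ℝ V W G).toContinuousLinearEquiv.toContinuousLinearMap) A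

set_option maxHeartbeats 1000000 in
/-- The zeroth order term of the linearised Cauchy–Riemann operator after the substitution `h = re v + J im v`. -/
lemma exists_zeroth_order (J : HolderSp (V →L[ℝ] V)) (DJ : HolderSp (V →L[ℝ] V →L[ℝ] V)) (f' : HolderSp (ℂ →L[ℝ] V))
    (re im : W →L[ℝ] V) :
    ∃ C : HolderSp (W →L[ℝ] V), ∀ z ∈ closedBall (0 : ℂ) 1, ∀ w, ev z C w =
      ev z DJ (ev z f' Complex.I) (im w) - ev z J (ev z DJ (ev z f' 1) (im w))
        - ev z DJ (re w + ev z J (im w)) (ev z f' 1) := by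
  obtain ⟨fx, hfx⟩ := exists_map (ContinuousLinearMap.apply ℝ V (1 : ℂ)) f'
  obtain ⟨fy, hfy⟩ := exists_map (ContinuousLinearMap.apply ℝ V Complex.I) f'
  obtain ⟨Dx, hDx⟩ := exists_apply DJ fx
  obtain ⟨Dy, hDy⟩ := exists_apply DJ fy
  obtain ⟨DF, hDF⟩ := exists_flip DJ
  obtain ⟨E, hE⟩ := exists_apply DF fx
  obtain ⟨JD, hJD⟩ := exists_comp J Dx
  obtain ⟨EJ, hEJ⟩ := exists_comp E J
  obtain ⟨A, hA⟩ := exists_map ((ContinuousLinearMap.compL ℝ W V V).flip im) (Dy - JD - EJ)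
  obtain ⟨B, hB⟩ := exists_map ((ContinuousLinearMap.compL ℝ W V V).flip re) E
  refine ⟨A - B, fun z hz w => ?_⟩
  rw [ev_sub, hA z hz, hB z hz, ev_sub, ev_sub, hJD z hz, hEJ z hz, hE z hz, hDF z hz, hDx z hz, hDy z hz, hfx z hz, hfy z hz]
  simp only [_root_.sub_apply, ContinuousLinearMap.flip_apply, ContinuousLinearMap.compL_apply,
    ContinuousLinearMap.comp_apply, ContinuousLinearMap.apply_apply, map_add, map_sub, _root_.add_apply]
  abel

set_option maxHeartbeats 1000000 in
/-- The substitution `h = re v + J(f) im v`. -/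
lemma exists_substitution {j : V → V →L[ℝ] V} {dj : V → V →L[ℝ] V →L[ℝ] V} (hj : ∀ y, HasFDerivAt j (dj y) y)
    {J : HolderSp (V →L[ℝ] V)} {DJ : HolderSp (V →L[ℝ] V →L[ℝ] V)} {f : HolderC1 V}
    (hJf : ∀ z ∈ closedBall (0 : ℂ) 1, ev z J = j (ev z (fn f)))
    (hDJ : ∀ z ∈ closedBall (0 : ℂ) 1, ev z DJ = dj (ev z (fn f))) (re im : W →L[ℝ] V) (v : HolderC1 W) :
    ∃ h : HolderC1 V, (∀ z ∈ closedBall (0 : ℂ) 1, ev z (fn h) = re (ev z (fn v)) + ev z J (im (ev z (fn v)))) ∧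
      ∀ z ∈ closedBall (0 : ℂ) 1, ∀ x, ev z (dfn h) x = re (ev z (dfn v) x) +
        (ev z DJ (ev z (dfn f) x) (im (ev z (fn v))) + ev z J (im (ev z (dfn v) x))) := by
  obtain ⟨rv, hrv⟩ := exists_map re (fn v)
  obtain ⟨iv, hiv⟩ := exists_map im (fn v)
  obtain ⟨Jiv, hJiv⟩ := exists_apply J iv
  obtain ⟨rv', hrv'⟩ := exists_map (ContinuousLinearMap.compL ℝ ℂ W V re) (dfn v)
  obtain ⟨iv', hiv'⟩ := exists_map (ContinuousLinearMap.compL ℝ ℂ W V im) (dfn v)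
  obtain ⟨Jiv', hJiv'⟩ := exists_comp J iv'
  obtain ⟨T, hT⟩ := exists_comp DJ (dfn f)
  obtain ⟨TF, hTF⟩ := exists_flip T
  obtain ⟨S, hS⟩ := exists_apply TF iv
  have e0 : ∀ z ∈ closedBall (0 : ℂ) 1, ev z (rv + Jiv) = re (ev z (fn v)) + j (ev z (fn f)) (im (ev z (fn v))) := fun z hz => by
    rw [ev_add, hrv z hz, hJiv z hz, hiv z hz, hJf z hz]
  have e1 : ∀ z ∈ closedBall (0 : ℂ) 1, ev z (rv' + (Jiv' + S)) = re.comp (ev z (dfn v)) +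
      ((j (ev z (fn f))).comp (im.comp (ev z (dfn v))) + ((dj (ev z (fn f))).comp (ev z (dfn f))).flip (im (ev z (fn v)))) := fun z hz => by
    have a2 : ev z Jiv' = (j (ev z (fn f))).comp (im.comp (ev z (dfn v))) := by
      rw [hJiv' z hz, hiv' z hz, hJf z hz]; rfl
    have a3 : ev z S = ((dj (ev z (fn f))).comp (ev z (dfn f))).flip (im (ev z (fn v))) := by
      rw [hS z hz, hTF z hz, hT z hz, hiv z hz, hDJ z hz]
    exact (ev_add _ _ _).trans (congrArg₂ _ (hrv' z hz) ((ev_add _ _ _).trans (congrArg₂ _ a2 a3)))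
  refine ⟨⟨(rv + Jiv, rv' + (Jiv' + S)), fun z hz => ?_⟩, fun z hz => ?_, fun z hz x => ?_⟩
  · simp only
    rw [e1 z hz]
    refine HasFDerivWithinAt.congr ?_ e0 (e0 z hz)
    have hv := hasFDerivWithinAt v hz
    have hf := hasFDerivWithinAt f hz
    exact (re.hasFDerivAt.comp_hasFDerivWithinAt z hv).add
      (((hj _).comp_hasFDerivWithinAt z hf).clm_apply (im.hasFDerivAt.comp_hasFDerivWithinAt z hv))
  · rw [hJf z hz]; exact e0 z hz
  · have := congrArg (fun ℓ : ℂ →L[ℝ] V => ℓ x) (e1 z hz)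
    refine this.trans ?_
    rw [hDJ z hz, hJf z hz]
    simp only [_root_.add_apply, ContinuousLinearMap.comp_apply, ContinuousLinearMap.flip_apply]
    abel

lemma linearized_algebra {J : V →L[ℝ] V} {D : V →L[ℝ] V →L[ℝ] V} {re im : W →L[ℝ] V} {hI h1 h0 fI f1 g c : V} {v vI v1 : W}
    (sq : ∀ v, J (J v) = -v) (eI : hI = re vI + (D fI (im v) + J (im vI))) (e1 : h1 = re v1 + (D f1 (im v) + J (im v1)))
    (e0 : h0 = re v + J (im v)) (i2 : im vI = re v1) (r1 : re vI - -im v1 = g - c)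
    (hc : c = D fI (im v) - J (D f1 (im v)) - D (re v + J (im v)) f1) : hI - D h0 f1 - J h1 = g := by
  have r2 : re vI = g - c - im v1 := by rw [← r1]; abel
  rw [eI, e1, e0, r2, hc, i2]
  simp only [map_add, sq]
  abel

set_option maxHeartbeats 1000000 in
/-- The linearised Cauchy–Riemann system on the disc, with prescribed `1`-jet at the origin, is solvable. -/
theorem exists_linearized_solution [FiniteDimensional ℝ V] {J : HolderSp (V →L[ℝ] V)} {DJ : HolderSp (V →L[ℝ] V →L[ℝ] V)}
    {j : V → V →L[ℝ] V} {dj : V → V →L[ℝ] V →L[ℝ] V} (hj : ∀ y, HasFDerivAt j (dj y) y) {f : HolderC1 V}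
    (hJf : ∀ z ∈ closedBall (0 : ℂ) 1, ev z J = j (ev z (fn f)))
    (hDJ : ∀ z ∈ closedBall (0 : ℂ) 1, ev z DJ = dj (ev z (fn f)))
    (sq : ∀ z ∈ closedBall (0 : ℂ) 1, ∀ v, ev z J (ev z J v) = -v) (g : HolderSp V) (a b : V) :
    ∃ h : HolderC1 V, (∀ z ∈ closedBall (0 : ℂ) 1, ev z (dfn h) Complex.I - ev z DJ (ev z (fn h)) (ev z (dfn f) 1)
      - ev z J (ev z (dfn h) 1) = ev z g) ∧ ev 0 (fn h) = a ∧ ev 0 (dfn h) 1 = b := by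
  have h0K : (0 : ℂ) ∈ closedBall (0 : ℂ) 1 := by simp
  obtain ⟨N, ι, re, hreι, hreI⟩ := exists_complexification V
  obtain ⟨im, im_apply⟩ : ∃ im : (Fin N → ℂ) →L[ℝ] V, ∀ w, im w = -re (Complex.I • w) :=
    ⟨-(re.comp (Complex.I • ContinuousLinearMap.id ℝ (Fin N → ℂ))), fun w => rfl⟩
  have im_I : ∀ w, im (Complex.I • w) = re w := fun w => by
    rw [im_apply, smul_smul, Complex.I_mul_I, neg_one_smul, map_neg, neg_neg]
  have re_I : ∀ w, re (Complex.I • w) = - im w := fun w => by rw [im_apply, neg_neg]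
  have im_ι : ∀ v, im (ι v) = 0 := fun v => by rw [im_apply, hreI, neg_zero]
  obtain ⟨C, hC⟩ := exists_zeroth_order J DJ (dfn f) re im
  obtain ⟨s, hs⟩ : ∃ s : V →L[ℝ] (Fin N → ℂ), ∀ v, s v = ((1 / 2 : ℂ) * Complex.I) • ι v :=
    ⟨((1 / 2 : ℂ) * Complex.I) • ι, fun v => rfl⟩
  obtain ⟨A, hA⟩ := exists_map (ContinuousLinearMap.compL ℝ (Fin N → ℂ) V (Fin N → ℂ) s) C
  obtain ⟨g', hg'⟩ := exists_map s g
  obtain ⟨Ae, M₁, hA1, hA2, hA3, hA4⟩ := exists_extension A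
  obtain ⟨ge, M₂, hg1, hg2, hg3, hg4⟩ := exists_extension g'
  obtain ⟨v, v', Cv, hv, hvh, hveq, hv0, hv1⟩ := exists_dbar_solution (R := 2) (M := max M₁ M₂) (A := Ae) (G := ge)
    (fun z => (hA1 z).trans (le_max_left _ _))
    (fun z w => (hA2 z w).trans (mul_le_mul_of_nonneg_right (le_max_left _ _) (Real.sqrt_nonneg _))) hA3
    (fun z => (hg1 z).trans (le_max_right _ _))
    (fun z w => (hg2 z w).trans (mul_le_mul_of_nonneg_right (le_max_right _ _) (Real.sqrt_nonneg _))) hg3 (ι a) (ι b)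
  obtain ⟨x, hx, hx'⟩ := exists_eq (fun z _ => hv z) hvh
  obtain ⟨h, hh, hh'⟩ := exists_substitution hj hJf hDJ re im x
  refine ⟨h, fun z hz => ?_, ?_, ?_⟩
  · have e1 : v' z Complex.I - Complex.I • v' z 1 = ι (ev z g - ev z C (v z)) := by
      have e2 := hveq z
      rw [hA4 z hz, hg4 z hz, hA z hz, hg' z hz, ← eq_sub_iff_add_eq] at e2
      have e3 : dbarL (v' z) = ((1 / 2 : ℂ) * Complex.I) • ι (ev z g - ev z C (v z)) := by
        rw [e2, ContinuousLinearMap.compL_apply, ContinuousLinearMap.comp_apply, hs, hs, map_sub, smul_sub]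
      have e4 : v' z Complex.I - Complex.I • v' z 1 = ((-2 : ℂ) * Complex.I) • dbarL (v' z) := by
        rw [dbarL, smul_smul, smul_add, smul_smul,
          show (-2 : ℂ) * Complex.I * (1 / 2) * Complex.I = 1 by linear_combination (-1 : ℂ) * Complex.I_mul_I,
          show (-2 : ℂ) * Complex.I * (1 / 2) = -Complex.I by ring]
        module
      rw [e4, e3, smul_smul, show (-2 : ℂ) * Complex.I * (1 / 2 * Complex.I) = 1 by linear_combination (-1 : ℂ) * Complex.I_mul_I,
        one_smul]
    have r1 := congrArg re e1
    have i1 := congrArg im e1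
    rw [hreι, map_sub, re_I] at r1
    rw [im_ι, map_sub, im_I] at i1
    have hI := hh' z hz Complex.I
    have h1 := hh' z hz 1
    have h0 := hh z hz
    rw [hx z hz] at h0
    rw [hx z hz, hx' z hz] at hI h1
    exact linearized_algebra (sq z hz) hI h1 h0 (sub_eq_zero.1 i1) r1 (hC z hz _)
  · rw [hh 0 h0K, hx 0 h0K, hv0, im_ι, hreι, map_zero, add_zero]
  · rw [hh' 0 h0K, hx 0 h0K, hx' 0 h0K, hv0, hv1, im_ι, im_ι, hreι, map_zero, map_zero, add_zero, add_zero]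

end

section

open MeasureTheory

variable {V : Type*} [NormedAddCommGroup V] [NormedSpace ℝ V]

open HolderSp HolderC1

set_option maxHeartbeats 1000000 in
/-- Near a `J`-holomorphic map of class `C^{1,1/2}` on the closed disc there are `J`-holomorphic maps with any
nearby `1`-jet at the origin. -/
theorem eventually_exists_jHol_of_holder [FiniteDimensional ℝ V] {L : ℝ} {j : V → V →L[ℝ] V} {dj : V → V →L[ℝ] V →L[ℝ] V}
    {d2j : V → V →L[ℝ] V →L[ℝ] V →L[ℝ] V} (hj : LipC1 L j dj) (hdj : LipC1 L dj d2j) (f : HolderC1 V)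
    (heq : ∀ z ∈ closedBall (0 : ℂ) 1, ev z (dfn f) Complex.I = j (ev z (fn f)) (ev z (dfn f) 1))
    (sq : ∀ z ∈ closedBall (0 : ℂ) 1, ∀ v, j (ev z (fn f)) (j (ev z (fn f)) v) = -v) {U : Set (HolderC1 V)} (hU : U ∈ 𝓝 f) :
    ∀ᶠ p : V × V in 𝓝 (ev 0 (fn f), ev 0 (dfn f) 1), ∃ x ∈ U,
      (∀ z ∈ closedBall (0 : ℂ) 1, ev z (dfn x) Complex.I = j (ev z (fn x)) (ev z (dfn x) 1)) ∧
      ev 0 (fn x) = p.1 ∧ ev 0 (dfn x) 1 = p.2 := by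
  have : CompleteSpace V := FiniteDimensional.complete ℝ V
  obtain ⟨N, hN⟩ := hj.exists_superposition
  obtain ⟨N', hN'⟩ := hdj.exists_superposition
  have hNs := hj.hasStrictFDerivAt_superposition hdj hN hN' (fn f)
  set app := bilin (ContinuousLinearMap.id ℝ (V →L[ℝ] V)) with happ
  set dI : HolderC1 V →L[ℝ] HolderSp V := (HolderSp.map (ContinuousLinearMap.apply ℝ V Complex.I)).comp dfn with hdI
  set d1 : HolderC1 V →L[ℝ] HolderSp V := (HolderSp.map (ContinuousLinearMap.apply ℝ V (1 : ℂ))).comp dfn with hd1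
  have ev_dI : ∀ x, ∀ z ∈ closedBall (0 : ℂ) 1, ev z (dI x) = ev z (dfn x) Complex.I := fun x z hz => ev_map _ _ hz
  have ev_d1 : ∀ x, ∀ z ∈ closedBall (0 : ℂ) 1, ev z (d1 x) = ev z (dfn x) 1 := fun x z hz => ev_map _ _ hz
  set jet : HolderC1 V →L[ℝ] V × V := ((ev 0).comp fn).prod ((ContinuousLinearMap.apply ℝ V (1 : ℂ)).comp ((ev 0).comp dfn)) with hjet
  have hΦ := (dI.hasStrictFDerivAt (x := f).sub
    ((app.hasStrictFDerivAt.comp f (hNs.comp f fn.hasStrictFDerivAt)).clm_apply d1.hasStrictFDerivAt)).prodMk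
      (jet.hasStrictFDerivAt (x := f))
  have hsurj := hΦ.map_nhds_eq_of_surj (by
    rw [LinearMap.range_eq_top]
    rintro ⟨g, a, b⟩
    obtain ⟨h, hh, h0, h1⟩ := exists_linearized_solution (J := N (fn f)) (DJ := N' (fn f)) hj.hasFDerivAt (f := f)
      (fun z hz => hN _ z hz) (fun z hz => hN' _ z hz) (fun z hz v => by rw [hN _ z hz]; exact sq z hz v) g a b
    refine ⟨h, Prod.ext (ext_ev fun z hz => ?_) (Prod.ext h0 h1)⟩
    rw [← hh z hz]
    show ev z (dI h - (app (N (fn f)) (d1 h) + app (bilin (ContinuousLinearMap.id ℝ _) (N' (fn f)) (fn h)) (d1 f))) = _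
    rw [ev_sub, ev_add, ev_dI _ z hz, ev_bilin _ _ _ hz, ev_bilin _ _ _ hz, ev_bilin _ _ _ hz, ev_d1 _ z hz, ev_d1 _ z hz]
    simp only [ContinuousLinearMap.id_apply]
    abel)
  set Φ : HolderC1 V → HolderSp V × V × V := fun x => (dI x - app (N (fn x)) (d1 x), jet x) with hΦd
  have evΦ : ∀ x, ∀ z ∈ closedBall (0 : ℂ) 1, ev z (Φ x).1 = ev z (dfn x) Complex.I - j (ev z (fn x)) (ev z (dfn x) 1) :=
    fun x z hz => by
      show ev z (dI x - app (N (fn x)) (d1 x)) = _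
      rw [ev_sub, ev_dI _ z hz, ev_bilin _ _ _ hz, ev_d1 _ z hz, hN _ z hz]; rfl
  have hΦf : Φ f = (0, ev 0 (fn f), ev 0 (dfn f) 1) := by
    refine Prod.ext (ext_ev fun z hz => ?_) rfl
    rw [evΦ f z hz, heq z hz, sub_self, map_zero]
  have hopen : Φ '' U ∈ 𝓝 ((0 : HolderSp V), ev 0 (fn f), ev 0 (dfn f) 1) := by
    rw [← hΦf, ← show map Φ (𝓝 f) = 𝓝 (Φ f) from hsurj]
    exact image_mem_map hU
  have hc : Tendsto (fun p : V × V => ((0 : HolderSp V), p)) (𝓝 (ev 0 (fn f), ev 0 (dfn f) 1))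
      (𝓝 ((0 : HolderSp V), ev 0 (fn f), ev 0 (dfn f) 1)) := Continuous.tendsto (by fun_prop) _
  filter_upwards [hc hopen] with p ⟨x, hxU, hx⟩
  refine ⟨x, hxU, fun z hz => ?_, congrArg (fun q : HolderSp V × V × V => q.2.1) hx, congrArg (fun q : HolderSp V × V × V => q.2.2) hx⟩
  rw [← sub_eq_zero, ← evΦ x z hz, hx, map_zero]

/-- Openness of `1`-jets of `J`-holomorphic discs: near a disc which is `J`-holomorphic on a neighbourhood of the
closed unit disc there are discs with any nearby `1`-jet at the origin. -/
theorem JHolOn.eventually_exists_jet [FiniteDimensional ℝ V] {L R : ℝ} {j : V → V →L[ℝ] V} {dj : V → V →L[ℝ] V →L[ℝ] V}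
    {d2j : V → V →L[ℝ] V →L[ℝ] V →L[ℝ] V} (hj : LipC1 L j dj) (hdj : LipC1 L dj d2j) (hR : 1 < R) {f : ℂ → V}
    {f' : ℂ → ℂ →L[ℝ] V} (hf : JHolOn j (ball 0 R) f f') {O : Set V} (hO : IsOpen O) (hfO : ∀ z ∈ closedBall (0 : ℂ) 1, f z ∈ O) :
    ∀ᶠ p : V × V in 𝓝 (f 0, f' 0 1), ∃ (g : ℂ → V) (g' : ℂ → ℂ →L[ℝ] V), (∀ z ∈ ball (0 : ℂ) 1, HasFDerivAt g (g' z) z ∧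
      g' z Complex.I = j (g z) (g' z 1) ∧ g z ∈ O) ∧ g 0 = p.1 ∧ g' 0 1 = p.2 := by
  have h0K : (0 : ℂ) ∈ closedBall (0 : ℂ) 1 := by simp
  have hK : closedBall (0 : ℂ) 1 ⊆ ball 0 R := closedBall_subset_ball hR
  obtain ⟨C, hC⟩ := JHolOn.deriv_holder hj.hasFDerivAt hj.norm_le hj.norm_deriv_le hR hf
  obtain ⟨x, hx, hx'⟩ := HolderC1.exists_eq (fun z hz => hf.hasFDerivAt z (hK hz)) hC
  have hcf : ContinuousOn f (closedBall (0 : ℂ) 1) := fun z hz => (hf.hasFDerivAt z (hK hz)).continuousAt.continuousWithinAt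
  obtain ⟨δ, hδ, hδO⟩ := ((isCompact_closedBall (0 : ℂ) 1).image_of_continuousOn hcf).exists_thickening_subset_open hO
    (image_subset_iff.2 hfO)
  have hU : {y : HolderC1 V | ‖fn y - fn x‖ < δ} ∈ 𝓝 x := by
    refine (isOpen_lt (by fun_prop) continuous_const).mem_nhds ?_
    simpa using hδ
  have key := eventually_exists_jHol_of_holder hj hdj x (fun z hz => by rw [hx z hz, hx' z hz]; exact hf.eq z (hK hz))
    (fun z hz v => by rw [hx z hz]; exact hf.sq z (hK hz) v) hU
  rw [hx 0 h0K, hx' 0 h0K] at key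
  filter_upwards [key] with p ⟨y, hyU, hy, hp1, hp2⟩
  refine ⟨fun z => ev z (fn y), fun z => ev z (dfn y), fun z hz => ⟨?_, hy z (ball_subset_closedBall hz), hδO ?_⟩, hp1, hp2⟩
  · exact (HolderC1.hasFDerivWithinAt y (ball_subset_closedBall hz)).hasFDerivAt
      (mem_of_superset (isOpen_ball.mem_nhds hz) ball_subset_closedBall)
  · refine mem_thickening_iff.2 ⟨f z, mem_image_of_mem _ (ball_subset_closedBall hz), ?_⟩
    rw [dist_eq_norm, ← hx z (ball_subset_closedBall hz), ← ev_sub]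
    exact (HolderSp.norm_ev_le _ _).trans_lt hyU

end

section

variable {V Y : Type*} [NormedAddCommGroup V]

lemma HasCompactSupport.exists_norm_fderiv_le [NormedSpace ℝ V] [NormedAddCommGroup Y] [NormedSpace ℝ Y] {φ : V → Y}
    (hc : HasCompactSupport φ) (hφ : ContDiff ℝ (⊤ : ℕ∞) φ) : ∃ C, ∀ x, ‖fderiv ℝ φ x‖ ≤ C :=
  (hc.fderiv (𝕜 := ℝ)).exists_bound_of_continuous (contDiff_infty_iff_fderiv.1 hφ).2.continuous

lemma HasCompactSupport.exists_lipC1 [NormedSpace ℝ V] [NormedAddCommGroup Y] [NormedSpace ℝ Y] {φ : V → Y}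
    (hc : HasCompactSupport φ) (hφ : ContDiff ℝ (⊤ : ℕ∞) φ) :
    ∃ L, ∀ L' ≥ L, LipC1 L' φ (fderiv ℝ φ) := by
  have h1 : ContDiff ℝ (⊤ : ℕ∞) (fderiv ℝ φ) := (contDiff_infty_iff_fderiv.1 hφ).2
  have hd : Differentiable ℝ φ := (contDiff_infty_iff_fderiv.1 hφ).1
  obtain ⟨A, hA⟩ := hc.exists_bound_of_continuous hφ.continuous
  obtain ⟨B, hB⟩ := hc.exists_norm_fderiv_le hφ
  have hc1 : HasCompactSupport (fderiv ℝ φ) := hc.fderiv (𝕜 := ℝ)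
  generalize hψ : fderiv ℝ φ = ψ at *
  have hd1 : Differentiable ℝ ψ := (contDiff_infty_iff_fderiv.1 h1).1
  obtain ⟨C, hC⟩ := hc1.exists_norm_fderiv_le h1
  refine ⟨max A (max B C), fun L' hL => ?_⟩
  obtain ⟨hLA, hLB, hLC⟩ : A ≤ L' ∧ B ≤ L' ∧ C ≤ L' := by simpa using hL
  refine ⟨fun x => (hA x).trans hLA, fun x => hψ ▸ (hd x).hasFDerivAt, fun x => (hB x).trans hLB, fun x y => ?_⟩
  exact convex_univ.norm_image_sub_le_of_norm_hasFDerivWithin_le (f' := fderiv ℝ ψ)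
    (fun z _ => (hd1 z).hasFDerivAt.hasFDerivWithinAt) (fun z _ => (hC z).trans hLC) (mem_univ y) (mem_univ x)

lemma exists_global_extension [NormedSpace ℝ V] [FiniteDimensional ℝ V] [NormedAddCommGroup Y] [NormedSpace ℝ Y] {J : V → Y} {D K : Set V}
    (hD : IsOpen D) (hJ : ContDiffOn ℝ (⊤ : ℕ∞) J D) (hK : IsCompact K) (hKD : K ⊆ D) :
    ∃ (L : ℝ) (j : V → Y) (dj : V → V →L[ℝ] Y) (d2j : V → V →L[ℝ] V →L[ℝ] Y) (O : Set V), LipC1 L j dj ∧ LipC1 L dj d2j ∧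
      IsOpen O ∧ K ⊆ O ∧ O ⊆ D ∧ ∀ x ∈ O, j x = J x := by
  have : ProperSpace V := FiniteDimensional.proper ℝ V
  obtain ⟨t, ht, hKt, htD⟩ := exists_compact_between hK hD hKD
  obtain ⟨χ, hχ1, hχ0, -⟩ := exists_contMDiffMap_one_nhds_of_subset_interior (n := (⊤ : ℕ∞)) (modelWithCornersSelf ℝ V) hK.isClosed hKt
  have hχ : ContDiff ℝ (⊤ : ℕ∞) χ := χ.contMDiff.contDiff
  have hz : ∀ x ∉ t, χ x • J x = 0 := fun x hx => by rw [hχ0 x hx, zero_smul]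
  have hs : ContDiff ℝ (⊤ : ℕ∞) fun x => χ x • J x := contDiff_iff_contDiffAt.2 fun x => by
    by_cases hx : x ∈ D
    · exact hχ.contDiffAt.smul (hJ.contDiffAt (hD.mem_nhds hx))
    · refine (contDiffAt_const (c := (0 : Y))).congr_of_eventuallyEq ?_
      filter_upwards [ht.isClosed.isOpen_compl.mem_nhds fun h => hx (htD h)] with y hy using hz y hy
  have hc : HasCompactSupport fun x => χ x • J x := HasCompactSupport.intro ht hz
  obtain ⟨L₁, h1⟩ := hc.exists_lipC1 hs
  obtain ⟨L₂, h2⟩ := (hc.fderiv (𝕜 := ℝ)).exists_lipC1 (contDiff_infty_iff_fderiv.1 hs).2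
  obtain ⟨O, hO, hKO, hO1⟩ := mem_nhdsSet_iff_exists.1 hχ1
  exact ⟨max L₁ L₂, _, _, _, O ∩ D, h1 _ (le_max_left _ _), h2 _ (le_max_right _ _), hO.inter hD, subset_inter hKO hKD,
    inter_subset_right, fun x hx => by rw [show χ x = 1 from hO1 hx.1, one_smul]⟩

variable [NormedSpace ℂ V] {J : V → V →L[ℝ] V} {D : Set V}

lemma IsJDisc.jHolOn (hsq : ∀ x ∈ D, ∀ v, J x (J x v) = -v) {f : ℂ → V} (hf : IsJDisc J D f) :
    JHolOn J (ball 0 1) f (fderiv ℝ f) where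
  hasFDerivAt z hz := (hf.2 z hz).1.hasFDerivAt
  eq z hz := by
    have := congrArg (fun ℓ : ℂ →L[ℝ] V => ℓ 1) (hf.2 z hz).2
    simpa [Jst] using this
  sq z hz v := hsq _ (hf.1 hz) v

lemma isJDisc_of_hasFDerivAt (hsq : ∀ x ∈ D, ∀ v, J x (J x v) = -v) {g : ℂ → V} {g' : ℂ → ℂ →L[ℝ] V}
    (hg : ∀ z ∈ ball (0 : ℂ) 1, HasFDerivAt g (g' z) z ∧ g' z Complex.I = J (g z) (g' z 1) ∧ g z ∈ D) : IsJDisc J D g := by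
  refine ⟨fun z hz => (hg z hz).2.2, fun z hz => ⟨(hg z hz).1.differentiableAt, ?_⟩⟩
  obtain ⟨h1, h2, h3⟩ := hg z hz
  rw [h1.fderiv]
  ext x
  show g' z (Complex.I • x) = J (g z) (g' z x)
  rw [apply_eq_re_im (g' z) x, apply_eq_re_im (g' z) (Complex.I • x), map_add, map_smul, map_smul, h2, hsq _ h3]
  simp only [smul_eq_mul, Complex.mul_re, Complex.mul_im, Complex.I_re, Complex.I_im]
  module

/-- Shrinking a `J`-holomorphic disc slightly, its `1`-jet at the origin becomes an interior point of the set of jets. -/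
theorem IsJDisc.eventually_exists_jet [FiniteDimensional ℂ V] (hD : IsOpen D) (hJ : ContDiffOn ℝ (⊤ : ℕ∞) J D)
    (hsq : ∀ x ∈ D, ∀ v, J x (J x v) = -v) {f : ℂ → V} (hf : IsJDisc J D f) {r : ℝ} (hr0 : 0 < r) (hr1 : r < 1) :
    ∀ᶠ p : V × V in 𝓝 (f 0, r • fderiv ℝ f 0 1), ∃ g, IsJDisc J D g ∧ g 0 = p.1 ∧ fderiv ℝ g 0 1 = p.2 := by
  have hfJ := hf.jHolOn hsq
  set ρ := (1 + r) / 2 with hρ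
  have hρ1 : closedBall (0 : ℂ) ρ ⊆ ball 0 1 := closedBall_subset_ball (by linarith)
  have hR : 1 < ρ / r := (one_lt_div hr0).2 (by linarith)
  have hmem : ∀ z ∈ ball (0 : ℂ) (ρ / r), (0 : ℂ) + r * z ∈ closedBall (0 : ℂ) ρ := fun z hz => by
    rw [mem_ball_zero_iff, lt_div_iff₀ hr0] at hz
    rw [mem_closedBall_zero_iff, zero_add, norm_mul, Complex.norm_real, Real.norm_of_nonneg hr0.le]
    linarith
  have hcf : ContinuousOn f (closedBall (0 : ℂ) ρ) := fun z hz => (hfJ.hasFDerivAt z (hρ1 hz)).continuousAt.continuousWithinAt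
  obtain ⟨L, j, dj, d2j, O, hj, hdj, hO, hKO, hOD, hjO⟩ := exists_global_extension hD hJ
    ((isCompact_closedBall (0 : ℂ) ρ).image_of_continuousOn hcf) (image_subset_iff.2 fun z hz => hf.1 (hρ1 hz))
  have hfj := hfJ.comp_affine 0 r (t := ball 0 (ρ / r)) fun z hz => hρ1 (hmem z hz)
  have hin : ∀ z ∈ ball (0 : ℂ) (ρ / r), f (0 + r * z) ∈ O := fun z hz => hKO (mem_image_of_mem f (hmem z hz))
  have hfj' : JHolOn j (ball 0 (ρ / r)) (fun z => f (0 + r * z)) fun z => r • fderiv ℝ f (0 + r * z) :=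
    ⟨hfj.hasFDerivAt, fun z hz => by rw [hjO _ (hin z hz)]; exact hfj.eq z hz,
      fun z hz v => by rw [hjO _ (hin z hz)]; exact hfj.sq z hz v⟩
  have key := hfj'.eventually_exists_jet hj hdj hR hO fun z hz => hin z (closedBall_subset_ball hR hz)
  simp only [mul_zero, add_zero] at key
  filter_upwards [key] with p ⟨g, g', hg, h0, h1⟩
  refine ⟨g, isJDisc_of_hasFDerivAt (g' := g') hsq fun z hz => ?_, h0, ?_⟩
  · obtain ⟨a, b, c⟩ := hg z hz
    exact ⟨a, by rw [b, hjO _ c], hOD c⟩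
  · rw [(hg 0 (mem_ball_self one_pos)).1.fderiv, h1]

lemma exists_isJDisc [FiniteDimensional ℂ V] (hD : IsOpen D) (hJ : ContDiffOn ℝ (⊤ : ℕ∞) J D)
    (hsq : ∀ x ∈ D, ∀ v, J x (J x v) = -v) {p : V} (hp : p ∈ D) (v : V) :
    {α : ℝ | 0 < α ∧ ∃ f : ℂ → V, IsJDisc J D f ∧ f 0 = p ∧ fderiv ℝ f 0 1 = α⁻¹ • v}.Nonempty := by
  have hf : IsJDisc J D fun _ : ℂ => p := ⟨fun _ _ => hp, fun ζ _ => ⟨differentiableAt_const p, by ext; simp⟩⟩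
  have key := hf.eventually_exists_jet hD hJ hsq one_half_pos one_half_lt_one
  have hc : Tendsto (fun t : ℝ => (p, t • v)) (𝓝[>] 0) (𝓝 (p, (1 / 2 : ℝ) • fderiv ℝ (fun _ : ℂ => p) 0 1)) := by
    refine Tendsto.mono_left ?_ nhdsWithin_le_nhds
    have : Continuous fun t : ℝ => (p, t • v) := by fun_prop
    simpa using this.tendsto 0
  obtain ⟨t, ⟨g, hg, h0, h1⟩, ht⟩ := ((hc.eventually key).and self_mem_nhdsWithin).exists
  exact ⟨t⁻¹, inv_pos.2 ht, g, hg, h0, by rw [h1, inv_inv]⟩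

theorem upperSemicontinuousOn_kobayashiMetric [FiniteDimensional ℂ V] (hD : IsOpen D) (hJ : ContDiffOn ℝ (⊤ : ℕ∞) J D)
    (hsq : ∀ x ∈ D, ∀ v, J x (J x v) = -v) :
    UpperSemicontinuousOn (fun pv : V × V => kobayashiMetric J D pv.1 pv.2) (D ×ˢ univ) := by
  rintro ⟨p, v⟩ ⟨hp, -⟩ y hy
  refine nhdsWithin_le_nhds ?_
  obtain ⟨α, ⟨hα, f, hf, hf0, hf1⟩, hαy⟩ := exists_lt_of_csInf_lt (exists_isJDisc hD hJ hsq hp v) hy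
  have hy0 : 0 < y := hα.trans hαy
  obtain ⟨r, hr, hr1⟩ := exists_between ((div_lt_one hy0).2 hαy)
  have hr0 : 0 < r := (div_pos hα hy0).trans hr
  have key := hf.eventually_exists_jet hD hJ hsq hr0 hr1
  rw [hf0, hf1] at key
  have hc : Tendsto (fun q : V × V => (q.1, r • α⁻¹ • q.2)) (𝓝 (p, v)) (𝓝 (p, r • α⁻¹ • v)) :=
    Continuous.tendsto (by fun_prop) (p, v)
  filter_upwards [hc.eventually key] with q ⟨g, hg, h0, h1⟩
  have hmem : α / r ∈ {α : ℝ | 0 < α ∧ ∃ f : ℂ → V, IsJDisc J D f ∧ f 0 = q.1 ∧ fderiv ℝ f 0 1 = α⁻¹ • q.2} :=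
    ⟨div_pos hα hr0, g, hg, h0, by rw [h1, smul_smul, inv_div, div_eq_mul_inv]⟩
  refine (csInf_le ⟨0, fun _ h => h.1.le⟩ hmem).trans_lt ?_
  rw [div_lt_iff₀ hr0, mul_comm]
  exact (div_lt_iff₀ hy0).1 hr

end

/-- **Upper semicontinuity of the Kobayashi–Royden infinitesimal pseudometric**
on `D × ℝ^{2n}`. -/
theorem statement18 {n : ℕ}
    (Ω : Set (EuclideanSpace ℂ (Fin n))) (hΩ : IsOpen Ω)
    (J : EuclideanSpace ℂ (Fin n) →
      EuclideanSpace ℂ (Fin n) →L[ℝ] EuclideanSpace ℂ (Fin n))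
    (hJ : IsACS Ω J)
    (D : Set (EuclideanSpace ℂ (Fin n))) (hDopen : IsOpen D)
    (hDconn : IsConnected D) (hDΩ : D ⊆ Ω) :
    UpperSemicontinuousOn
      (fun pv : EuclideanSpace ℂ (Fin n) × EuclideanSpace ℂ (Fin n) =>
        kobayashiMetric J D pv.1 pv.2)
      (D ×ˢ (univ : Set (EuclideanSpace ℂ (Fin n)))) := 
  upperSemicontinuousOn_kobayashiMetric hDopen (hJ.smooth.mono hDΩ) fun x hx v => by
    have := congrArg (fun ℓ : EuclideanSpace ℂ (Fin n) →L[ℝ] EuclideanSpace ℂ (Fin n) => ℓ v) (hJ.sq x (hDΩ hx))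
    simpa using this

end
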